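/- Let a ∈ (0,1), let t* < ∞, and let (f,p) be a solution of problem (P) on (0,t*) with initial datum f_I satisfying conditions (i)–(iii) and with λ ∈ L¹(0,t*). Suppose L := liminf_{t→t*} p(t) < R := limsup_{t→t*} p(t). Then for every integer m ≥ 0 there exists a constant C(m) such that, whenever β > 0 is sufficiently small, the following holds: for every sequence t_n → t* with p(t_n) → R, one has limsup_{n→∞} |∂_x^m f(x, t_n)| ≤ C(m) for every x ∈ [R − β, R + β]. The parallel statement holds at L along sequences with p(t_n) → L. -/

import Mathlib

open MeasureTheory

/-- The 1D heat kernel `K(x,t) = (4πt)^{-1/2} exp(-x²/(4t))`. -/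
noncomputable def heatK (x t : ℝ) : ℝ :=
  (Real.sqrt (4 * Real.pi * t))⁻¹ * Real.exp (-(x ^ 2) / (4 * t))

/-- The Neumann heat kernel on `[-1,1]`:
`Γ(x,x';t) = Σ_{k∈ℤ} K(x − (2k + (−1)^{|k|} x'), t)`. -/
noncomputable def heatGamma (x x' t : ℝ) : ℝ :=
  ∑' k : ℤ, heatK (x - (2 * (k : ℝ) + (-1 : ℝ) ^ k.natAbs * x')) t

/-- The flux `λ(s) = −∂ₓ f(p(s), s)` at the free boundary. -/
noncomputable def flux (f : ℝ → ℝ → ℝ) (p : ℝ → ℝ) (s : ℝ) : ℝ :=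
  -deriv (fun x => f x s) (p s)

/-- `ā(s) = min {a, 1 − p(s), 1 + p(s)}`. -/
noncomputable def abar (a : ℝ) (p : ℝ → ℝ) (s : ℝ) : ℝ :=
  min a (min (1 - p s) (1 + p s))

/-- The sup norm `‖h‖_{L^∞(−1,1)}` (for continuous `h`). -/
noncomputable def supNorm (h : ℝ → ℝ) : ℝ := ⨆ x : Set.Icc (-1:ℝ) 1, |h x.1|

/-- Conditions (i)–(iii) on the initial datum `f_I ∈ C²([−1,1])`:
(i) unique zero `p_I ∈ (−1,1)`, positive to the left, negative to the right;
(ii) Neumann conditions `∂ₓf_I(±1) = 0`;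
(iii) `λ_I = −∂ₓ f_I(p_I) > 0` and `−∂ₓ f_I > λ_I/2` on `(p_I − a₀, p_I + a₀)`. -/
structure IsInitialDatum (fI : ℝ → ℝ) (pI a₀ lamI : ℝ) : Prop where
  smooth : ContDiffOn ℝ 2 fI (Set.Icc (-1) 1)
  pI_mem : pI ∈ Set.Ioo (-1 : ℝ) 1
  zero_at : fI pI = 0
  pos_left : ∀ x ∈ Set.Ico (-1 : ℝ) pI, 0 < fI x
  neg_right : ∀ x ∈ Set.Ioc pI 1, fI x < 0
  neumann_left : derivWithin fI (Set.Icc (-1) 1) (-1) = 0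
  neumann_right : derivWithin fI (Set.Icc (-1) 1) 1 = 0
  lamI_eq : lamI = -deriv fI pI
  lamI_pos : 0 < lamI
  slope : ∀ x ∈ Set.Ioo (pI - a₀) (pI + a₀), lamI / 2 < -deriv fI x

/-- A solution `(f, p)` of problem (P) on the time set `J` with parameter `a` and
initial datum `f_I`: `p` is a continuous curve in `(−1,1)`, `p(t)` is the unique zero
of `f(·,t)` (positive to the left, negative to the right), `f(·,t)` is differentiable
at `p(t)`, the flux is locally integrable on `J`, and the Duhamel identity holds. -/
structure IsSolutionP (a : ℝ) (fI : ℝ → ℝ) (J : Set ℝ) (f : ℝ → ℝ → ℝ) (p : ℝ → ℝ) : Prop where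
  p_cont : ContinuousOn p J
  p_mem : ∀ t ∈ J, p t ∈ Set.Ioo (-1 : ℝ) 1
  zero_at : ∀ t ∈ J, f (p t) t = 0
  pos_left : ∀ t ∈ J, ∀ x ∈ Set.Ico (-1 : ℝ) (p t), 0 < f x t
  neg_right : ∀ t ∈ J, ∀ x ∈ Set.Ioc (p t) 1, f x t < 0
  diff_at : ∀ t ∈ J, DifferentiableAt ℝ (fun x => f x t) (p t)
  flux_loc_int : LocallyIntegrableOn (flux f p) J
  duhamel : ∀ t ∈ J, ∀ x ∈ Set.Icc (-1 : ℝ) 1,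
      f x t = (∫ x' in (-1 : ℝ)..1, heatGamma x x' t * fI x')
        + ∫ s in (0 : ℝ)..t,
            (heatGamma x (p s - abar a p s) (t - s)
              - heatGamma x (p s + abar a p s) (t - s)) * flux f p s

/-- The Duhamel iterate with data `(p_n, λ_n)` and initial datum `f_I`. -/
noncomputable def duhamelIterate (a : ℝ) (fI pn lamn : ℝ → ℝ) (x t : ℝ) : ℝ :=
  (∫ x' in (-1 : ℝ)..1, heatGamma x x' t * fI x')
    + ∫ s in (0 : ℝ)..t,
        (heatGamma x (pn s - a) (t - s) - heatGamma x (pn s + a) (t - s)) * lamn s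

/-! Away from the places where heat is released or absorbed, the solution extends holomorphically in
`x`, so a bound on a complex disc around `R` gives bounds on all derivatives by Cauchy's estimate.
To get such a bound at a time `t` at which `p t` is close to `R`, look back to the last time `s` at
which `p s = R - d`.  Both the emission point `p - ā` and the absorption point `p + ā` have stayed
away from `R` since `s`, so what they contribute near `R` is bounded, and so is the contribution of
the part of the profile `f(·, s)` lying far from `R`.  The part close to `R` has a fixed sign.  At
the real point `p t`, its contribution cancels the others because `f(p t, t) = 0`.  On a small disc
the modulus of the complex kernel exceeds its value at `p t` at most by a factor
`exp (d² / (16 (t - s)))`.  The far contributions at `p t` decay fast enough to absorb this factor,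
so the part close to `R` is bounded on the whole disc.

That `R < 1` comes from mass conservation: the cold mass to the right of `p` stays bounded away
from zero, and it cannot concentrate at the wall.

The statement at `L` is the one at `R` for the reflected solution `-f(-x, t)`.
-/

section

open Set Filter Topology
open scoped ENNReal

/-! ### Parametric integrals of holomorphic functions -/

lemma aestronglyMeasurable_of_hasDerivAt {α 𝕜 E : Type*} [MeasurableSpace α] {μ : Measure α}
    [NontriviallyNormedField 𝕜] [NormedAddCommGroup E] [NormedSpace 𝕜 E] {k : 𝕜 → α → E}
    {k' : α → E} {z₀ : 𝕜} (hk : ∀ᶠ z in 𝓝 z₀, AEStronglyMeasurable (k z) μ)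
    (hk' : ∀ᵐ a ∂μ, HasDerivAt (fun z => k z a) (k' a) z₀) : AEStronglyMeasurable k' μ := by
  classical
  let quotient : 𝕜 → α → E := fun z a =>
    if AEStronglyMeasurable (k z) μ then slope (fun z => k z a) z₀ z else 0
  refine aestronglyMeasurable_of_tendsto_ae (𝓝[≠] z₀) (f := quotient) (fun z => ?_) ?_
  · by_cases hz : AEStronglyMeasurable (k z) μ
    · simp only [quotient, if_pos hz]
      exact (hz.sub hk.self_of_nhds).const_smul (z - z₀)⁻¹
    · simp only [quotient, if_neg hz]
      exact aestronglyMeasurable_const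
  · filter_upwards [hk'] with a ha
    refine (hasDerivAt_iff_tendsto_slope.1 ha).congr' ?_
    filter_upwards [nhdsWithin_le_nhds hk] with z hz
    exact (if_pos hz).symm

lemma differentiableOn_integral_of_norm_le {α E : Type*} [MeasurableSpace α] {μ : Measure α}
    [NormedAddCommGroup E] [NormedSpace ℂ E] [CompleteSpace E] {k : ℂ → α → E} {U : Set ℂ}
    (hU : IsOpen U) {b : α → ℝ} (hb : Integrable b μ)
    (hmeas : ∀ z ∈ U, AEStronglyMeasurable (k z) μ)
    (hdiff : ∀ᵐ a ∂μ, DifferentiableOn ℂ (fun z => k z a) U)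
    (hle : ∀ᵐ a ∂μ, ∀ z ∈ U, ‖k z a‖ ≤ b a) :
    DifferentiableOn ℂ (fun z => ∫ a, k z a ∂μ) U := by
  intro z₀ hz₀
  obtain ⟨r, hr, hball⟩ := Metric.isOpen_iff.1 hU z₀ hz₀
  have hmeas_near : ∀ᶠ z in 𝓝 z₀, AEStronglyMeasurable (k z) μ := by
    filter_upwards [hU.mem_nhds hz₀] with z hz using hmeas z hz
  have hderiv : ∀ᵐ a ∂μ, ∀ z ∈ Metric.ball z₀ (r / 2),
      HasDerivAt (fun z => k z a) (deriv (fun z => k z a) z) z := by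
    filter_upwards [hdiff] with a ha z hz
    have hzU : U ∈ 𝓝 z := hU.mem_nhds (hball (Metric.ball_subset_ball (by linarith) hz))
    exact (ha.differentiableAt hzU).hasDerivAt
  have hcauchy : ∀ᵐ a ∂μ, ∀ z ∈ Metric.ball z₀ (r / 2),
      ‖deriv (fun z => k z a) z‖ ≤ b a / (r / 4) := by
    filter_upwards [hdiff, hle] with a ha hle z hz
    have hsub : Metric.closedBall z (r / 4) ⊆ U := fun w hw => hball <| by
      rw [Metric.mem_closedBall] at hw
      rw [Metric.mem_ball] at hz ⊢
      linarith [dist_triangle w z z₀]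
    exact Complex.norm_deriv_le_of_forall_mem_sphere_norm_le (by positivity)
      (DifferentiableOn.diffContOnCl_ball ha hsub)
      fun w hw => hle w (hsub (Metric.sphere_subset_closedBall hw))
  have hcenter : z₀ ∈ Metric.ball z₀ (r / 2) := Metric.mem_ball_self (by positivity)
  exact (hasDerivAt_integral_of_dominated_loc_of_deriv_le
    (Metric.ball_mem_nhds z₀ (by positivity)) hmeas_near
    (hb.mono' (hmeas z₀ hz₀) (hle.mono fun a ha => ha z₀ hz₀))
    (aestronglyMeasurable_of_hasDerivAt hmeas_near (hderiv.mono fun a ha => ha z₀ hcenter))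
    hcauchy (hb.div_const _) hderiv).2.differentiableAt.differentiableWithinAt

lemma hasDerivAt_iteratedDeriv {F : ℂ → ℂ} {U : Set ℂ} (hU : IsOpen U)
    (hF : DifferentiableOn ℂ F U) (m : ℕ) {z : ℂ} (hz : z ∈ U) :
    HasDerivAt (iteratedDeriv m F) (iteratedDeriv (m + 1) F z) z := by
  have hanalytic := (hF.analyticOnNhd hU z hz).iterated_deriv m
  rw [← iteratedDeriv_eq_iterate] at hanalytic
  rw [iteratedDeriv_succ]
  exact hanalytic.differentiableAt.hasDerivAt

lemma hasDerivAt_re_iteratedDeriv {F : ℂ → ℂ} {U : Set ℂ} (hU : IsOpen U)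
    (hF : DifferentiableOn ℂ F U) {f : ℝ → ℝ} {m : ℕ}
    (hf : ∀ x : ℝ, (x : ℂ) ∈ U → f x = (iteratedDeriv m F x).re) {x : ℝ} (hx : (x : ℂ) ∈ U) :
    HasDerivAt f (iteratedDeriv (m + 1) F x).re x := by
  refine (hasDerivAt_iteratedDeriv hU hF m hx).real_of_complex.congr_of_eventuallyEq ?_
  filter_upwards [(hU.preimage Complex.continuous_ofReal).mem_nhds hx] with y hy using hf y hy

lemma iteratedDeriv_eq_re_iteratedDeriv {F : ℂ → ℂ} {f : ℝ → ℝ} {U : Set ℂ} (hU : IsOpen U)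
    (hF : DifferentiableOn ℂ F U) (hf : ∀ x : ℝ, (x : ℂ) ∈ U → f x = (F x).re) (m : ℕ) :
    ∀ x : ℝ, (x : ℂ) ∈ U → iteratedDeriv m f x = (iteratedDeriv m F x).re := by
  induction m with
  | zero => simpa only [iteratedDeriv_zero] using hf
  | succ m ih =>
    intro x hx
    rw [iteratedDeriv_succ]
    exact (hasDerivAt_re_iteratedDeriv hU hF ih hx).deriv

lemma hasDerivAt_iteratedDeriv_of_eq_re {F : ℂ → ℂ} {f : ℝ → ℝ} {U : Set ℂ} (hU : IsOpen U)
    (hF : DifferentiableOn ℂ F U) (hf : ∀ x : ℝ, (x : ℂ) ∈ U → f x = (F x).re) (m : ℕ) {x : ℝ}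
    (hx : (x : ℂ) ∈ U) : HasDerivAt (iteratedDeriv m f) (iteratedDeriv (m + 1) f x) x := by
  rw [iteratedDeriv_eq_re_iteratedDeriv hU hF hf (m + 1) x hx]
  exact hasDerivAt_re_iteratedDeriv hU hF (iteratedDeriv_eq_re_iteratedDeriv hU hF hf m) hx

lemma abs_iteratedDeriv_le_of_eq_re {F : ℂ → ℂ} {f : ℝ → ℝ} {U : Set ℂ} (hU : IsOpen U)
    (hF : DifferentiableOn ℂ F U) (hf : ∀ x : ℝ, (x : ℂ) ∈ U → f x = (F x).re) {x r B : ℝ}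
    (hr : 0 < r) (hx : Metric.closedBall (x : ℂ) r ⊆ U) (hB : ∀ z ∈ U, ‖F z‖ ≤ B) (m : ℕ) :
    |iteratedDeriv m f x| ≤ m.factorial * B / r ^ m := by
  rw [iteratedDeriv_eq_re_iteratedDeriv hU hF hf m x (hx (Metric.mem_closedBall_self hr.le))]
  exact (Complex.abs_re_le_norm _).trans <|
    Complex.norm_iteratedDeriv_le_of_forall_mem_sphere_norm_le m hr
      (DifferentiableOn.diffContOnCl_ball hF hx)
      fun z hz => hB z (hx (Metric.sphere_subset_closedBall hz))

/-! ### Image points and the heat kernel -/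

/-- The `k`-th image `2k + (-1)^|k| y` of `y` under the reflections in the endpoints of `[-1, 1]`,
over which the Neumann kernel sums the heat kernel. -/
noncomputable def neumannImage (k : ℤ) (y : ℝ) : ℝ := 2 * (k : ℝ) + (-1 : ℝ) ^ k.natAbs * y

lemma neumannImage_of_even {k : ℤ} (hk : Even k) (y : ℝ) : neumannImage k y = 2 * (k : ℝ) + y := by
  rw [neumannImage, (Int.natAbs_even.2 hk).neg_one_pow, one_mul]

lemma neumannImage_of_odd {k : ℤ} (hk : Odd k) (y : ℝ) : neumannImage k y = 2 * (k : ℝ) - y := by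
  rw [neumannImage, (Int.natAbs_odd.2 hk).neg_one_pow]
  ring

lemma neumannImage_zero (y : ℝ) : neumannImage 0 y = y := by simp [neumannImage]

lemma measurable_neumannImage (k : ℤ) : Measurable (neumannImage k) := by
  unfold neumannImage
  fun_prop

lemma neumannImage_neg (k : ℤ) (y : ℝ) : neumannImage (-k) (-y) = -neumannImage k y := by
  simp only [neumannImage, Int.natAbs_neg, Int.cast_neg]
  ring

lemma neumannImage_one_sub (k : ℤ) (y : ℝ) : neumannImage (1 - k) y = 2 - neumannImage k y := by
  rcases Int.even_or_odd k with hk | hk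
  · rw [neumannImage_of_even hk, neumannImage_of_odd (odd_one.sub_even hk)]
    push_cast
    ring
  · rw [neumannImage_of_odd hk, neumannImage_of_even (odd_one.sub_odd hk)]
    push_cast
    ring

lemma neumannImage_sub_of_even {k : ℤ} (hk : Even k) (j : ℤ) (y w : ℝ) :
    neumannImage k y - neumannImage j w = y - neumannImage (j - k) w := by
  rcases Int.even_or_odd j with hj | hj
  · rw [neumannImage_of_even hk, neumannImage_of_even hj, neumannImage_of_even (hj.sub hk)]
    push_cast
    ring
  · rw [neumannImage_of_even hk, neumannImage_of_odd hj, neumannImage_of_odd (hj.sub_even hk)]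
    push_cast
    ring

lemma neumannImage_sub_of_odd {k : ℤ} (hk : Odd k) (j : ℤ) (y w : ℝ) :
    neumannImage k y - neumannImage j w = -(y - neumannImage (k - j) w) := by
  rcases Int.even_or_odd j with hj | hj
  · rw [neumannImage_of_odd hk, neumannImage_of_even hj, neumannImage_of_odd (hk.sub_even hj)]
    push_cast
    ring
  · rw [neumannImage_of_odd hk, neumannImage_of_odd hj, neumannImage_of_even (hk.sub_odd hj)]
    push_cast
    ring

/-- The permutation of `ℤ` negating the even integers: it matches the images of `x` seen from `y`
with the images of `y` seen from `x`. -/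
def negEvenPerm : Equiv.Perm ℤ :=
  Function.Involutive.toPerm (fun k : ℤ => if Even k then -k else k) fun k => by
    by_cases h : Even k <;> simp [h]

lemma abs_sub_neumannImage_negEvenPerm (k : ℤ) (x y : ℝ) :
    |x - neumannImage (negEvenPerm k) y| = |y - neumannImage k x| := by
  have hperm : negEvenPerm k = if Even k then -k else k := rfl
  rcases Int.even_or_odd k with hk | hk
  · rw [hperm, if_pos hk, neumannImage_of_even hk, neumannImage_of_even hk.neg, ← abs_neg]
    push_cast
    ring_nf
  · rw [hperm, if_neg (Int.not_even_iff_odd.2 hk), neumannImage_of_odd hk, neumannImage_of_odd hk]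
    ring_nf

lemma two_mul_abs_sub_le_abs_sub_neumannImage (k : ℤ) (x y : ℝ) :
    2 * |(k : ℝ)| - (|x| + |y|) ≤ |x - neumannImage k y| := by
  have habs : |x - (-1 : ℝ) ^ k.natAbs * y| ≤ |x| + |y| := by
    refine (abs_sub _ _).trans_eq ?_
    simp [abs_mul]
  have hsplit : 2 * (k : ℝ) = (x - (-1 : ℝ) ^ k.natAbs * y) - (x - neumannImage k y) := by
    rw [neumannImage]
    ring
  have htriangle := abs_sub (x - (-1 : ℝ) ^ k.natAbs * y) (x - neumannImage k y)
  rw [← hsplit, abs_mul, abs_two] at htriangle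
  linarith

lemma sq_sub_add_le_sq_sub_neumannImage_of_even {k : ℤ} (hk : Even k) {x y : ℝ}
    (hx : x ∈ Icc (-1 : ℝ) 1) (hy : y ∈ Icc (-1 : ℝ) 1) :
    (x - y) ^ 2 + ((k.natAbs - 2 : ℕ) : ℝ) ≤ (x - neumannImage k y) ^ 2 := by
  rw [neumannImage_of_even hk]
  rcases Nat.lt_or_ge k.natAbs 2 with hk2 | hk2
  · obtain rfl : k = 0 := by
      rcases hk with ⟨j, rfl⟩
      omega
    simp
  · have hcast : (k.natAbs : ℝ) = |(k : ℝ)| := by simp [Nat.cast_natAbs]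
    have hk2' : (2 : ℝ) ≤ |(k : ℝ)| := by
      rw [← hcast]
      exact_mod_cast hk2
    have hmul : (k : ℝ) * (x - y) ≤ |(k : ℝ)| * 2 := by
      refine (le_abs_self _).trans ?_
      rw [abs_mul]
      gcongr
      rw [abs_le]
      constructor <;> linarith [hx.1, hx.2, hy.1, hy.2]
    rw [Nat.cast_sub hk2, hcast]
    push_cast
    nlinarith [sq_abs (k : ℝ)]

lemma sq_sub_add_le_sq_sub_neumannImage_of_odd {k : ℤ} (hk : Odd k) {x y : ℝ}
    (hx : x ∈ Icc (-1 : ℝ) 1) (hy : y ∈ Icc (-1 : ℝ) 1) :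
    (x - y) ^ 2 + ((k.natAbs - 2 : ℕ) : ℝ) ≤ (x - neumannImage k y) ^ 2 := by
  obtain ⟨hx1, hx2⟩ := hx
  obtain ⟨hy1, hy2⟩ := hy
  have hcast : (k.natAbs : ℝ) = |(k : ℝ)| := by simp [Nat.cast_natAbs]
  have hone : 1 ≤ |(k : ℝ)| := by
    rw [← hcast]
    rcases hk with ⟨j, rfl⟩
    exact_mod_cast (by omega : 1 ≤ (2 * j + 1).natAbs)
  have hprod : (|(k : ℝ)| - 1) ^ 2 ≤ (k - x) * (k - y) := by
    rcases abs_cases (k : ℝ) with ⟨habs, -⟩ | ⟨habs, -⟩ <;> rw [habs] at hone ⊢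
    · nlinarith [mul_nonneg (sub_nonneg.2 hx2) (by linarith : (0 : ℝ) ≤ k - y),
        mul_nonneg (sub_nonneg.2 hy2) (by linarith : (0 : ℝ) ≤ k - 1)]
    · nlinarith [mul_nonneg (by linarith : (0 : ℝ) ≤ 1 + x) (by linarith : (0 : ℝ) ≤ -k + y),
        mul_nonneg (by linarith : (0 : ℝ) ≤ 1 + y) (by linarith : (0 : ℝ) ≤ -k - 1)]
  have htrunc : ((k.natAbs - 2 : ℕ) : ℝ) ≤ 4 * (|(k : ℝ)| - 1) ^ 2 := by
    rcases Nat.lt_or_ge k.natAbs 2 with hk2 | hk2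
    · rw [Nat.sub_eq_zero_of_le hk2.le, Nat.cast_zero]
      positivity
    · have hk2' : (2 : ℝ) ≤ |(k : ℝ)| := by
        rw [← hcast]
        exact_mod_cast hk2
      rw [Nat.cast_sub hk2, hcast]
      push_cast
      nlinarith
  rw [neumannImage_of_odd hk,
    show (x - (2 * (k : ℝ) - y)) ^ 2 = (x - y) ^ 2 + 4 * ((k - x) * (k - y)) by ring]
  linarith

lemma sq_sub_add_le_sq_sub_neumannImage (k : ℤ) {x y : ℝ} (hx : x ∈ Icc (-1 : ℝ) 1)
    (hy : y ∈ Icc (-1 : ℝ) 1) :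
    (x - y) ^ 2 + ((k.natAbs - 2 : ℕ) : ℝ) ≤ (x - neumannImage k y) ^ 2 := by
  rcases Int.even_or_odd k with hk | hk
  · exact sq_sub_add_le_sq_sub_neumannImage_of_even hk hx hy
  · exact sq_sub_add_le_sq_sub_neumannImage_of_odd hk hx hy

lemma heatK_nonneg (x t : ℝ) : 0 ≤ heatK x t := by
  unfold heatK
  positivity

lemma heatK_of_nonpos (x : ℝ) {t : ℝ} (ht : t ≤ 0) : heatK x t = 0 := by
  rw [heatK, Real.sqrt_eq_zero_of_nonpos (by nlinarith [Real.pi_pos]), inv_zero, zero_mul]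

lemma heatK_neg (x t : ℝ) : heatK (-x) t = heatK x t := by simp [heatK]

lemma heatK_eq_of_abs_eq {x y : ℝ} (h : |x| = |y|) (t : ℝ) : heatK x t = heatK y t := by
  rw [heatK, heatK, (sq_eq_sq_iff_abs_eq_abs x y).2 h]

lemma measurable_heatK : Measurable (fun q : ℝ × ℝ => heatK q.1 q.2) := by
  unfold heatK
  fun_prop

lemma measurable_heatK_sub (v t : ℝ) : Measurable (fun y => heatK (v - y) t) :=
  measurable_heatK.comp (f := fun y : ℝ => (v - y, t)) (by fun_prop)

lemma summable_exp_neg_abs_mul {c : ℝ} (hc : 0 < c) :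
    Summable (fun k : ℤ => Real.exp (-|(k : ℝ)| * c)) := by
  have hnat : Summable (fun n : ℕ => Real.exp (-(n : ℝ) * c)) :=
    (Real.summable_exp_nat_mul_iff.2 (neg_lt_zero.2 hc)).congr fun n => by ring_nf
  exact Summable.of_nat_of_neg (by simpa using hnat) (by simpa using hnat)

lemma summable_exp_neg_sq_sub_neumannImage (x y : ℝ) {t : ℝ} (ht : 0 < t) :
    Summable (fun k : ℤ => Real.exp (-((x - neumannImage k y) ^ 2) / (4 * t))) := by
  refine .of_nonneg_of_le (fun k => (Real.exp_pos _).le) (fun k => ?_)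
    ((summable_exp_neg_abs_mul (c := 1 / t) (by positivity)).mul_left
      (Real.exp ((2 * (|x| + |y|) + 1) / (4 * t))))
  have hsq : 4 * |(k : ℝ)| - 2 * (|x| + |y|) - 1 ≤ (x - neumannImage k y) ^ 2 := by
    rw [← sq_abs]
    nlinarith [sq_nonneg (|x - neumannImage k y| - 1),
      two_mul_abs_sub_le_abs_sub_neumannImage k x y]
  rw [← Real.exp_add, show (2 * (|x| + |y|) + 1) / (4 * t) + -|(k : ℝ)| * (1 / t)
    = (2 * (|x| + |y|) + 1 - 4 * |(k : ℝ)|) / (4 * t) by field_simp; ring]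
  gcongr
  linarith

lemma summable_heatK_sub_neumannImage (x y t : ℝ) :
    Summable (fun k : ℤ => heatK (x - neumannImage k y) t) := by
  rcases le_or_gt t 0 with ht | ht
  · simp only [heatK_of_nonpos _ ht, summable_zero]
  · exact (summable_exp_neg_sq_sub_neumannImage x y ht).mul_left _

lemma heatK_eq_gaussianPDFReal (x y : ℝ) {t : ℝ} (ht : 0 < t) :
    heatK (x - y) t = ProbabilityTheory.gaussianPDFReal x (2 * t).toNNReal y := by
  rw [heatK, ProbabilityTheory.gaussianPDFReal, Real.coe_toNNReal _ (by linarith)]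
  ring_nf

lemma lintegral_heatK_sub (x : ℝ) {t : ℝ} (ht : 0 < t) :
    ∫⁻ y, ENNReal.ofReal (heatK (x - y) t) = 1 := by
  simp only [heatK_eq_gaussianPDFReal _ _ ht]
  exact ProbabilityTheory.lintegral_gaussianPDFReal_eq_one x (by simp [ht])

lemma heatK_mul_heatK (x y v : ℝ) {t s : ℝ} (ht : 0 < t) (hs : 0 < s) :
    heatK (x - y) t * heatK (y - v) s =
      heatK (x - v) (t + s) * heatK ((s * x + t * v) / (t + s) - y) (t * s / (t + s)) := by
  have hsqrt : (Real.sqrt (4 * Real.pi * t))⁻¹ * (Real.sqrt (4 * Real.pi * s))⁻¹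
      = (Real.sqrt (4 * Real.pi * (t + s)))⁻¹
        * (Real.sqrt (4 * Real.pi * (t * s / (t + s))))⁻¹ := by
    rw [← mul_inv, ← mul_inv, ← Real.sqrt_mul (by positivity), ← Real.sqrt_mul (by positivity)]
    congr 2
    field_simp
  have hsquare : -((x - y) ^ 2) / (4 * t) + -((y - v) ^ 2) / (4 * s)
      = -((x - v) ^ 2) / (4 * (t + s))
        + -(((s * x + t * v) / (t + s) - y) ^ 2) / (4 * (t * s / (t + s))) := by
    field_simp
    ring
  have hexp := congrArg Real.exp hsquare
  rw [Real.exp_add, Real.exp_add] at hexp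
  simp only [heatK]
  rw [mul_mul_mul_comm, hsqrt, hexp, mul_mul_mul_comm]

lemma lintegral_heatK_mul_heatK (x v : ℝ) {t s : ℝ} (ht : 0 < t) (hs : 0 < s) :
    ∫⁻ y, ENNReal.ofReal (heatK (x - y) t * heatK (y - v) s)
      = ENNReal.ofReal (heatK (x - v) (t + s)) := by
  simp only [heatK_mul_heatK x _ v ht hs, ENNReal.ofReal_mul (heatK_nonneg _ _)]
  rw [lintegral_const_mul _ (measurable_heatK_sub _ _).ennreal_ofReal,
    lintegral_heatK_sub _ (by positivity), mul_one]

/-! ### The Neumann heat kernel -/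

lemma heatGamma_eq_tsum (x y t : ℝ) :
    heatGamma x y t = ∑' k : ℤ, heatK (x - neumannImage k y) t := rfl

lemma heatGamma_nonneg (x y t : ℝ) : 0 ≤ heatGamma x y t := tsum_nonneg fun _ => heatK_nonneg _ _

lemma heatK_le_heatGamma (x y t : ℝ) : heatK (x - y) t ≤ heatGamma x y t := by
  simpa only [heatGamma_eq_tsum, neumannImage_zero] using
    (summable_heatK_sub_neumannImage x y t).le_tsum 0 fun k _ => heatK_nonneg _ t

lemma heatGamma_of_nonpos (x y : ℝ) {t : ℝ} (ht : t ≤ 0) : heatGamma x y t = 0 := by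
  simp only [heatGamma_eq_tsum, heatK_of_nonpos _ ht, tsum_zero]

lemma measurable_heatGamma : Measurable (fun q : ℝ × ℝ × ℝ => heatGamma q.1 q.2.1 q.2.2) := by
  refine measurable_of_tendsto_metrizable' (f := fun (s : Finset ℤ) (q : ℝ × ℝ × ℝ) =>
    ∑ k ∈ s, heatK (q.1 - neumannImage k q.2.1) q.2.2) atTop (fun s => ?_) ?_
  · refine Finset.measurable_sum _ fun k _ => ?_
    have := measurable_neumannImage k
    exact measurable_heatK.comp
      (f := fun q : ℝ × ℝ × ℝ => (q.1 - neumannImage k q.2.1, q.2.2)) (by fun_prop)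
  · exact tendsto_pi_nhds.2 fun q => (summable_heatK_sub_neumannImage q.1 q.2.1 q.2.2).hasSum

lemma measurable_heatGamma_left (y t : ℝ) : Measurable (fun x => heatGamma x y t) :=
  measurable_heatGamma.comp (f := fun x : ℝ => (x, y, t)) (by fun_prop)

lemma measurable_heatGamma_right (x t : ℝ) : Measurable (fun y => heatGamma x y t) :=
  measurable_heatGamma.comp (f := fun y : ℝ => (x, y, t)) (by fun_prop)

lemma heatGamma_symm (x y t : ℝ) : heatGamma x y t = heatGamma y x t := by
  rw [heatGamma_eq_tsum, heatGamma_eq_tsum, ← negEvenPerm.tsum_eq]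
  exact tsum_congr fun k => heatK_eq_of_abs_eq (abs_sub_neumannImage_negEvenPerm k x y) t

lemma heatGamma_neg (x y t : ℝ) : heatGamma (-x) (-y) t = heatGamma x y t := by
  rw [heatGamma_eq_tsum, heatGamma_eq_tsum, ← (Equiv.neg ℤ).tsum_eq]
  refine tsum_congr fun k => ?_
  rw [Equiv.neg_apply, neumannImage_neg, ← heatK_neg]
  ring_nf

lemma heatGamma_neumannImage (k : ℤ) (y w t : ℝ) :
    heatGamma (neumannImage k y) w t = heatGamma y w t := by
  rcases Int.even_or_odd k with hk | hk
  · rw [heatGamma_eq_tsum, heatGamma_eq_tsum,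
      ← (Equiv.subRight k).tsum_eq fun j => heatK (y - neumannImage j w) t]
    exact tsum_congr fun j => by rw [neumannImage_sub_of_even hk, Equiv.subRight_apply]
  · rw [heatGamma_eq_tsum, heatGamma_eq_tsum,
      ← (Equiv.subLeft k).tsum_eq fun j => heatK (y - neumannImage j w) t]
    exact tsum_congr fun j => by
      rw [neumannImage_sub_of_odd hk, Equiv.subLeft_apply, heatK_neg]

lemma lintegral_comp_neumannImage (k : ℤ) (φ : ℝ → ℝ≥0∞) :
    ∫⁻ y in Ioo (-1 : ℝ) 1, φ (neumannImage k y)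
      = ∫⁻ y in Ioo (2 * (k : ℝ) - 1) (2 * (k : ℝ) + 1), φ y := by
  rcases Int.even_or_odd k with hk | hk
  · simp only [neumannImage_of_even hk]
    rw [← (measurePreserving_add_left volume (2 * (k : ℝ))).setLIntegral_comp_preimage_emb
      (measurableEmbedding_addLeft _) φ, preimage_const_add_Ioo]
    ring_nf
  · simp only [neumannImage_of_odd hk]
    rw [← (Measure.measurePreserving_sub_left volume (2 * (k : ℝ))).setLIntegral_comp_preimage_emb
      (measurableEmbedding_subLeft _) φ, preimage_const_sub_Ioo]
    ring_nf

lemma lintegral_eq_tsum_lintegral_comp_neumannImage (φ : ℝ → ℝ≥0∞) :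
    ∫⁻ y, φ y = ∑' k : ℤ, ∫⁻ y in Ioc (-1 : ℝ) 1, φ (neumannImage k y) := by
  rw [← setLIntegral_univ, ← iUnion_Ioc_add_zsmul (two_pos : (0 : ℝ) < 2) (-1),
    lintegral_iUnion (fun _ => measurableSet_Ioc) (pairwise_disjoint_Ioc_add_zsmul (-1 : ℝ) 2)]
  refine tsum_congr fun k => ?_
  rw [← setLIntegral_congr Ioo_ae_eq_Ioc, ← setLIntegral_congr Ioo_ae_eq_Ioc,
    lintegral_comp_neumannImage]
  simp only [zsmul_eq_mul]
  push_cast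
  ring_nf

lemma setLIntegral_heatGamma_mul (x t : ℝ) {φ : ℝ → ℝ} (hφm : Measurable φ) (hφ : ∀ y, 0 ≤ φ y)
    (hinv : ∀ k y, φ (neumannImage k y) = φ y) :
    ∫⁻ y in Ioc (-1 : ℝ) 1, ENNReal.ofReal (heatGamma x y t * φ y)
      = ∫⁻ y, ENNReal.ofReal (heatK (x - y) t * φ y) := by
  have hmeas : ∀ k : ℤ, Measurable fun y =>
      ENNReal.ofReal (heatK (x - neumannImage k y) t * φ (neumannImage k y)) := fun k =>
    (((measurable_heatK_sub x t).mul hφm).comp (measurable_neumannImage k)).ennreal_ofReal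
  rw [lintegral_eq_tsum_lintegral_comp_neumannImage,
    ← lintegral_tsum fun k => (hmeas k).aemeasurable]
  refine lintegral_congr fun y => ?_
  simp only [hinv]
  rw [heatGamma_eq_tsum, ← tsum_mul_right, ENNReal.ofReal_tsum_of_nonneg]
  · exact fun k => mul_nonneg (heatK_nonneg _ _) (hφ _)
  · exact (summable_heatK_sub_neumannImage x y t).mul_right _

lemma setLIntegral_heatGamma (x : ℝ) {t : ℝ} (ht : 0 < t) :
    ∫⁻ y in Ioc (-1 : ℝ) 1, ENNReal.ofReal (heatGamma x y t) = 1 := by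
  have := setLIntegral_heatGamma_mul x t measurable_const (fun _ => zero_le_one) (fun _ _ => rfl)
  simpa only [mul_one, lintegral_heatK_sub x ht] using this

lemma setLIntegral_heatGamma_mul_heatGamma (x w : ℝ) {t s : ℝ} (ht : 0 < t) (hs : 0 < s) :
    ∫⁻ y in Ioc (-1 : ℝ) 1, ENNReal.ofReal (heatGamma x y t * heatGamma y w s)
      = ENNReal.ofReal (heatGamma x w (t + s)) := by
  have hexpand : ∀ y, ENNReal.ofReal (heatK (x - y) t * heatGamma y w s)
      = ∑' k : ℤ, ENNReal.ofReal (heatK (x - y) t * heatK (y - neumannImage k w) s) := fun y => by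
    rw [heatGamma_eq_tsum, ← tsum_mul_left, ENNReal.ofReal_tsum_of_nonneg]
    · exact fun k => mul_nonneg (heatK_nonneg _ _) (heatK_nonneg _ _)
    · exact (summable_heatK_sub_neumannImage y w s).mul_left _
  have hmeas : ∀ k : ℤ, Measurable fun y =>
      ENNReal.ofReal (heatK (x - y) t * heatK (y - neumannImage k w) s) := fun k =>
    ((measurable_heatK_sub x t).mul (measurable_heatK.comp
      (f := fun y : ℝ => (y - neumannImage k w, s)) (by fun_prop))).ennreal_ofReal
  rw [setLIntegral_heatGamma_mul x t (measurable_heatGamma_left w s)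
    (fun _ => heatGamma_nonneg _ _ _) (fun k y => heatGamma_neumannImage k y w s)]
  simp only [hexpand]
  rw [lintegral_tsum fun k => (hmeas k).aemeasurable]
  simp only [lintegral_heatK_mul_heatK x _ ht hs]
  rw [heatGamma_eq_tsum, ENNReal.ofReal_tsum_of_nonneg (fun _ => heatK_nonneg _ _)
    (summable_heatK_sub_neumannImage _ _ _)]

lemma integrableOn_heatGamma (x t : ℝ) :
    IntegrableOn (fun y => heatGamma x y t) (Ioc (-1 : ℝ) 1) := by
  refine ⟨(measurable_heatGamma_right x t).aestronglyMeasurable, ?_⟩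
  rw [hasFiniteIntegral_iff_ofReal (ae_of_all _ fun y => heatGamma_nonneg _ _ _)]
  rcases le_or_gt t 0 with ht | ht
  · simp [heatGamma_of_nonpos _ _ ht]
  · simp [setLIntegral_heatGamma x ht]

lemma setIntegral_heatGamma (x : ℝ) {t : ℝ} (ht : 0 < t) :
    ∫ y in Ioc (-1 : ℝ) 1, heatGamma x y t = 1 := by
  rw [integral_eq_lintegral_of_nonneg_ae (ae_of_all _ fun y => heatGamma_nonneg _ _ _)
    (measurable_heatGamma_right x t).aestronglyMeasurable, setLIntegral_heatGamma x ht,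
    ENNReal.toReal_one]

lemma setIntegral_heatGamma_left_le (y t : ℝ) : ∫ x in Ioc (-1 : ℝ) 1, heatGamma x y t ≤ 1 := by
  rcases le_or_gt t 0 with ht | ht
  · simp [heatGamma_of_nonpos _ _ ht]
  · simp only [heatGamma_symm _ y, setIntegral_heatGamma y ht, le_refl]

lemma integrableOn_heatGamma_left (y t : ℝ) :
    IntegrableOn (fun x => heatGamma x y t) (Ioc (-1 : ℝ) 1) := by
  simpa only [heatGamma_symm _ y] using integrableOn_heatGamma y t

lemma setIntegral_heatGamma_mul_heatGamma (x w : ℝ) {t s : ℝ} (ht : 0 < t) (hs : 0 < s) :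
    ∫ y in Ioc (-1 : ℝ) 1, heatGamma x y t * heatGamma y w s = heatGamma x w (t + s) := by
  rw [integral_eq_lintegral_of_nonneg_ae
    (ae_of_all _ fun y => mul_nonneg (heatGamma_nonneg _ _ _) (heatGamma_nonneg _ _ _))
    ((measurable_heatGamma_right x t).mul (measurable_heatGamma_left w s)).aestronglyMeasurable,
    setLIntegral_heatGamma_mul_heatGamma x w ht hs, ENNReal.toReal_ofReal (heatGamma_nonneg _ _ _)]

/-! ### Gaussian bounds and the complexified kernel -/

/-- The sum over all images of their Gaussian weights relative to the original point, uniform over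
positions in `[-1, 1]` and times in `(0, T]`. The truncated subtraction leaves the weight `1` for
the images `|k| ≤ 2`, which may be as close as the point itself. -/
noncomputable def imageSum (T : ℝ) : ℝ :=
  ∑' k : ℤ, Real.exp (-((k.natAbs - 2 : ℕ) : ℝ) / (4 * T))

/-- The holomorphic extension of `heatK · t`. -/
noncomputable def complexHeatK (z : ℂ) (t : ℝ) : ℂ :=
  (((Real.sqrt (4 * Real.pi * t))⁻¹ : ℝ) : ℂ) * Complex.exp (-(z ^ 2) / ((4 * t : ℝ) : ℂ))

/-- The holomorphic extension of `heatGamma · y t`. -/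
noncomputable def complexHeatGamma (z : ℂ) (y t : ℝ) : ℂ :=
  ∑' k : ℤ, complexHeatK (z - (neumannImage k y : ℝ)) t

lemma summable_exp_neg_natAbs_sub_two_div {T : ℝ} (hT : 0 < T) :
    Summable (fun k : ℤ => Real.exp (-((k.natAbs - 2 : ℕ) : ℝ) / (4 * T))) := by
  refine .of_nonneg_of_le (fun k => (Real.exp_pos _).le) (fun k => ?_)
    ((summable_exp_neg_abs_mul (c := 1 / (4 * T)) (by positivity)).mul_left
      (Real.exp (2 / (4 * T))))
  have hcast : |(k : ℝ)| ≤ ((k.natAbs - 2 : ℕ) : ℝ) + 2 := by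
    rw [show |(k : ℝ)| = (k.natAbs : ℝ) by simp [Nat.cast_natAbs]]
    exact_mod_cast (by omega : k.natAbs ≤ k.natAbs - 2 + 2)
  rw [← Real.exp_add, show 2 / (4 * T) + -|(k : ℝ)| * (1 / (4 * T))
    = (2 - |(k : ℝ)|) / (4 * T) by ring]
  gcongr
  linarith

lemma imageSum_nonneg (T : ℝ) : 0 ≤ imageSum T := tsum_nonneg fun _ => (Real.exp_pos _).le

lemma complexHeatK_ofReal (x t : ℝ) : complexHeatK x t = heatK x t := by
  simp only [complexHeatK, heatK]
  push_cast
  rfl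

lemma complexHeatGamma_ofReal (x y t : ℝ) : complexHeatGamma x y t = heatGamma x y t := by
  rw [complexHeatGamma, heatGamma_eq_tsum, Complex.ofReal_tsum]
  exact tsum_congr fun k => by rw [← complexHeatK_ofReal, Complex.ofReal_sub]

lemma norm_complexHeatK_sub (z : ℂ) (w t : ℝ) : ‖complexHeatK (z - (w : ℝ)) t‖
    = (Real.sqrt (4 * Real.pi * t))⁻¹
      * Real.exp ((z.im ^ 2 - (z.re - w) ^ 2) / (4 * t)) := by
  rw [complexHeatK, norm_mul, Complex.norm_real, Complex.norm_exp, Complex.div_ofReal_re,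
    Real.norm_of_nonneg (by positivity)]
  simp [pow_two, Complex.mul_re]

lemma complexHeatK_of_nonpos (z : ℂ) {t : ℝ} (ht : t ≤ 0) : complexHeatK z t = 0 := by
  rw [complexHeatK, Real.sqrt_eq_zero_of_nonpos (by nlinarith [Real.pi_pos]), inv_zero,
    Complex.ofReal_zero, zero_mul]

lemma complexHeatGamma_of_nonpos (z : ℂ) (y : ℝ) {t : ℝ} (ht : t ≤ 0) :
    complexHeatGamma z y t = 0 := by
  simp only [complexHeatGamma, complexHeatK_of_nonpos _ ht, tsum_zero]

lemma summable_complexHeatK_sub_neumannImage (z : ℂ) (y t : ℝ) :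
    Summable (fun k : ℤ => complexHeatK (z - (neumannImage k y : ℝ)) t) := by
  rcases le_or_gt t 0 with ht | ht
  · simp only [complexHeatK_of_nonpos _ ht, summable_zero]
  · refine Summable.of_norm ?_
    simp only [norm_complexHeatK_sub]
    refine Summable.mul_left _ (((summable_exp_neg_sq_sub_neumannImage z.re y ht).mul_left
      (Real.exp (z.im ^ 2 / (4 * t)))).congr fun k => ?_)
    rw [← Real.exp_add]
    ring_nf

lemma measurable_complexHeatGamma (z : ℂ) :
    Measurable (fun q : ℝ × ℝ => complexHeatGamma z q.1 q.2) := by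
  refine measurable_of_tendsto_metrizable' (f := fun (s : Finset ℤ) (q : ℝ × ℝ) =>
    ∑ k ∈ s, complexHeatK (z - (neumannImage k q.1 : ℝ)) q.2) atTop (fun s => ?_) ?_
  · refine Finset.measurable_sum _ fun k _ => ?_
    have := measurable_neumannImage k
    unfold complexHeatK
    fun_prop
  · exact tendsto_pi_nhds.2 fun q => (summable_complexHeatK_sub_neumannImage z q.1 q.2).hasSum

lemma norm_complexHeatK_sub_neumannImage_le {z : ℂ} {y t T : ℝ} (k : ℤ) (ht : 0 < t) (htT : t ≤ T)
    (hz : z.re ∈ Icc (-1 : ℝ) 1) (hy : y ∈ Icc (-1 : ℝ) 1) :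
    ‖complexHeatK (z - (neumannImage k y : ℝ)) t‖
      ≤ (Real.sqrt (4 * Real.pi * t))⁻¹ * Real.exp ((z.im ^ 2 - (z.re - y) ^ 2) / (4 * t))
        * Real.exp (-((k.natAbs - 2 : ℕ) : ℝ) / (4 * T)) := by
  have himage : (z.im ^ 2 - (z.re - neumannImage k y) ^ 2) / (4 * t)
      ≤ (z.im ^ 2 - (z.re - y) ^ 2 - ((k.natAbs - 2 : ℕ) : ℝ)) / (4 * t) := by
    refine div_le_div_of_nonneg_right ?_ (by positivity)
    linarith [sq_sub_add_le_sq_sub_neumannImage k hz hy]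
  have htime : ((k.natAbs - 2 : ℕ) : ℝ) / (4 * T) ≤ ((k.natAbs - 2 : ℕ) : ℝ) / (4 * t) := by gcongr
  rw [sub_div _ ((k.natAbs - 2 : ℕ) : ℝ)] at himage
  rw [norm_complexHeatK_sub, mul_assoc (Real.sqrt (4 * Real.pi * t))⁻¹, ← Real.exp_add]
  gcongr
  rw [neg_div]
  linarith

lemma norm_complexHeatGamma_le {z : ℂ} {y t T : ℝ} (ht : 0 < t) (htT : t ≤ T)
    (hz : z.re ∈ Icc (-1 : ℝ) 1) (hy : y ∈ Icc (-1 : ℝ) 1) :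
    ‖complexHeatGamma z y t‖ ≤ (Real.sqrt (4 * Real.pi * t))⁻¹
      * Real.exp ((z.im ^ 2 - (z.re - y) ^ 2) / (4 * t)) * imageSum T := by
  rw [imageSum, complexHeatGamma, ← tsum_mul_left]
  exact tsum_of_norm_bounded
    ((summable_exp_neg_natAbs_sub_two_div (ht.trans_le htT)).mul_left _).hasSum
    fun k => norm_complexHeatK_sub_neumannImage_le k ht htT hz hy

lemma heatGamma_eq_norm_complexHeatGamma (x y t : ℝ) :
    heatGamma x y t = ‖complexHeatGamma x y t‖ := by
  rw [complexHeatGamma_ofReal, Complex.norm_real, Real.norm_of_nonneg (heatGamma_nonneg _ _ _)]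

lemma differentiableOn_complexHeatGamma {y : ℝ} (hy : y ∈ Icc (-1 : ℝ) 1) (t : ℝ) :
    DifferentiableOn ℂ (fun z => complexHeatGamma z y t) (Ioo (-1) 1 ×ℂ Ioo (-1) 1) := by
  rcases le_or_gt t 0 with ht | ht
  · simp only [complexHeatGamma_of_nonpos _ _ ht]
    exact differentiableOn_const _
  · refine Complex.differentiableOn_tsum_of_summable_norm
      ((summable_exp_neg_natAbs_sub_two_div ht).mul_left
        ((Real.sqrt (4 * Real.pi * t))⁻¹ * Real.exp (1 / (4 * t))))
      (fun k => ?_) (isOpen_Ioo.reProdIm isOpen_Ioo) fun k z ⟨hre, him⟩ => ?_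
    · unfold complexHeatK
      fun_prop
    · refine (norm_complexHeatK_sub_neumannImage_le k ht le_rfl (Ioo_subset_Icc_self hre)
        hy).trans ?_
      have him2 : z.im ^ 2 ≤ 1 := by nlinarith [him.1, him.2]
      gcongr
      linarith [sq_nonneg (z.re - y)]

lemma exists_inv_sqrt_mul_exp_le_mul {ε : ℝ} (hε : 0 < ε) : ∃ C : ℝ, 0 ≤ C ∧ ∀ t : ℝ, 0 < t →
    (Real.sqrt (4 * Real.pi * t))⁻¹ * Real.exp (-ε / (4 * t)) ≤ C * t := by
  refine ⟨4 / ε + 32 / ε ^ 2, by positivity, fun t ht => ?_⟩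
  have hsqrt : (Real.sqrt (4 * Real.pi * t))⁻¹ ≤ 1 + 1 / t := by
    have hle : ((Real.sqrt (4 * Real.pi * t))⁻¹) ^ 2 ≤ 1 / t := by
      rw [inv_pow, Real.sq_sqrt (by positivity), one_div]
      gcongr
      nlinarith [Real.pi_gt_three]
    nlinarith [sq_nonneg ((Real.sqrt (4 * Real.pi * t))⁻¹ - 1 / 2)]
  set v := ε / (4 * t) with hv
  have hvpos : 0 < v := by positivity
  have hlinear : (Real.exp v)⁻¹ ≤ v⁻¹ := by
    gcongr
    linarith [Real.add_one_le_exp v]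
  have hquadratic : (Real.exp v)⁻¹ ≤ (v ^ 2 / 2)⁻¹ := by
    gcongr
    linarith [Real.quadratic_le_exp_of_nonneg hvpos.le]
  rw [neg_div, Real.exp_neg]
  calc (Real.sqrt (4 * Real.pi * t))⁻¹ * (Real.exp v)⁻¹ ≤ (1 + 1 / t) * (Real.exp v)⁻¹ := by gcongr
    _ = (Real.exp v)⁻¹ + 1 / t * (Real.exp v)⁻¹ := by ring
    _ ≤ v⁻¹ + 1 / t * (v ^ 2 / 2)⁻¹ := by gcongr
    _ = (4 / ε + 32 / ε ^ 2) * t := by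
      rw [hv]
      field_simp
      ring

lemma exists_exp_mul_norm_complexHeatGamma_le_mul {δ T : ℝ} (hδ : 0 < δ) : ∃ C : ℝ, 0 ≤ C ∧
    ∀ (κ : ℝ) (z : ℂ) (y t : ℝ), z.re ∈ Icc (-1 : ℝ) 1 → y ∈ Icc (-1 : ℝ) 1 → 0 < t → t ≤ T →
      κ + δ ≤ (z.re - y) ^ 2 - z.im ^ 2 →
        Real.exp (κ / (4 * t)) * ‖complexHeatGamma z y t‖ ≤ C * t := by
  obtain ⟨C, hC, hCt⟩ := exists_inv_sqrt_mul_exp_le_mul hδ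
  refine ⟨C * imageSum T, mul_nonneg hC (imageSum_nonneg T), fun κ z y t hz hy ht htT hfar => ?_⟩
  have hexp : Real.exp (κ / (4 * t)) * Real.exp ((z.im ^ 2 - (z.re - y) ^ 2) / (4 * t))
      ≤ Real.exp (-δ / (4 * t)) := by
    rw [← Real.exp_add, ← add_div]
    gcongr
    linarith
  have hS := imageSum_nonneg T
  calc Real.exp (κ / (4 * t)) * ‖complexHeatGamma z y t‖
    _ ≤ Real.exp (κ / (4 * t)) * ((Real.sqrt (4 * Real.pi * t))⁻¹
        * Real.exp ((z.im ^ 2 - (z.re - y) ^ 2) / (4 * t)) * imageSum T) := by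
      gcongr
      exact norm_complexHeatGamma_le ht htT hz hy
    _ = (Real.sqrt (4 * Real.pi * t))⁻¹ * (Real.exp (κ / (4 * t))
        * Real.exp ((z.im ^ 2 - (z.re - y) ^ 2) / (4 * t))) * imageSum T := by ring
    _ ≤ (Real.sqrt (4 * Real.pi * t))⁻¹ * Real.exp (-δ / (4 * t)) * imageSum T := by gcongr
    _ ≤ C * t * imageSum T := mul_le_mul_of_nonneg_right (hCt t ht) hS
    _ = C * imageSum T * t := by ring

lemma exists_norm_complexHeatGamma_le_mul {δ T : ℝ} (hδ : 0 < δ) : ∃ C : ℝ, 0 ≤ C ∧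
    ∀ (z : ℂ) (y t : ℝ), z.re ∈ Icc (-1 : ℝ) 1 → y ∈ Icc (-1 : ℝ) 1 → 0 < t → t ≤ T →
      δ ≤ (z.re - y) ^ 2 - z.im ^ 2 → ‖complexHeatGamma z y t‖ ≤ C * t := by
  obtain ⟨C, hC, hCt⟩ := exists_exp_mul_norm_complexHeatGamma_le_mul (T := T) hδ
  refine ⟨C, hC, fun z y t hz hy ht htT hfar => ?_⟩
  simpa using hCt 0 z y t hz hy ht htT (by rwa [zero_add])

lemma exists_norm_complexHeatGamma_le {δ τ T : ℝ} (hδ : 0 < δ) (hτ : 0 < τ) (hT : 0 ≤ T) :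
    ∃ M : ℝ, 0 ≤ M ∧ ∀ (z : ℂ) (y t : ℝ), z.re ∈ Icc (-1 : ℝ) 1 → |z.im| ≤ 1 →
      y ∈ Icc (-1 : ℝ) 1 → t ≤ T → t ≤ 0 ∨ τ ≤ t ∨ δ ≤ (z.re - y) ^ 2 - z.im ^ 2 →
        ‖complexHeatGamma z y t‖ ≤ M := by
  obtain ⟨C, hC, hCt⟩ := exists_norm_complexHeatGamma_le_mul (T := T) hδ
  have hold : 0 ≤ (Real.sqrt (4 * Real.pi * τ))⁻¹ * Real.exp (1 / (4 * τ)) * imageSum T :=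
    mul_nonneg (by positivity) (imageSum_nonneg T)
  refine ⟨C * T + (Real.sqrt (4 * Real.pi * τ))⁻¹ * Real.exp (1 / (4 * τ)) * imageSum T,
    by positivity, fun z y t hz him hy htT hcase => ?_⟩
  rcases le_or_gt t 0 with ht | ht
  · rw [complexHeatGamma_of_nonpos _ _ ht, norm_zero]
    positivity
  rcases hcase with ht' | hτt | hfar
  · exact absurd ht ht'.not_gt
  · refine (norm_complexHeatGamma_le ht htT hz hy).trans
      (le_trans ?_ (le_add_of_nonneg_left (by positivity)))
    have hexp : (z.im ^ 2 - (z.re - y) ^ 2) / (4 * t) ≤ 1 / (4 * τ) := by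
      have him2 : z.im ^ 2 ≤ 1 := (sq_le_one_iff_abs_le_one _).2 him
      gcongr
      linarith [sq_nonneg (z.re - y)]
    have := imageSum_nonneg T
    gcongr
  · exact (hCt z y t hz hy ht htT hfar).trans ((mul_le_mul_of_nonneg_left htT hC).trans
      (le_add_of_nonneg_right hold))

lemma exists_heatGamma_le {δ τ T : ℝ} (hδ : 0 < δ) (hτ : 0 < τ) (hT : 0 ≤ T) :
    ∃ M : ℝ, 0 ≤ M ∧ ∀ x y t : ℝ, x ∈ Icc (-1 : ℝ) 1 → y ∈ Icc (-1 : ℝ) 1 → t ≤ T →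
      t ≤ 0 ∨ τ ≤ t ∨ δ ≤ |x - y| → heatGamma x y t ≤ M := by
  obtain ⟨M, hM, hbound⟩ := exists_norm_complexHeatGamma_le (pow_pos hδ 2) hτ hT
  refine ⟨M, hM, fun x y t hx hy htT hcase => ?_⟩
  rw [heatGamma_eq_norm_complexHeatGamma]
  refine hbound x y t (by simpa using hx) (by simp) hy htT
    (hcase.imp_right (Or.imp_right fun hfar => ?_))
  rw [Complex.ofReal_re, Complex.ofReal_im, ← sq_abs (x - y), zero_pow two_ne_zero, sub_zero]
  exact pow_le_pow_left₀ hδ.le hfar 2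

/-! ### The spatial derivative of the kernel -/

/-- The spatial derivative `-x / (2t) · K(x, t)` of the heat kernel; the junk value `x / 0 = 0` is
harmless because `heatK x t = 0` for `t ≤ 0`. -/
noncomputable def heatKDx (x t : ℝ) : ℝ := -(x / (2 * t)) * heatK x t

/-- The derivative of the Neumann heat kernel in its first variable. -/
noncomputable def heatGammaDx (x y t : ℝ) : ℝ := ∑' k : ℤ, heatKDx (x - neumannImage k y) t

lemma heatKDx_neg (x t : ℝ) : heatKDx (-x) t = -heatKDx x t := by
  rw [heatKDx, heatKDx, heatK_neg]
  ring

lemma heatKDx_of_nonpos (x : ℝ) {t : ℝ} (ht : t ≤ 0) : heatKDx x t = 0 := by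
  rw [heatKDx, heatK_of_nonpos x ht, mul_zero]

lemma heatGammaDx_of_nonpos (x y : ℝ) {t : ℝ} (ht : t ≤ 0) : heatGammaDx x y t = 0 := by
  simp only [heatGammaDx, heatKDx_of_nonpos _ ht, tsum_zero]

lemma measurable_heatKDx : Measurable (fun q : ℝ × ℝ => heatKDx q.1 q.2) := by
  have := measurable_heatK
  unfold heatKDx
  fun_prop

lemma hasDerivAt_heatK (x t : ℝ) : HasDerivAt (fun x => heatK x t) (heatKDx x t) x := by
  have hexponent : HasDerivAt (fun x : ℝ => -(x ^ 2) / (4 * t)) (-(2 * x) / (4 * t)) x := by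
    simpa using ((hasDerivAt_pow 2 x).neg.div_const (4 * t))
  refine (hexponent.exp.const_mul (Real.sqrt (4 * Real.pi * t))⁻¹).congr_deriv ?_
  rw [heatKDx, heatK]
  ring

lemma abs_heatKDx_le (x : ℝ) {t : ℝ} (ht : 0 < t) :
    |heatKDx x t| ≤ 2 / Real.sqrt t * heatK x (2 * t) := by
  set r := Real.sqrt t
  have hrpos : 0 < r := Real.sqrt_pos.2 ht
  have hrt : r ^ 2 = t := Real.sq_sqrt ht.le
  have hsqrt : Real.sqrt (4 * Real.pi * (2 * t)) = Real.sqrt 2 * Real.sqrt (4 * Real.pi * t) := by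
    rw [← Real.sqrt_mul (by norm_num)]
    ring_nf
  have hsplit : Real.exp (-(x ^ 2) / (4 * t))
      = Real.exp (-(x ^ 2) / (8 * t)) * Real.exp (-(x ^ 2) / (4 * (2 * t))) := by
    rw [← Real.exp_add]
    ring_nf
  have hsqrt2 : Real.sqrt 2 ^ 2 = 2 := Real.sq_sqrt zero_le_two
  have hdecay : |x| / (2 * t) * Real.exp (-(x ^ 2) / (8 * t)) ≤ 2 / r * (Real.sqrt 2)⁻¹ := by
    have hexp : 1 + x ^ 2 / (8 * t) ≤ Real.exp (x ^ 2 / (8 * t)) := by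
      linarith [Real.add_one_le_exp (x ^ 2 / (8 * t))]
    rw [neg_div, Real.exp_neg, ← div_eq_mul_inv, div_le_iff₀ (Real.exp_pos _)]
    refine le_trans ?_ (mul_le_mul_of_nonneg_left hexp (by positivity))
    rw [← hrt, ← sq_abs x]
    have hamgm : 0 ≤ (|x| - Real.sqrt 2 * 2 * r) ^ 2 := sq_nonneg _
    field_simp
    nlinarith [hamgm, Real.sqrt_nonneg 2]
  have hK2 : 0 ≤ (Real.sqrt (4 * Real.pi * t))⁻¹ * Real.exp (-(x ^ 2) / (4 * (2 * t))) := by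
    positivity
  calc |heatKDx x t|
      = |x| / (2 * t) * Real.exp (-(x ^ 2) / (8 * t))
        * ((Real.sqrt (4 * Real.pi * t))⁻¹ * Real.exp (-(x ^ 2) / (4 * (2 * t)))) := by
        rw [heatKDx, abs_mul, abs_of_nonneg (heatK_nonneg x t), abs_neg, abs_div,
          abs_of_pos (by positivity : 0 < 2 * t), heatK, hsplit]
        ring
    _ ≤ 2 / r * (Real.sqrt 2)⁻¹
        * ((Real.sqrt (4 * Real.pi * t))⁻¹ * Real.exp (-(x ^ 2) / (4 * (2 * t)))) :=
        mul_le_mul_of_nonneg_right hdecay hK2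
    _ = 2 / r * heatK x (2 * t) := by
        rw [heatK, hsqrt, mul_inv]
        ring

lemma summable_heatKDx_sub_neumannImage (x y t : ℝ) :
    Summable (fun k : ℤ => heatKDx (x - neumannImage k y) t) := by
  rcases le_or_gt t 0 with ht | ht
  · simp only [heatKDx_of_nonpos _ ht, summable_zero]
  · exact .of_norm_bounded ((summable_heatK_sub_neumannImage x y (2 * t)).mul_left _)
      fun k => abs_heatKDx_le _ ht

lemma measurable_heatGammaDx : Measurable (fun q : ℝ × ℝ × ℝ => heatGammaDx q.1 q.2.1 q.2.2) := by
  refine measurable_of_tendsto_metrizable' (f := fun (s : Finset ℤ) (q : ℝ × ℝ × ℝ) =>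
    ∑ k ∈ s, heatKDx (q.1 - neumannImage k q.2.1) q.2.2) atTop (fun s => ?_) ?_
  · refine Finset.measurable_sum _ fun k _ => ?_
    have := measurable_neumannImage k
    exact measurable_heatKDx.comp
      (f := fun q : ℝ × ℝ × ℝ => (q.1 - neumannImage k q.2.1, q.2.2)) (by fun_prop)
  · exact tendsto_pi_nhds.2 fun q => (summable_heatKDx_sub_neumannImage q.1 q.2.1 q.2.2).hasSum

lemma abs_heatGammaDx_le (x y : ℝ) {t : ℝ} (ht : 0 < t) :
    |heatGammaDx x y t| ≤ 2 / Real.sqrt t * heatGamma x y (2 * t) := by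
  rw [heatGamma_eq_tsum, ← tsum_mul_left, ← Real.norm_eq_abs, heatGammaDx]
  exact tsum_of_norm_bounded ((summable_heatK_sub_neumannImage x y (2 * t)).mul_left _).hasSum
    fun k => abs_heatKDx_le _ ht

lemma heatK_sub_neumannImage_le {x y τ t T : ℝ} (k : ℤ) (hτ : 0 < τ) (ht : t ∈ Icc τ T)
    (hx : x ∈ Icc (-1 : ℝ) 1) (hy : y ∈ Icc (-1 : ℝ) 1) :
    heatK (x - neumannImage k y) t
      ≤ (Real.sqrt (4 * Real.pi * τ))⁻¹ * Real.exp (-((k.natAbs - 2 : ℕ) : ℝ) / (4 * T)) := by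
  have hcomplex := norm_complexHeatK_sub_neumannImage_le (z := x) k (hτ.trans_le ht.1) ht.2
    (by simpa using hx) hy
  rw [← Complex.ofReal_sub, complexHeatK_ofReal, Complex.norm_real,
    Real.norm_of_nonneg (heatK_nonneg _ _)] at hcomplex
  refine hcomplex.trans ?_
  have hexp : Real.exp (((x : ℂ).im ^ 2 - ((x : ℂ).re - y) ^ 2) / (4 * t)) ≤ 1 := by
    rw [Real.exp_le_one_iff, Complex.ofReal_im, Complex.ofReal_re, zero_pow two_ne_zero, zero_sub]
    exact div_nonpos_of_nonpos_of_nonneg (neg_nonpos.2 (sq_nonneg _)) (by linarith [ht.1])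
  have ht1 := ht.1
  calc _ ≤ (Real.sqrt (4 * Real.pi * τ))⁻¹ * 1
        * Real.exp (-((k.natAbs - 2 : ℕ) : ℝ) / (4 * T)) := by gcongr
    _ = _ := by rw [mul_one]

lemma abs_heatKDx_sub_neumannImage_le {x y τ t T : ℝ} (k : ℤ) (hτ : 0 < τ) (ht : t ∈ Icc τ T)
    (hx : x ∈ Icc (-1 : ℝ) 1) (hy : y ∈ Icc (-1 : ℝ) 1) :
    |heatKDx (x - neumannImage k y) t| ≤ 2 / Real.sqrt τ * ((Real.sqrt (4 * Real.pi * (2 * τ)))⁻¹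
      * Real.exp (-((k.natAbs - 2 : ℕ) : ℝ) / (4 * (2 * T)))) := by
  have ht1 := ht.1
  refine (abs_heatKDx_le _ (hτ.trans_le ht.1)).trans ?_
  have hnonneg := heatK_nonneg (x - neumannImage k y) (2 * t)
  gcongr
  exact heatK_sub_neumannImage_le k (by positivity) ⟨by linarith [ht.1], by linarith [ht.2]⟩ hx hy

lemma hasDerivAt_heatGamma {x y : ℝ} (hx : x ∈ Ioo (-1 : ℝ) 1) (hy : y ∈ Icc (-1 : ℝ) 1) (t : ℝ) :
    HasDerivAt (fun x => heatGamma x y t) (heatGammaDx x y t) x := by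
  rcases le_or_gt t 0 with ht | ht
  · simp only [heatGamma_of_nonpos _ _ ht, heatGammaDx_of_nonpos _ _ ht]
    exact hasDerivAt_const x 0
  · exact hasDerivAt_tsum_of_isPreconnected
      (((summable_exp_neg_natAbs_sub_two_div (mul_pos two_pos ht)).mul_left _).mul_left _)
      isOpen_Ioo isPreconnected_Ioo
      (fun k x _ => (hasDerivAt_heatK _ t).comp_sub_const x (neumannImage k y))
      (fun k x hx => abs_heatKDx_sub_neumannImage_le k ht ⟨le_rfl, le_rfl⟩
        (Ioo_subset_Icc_self hx) hy) hx (summable_heatK_sub_neumannImage x y t) hx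

lemma exists_abs_heatGammaDx_le {δ τ T : ℝ} (hδ : 0 < δ) (hτ : 0 < τ) (hT : 0 ≤ T) :
    ∃ M : ℝ, ∀ x y t : ℝ, x ∈ Icc (-1 : ℝ) 1 → y ∈ Icc (-1 : ℝ) 1 → t ≤ T →
      t ≤ 0 ∨ τ ≤ t ∨ δ ≤ |x - y| → |heatGammaDx x y t| ≤ M := by
  obtain ⟨C, hC, hfar⟩ := exists_norm_complexHeatGamma_le_mul (T := 2 * T) (pow_pos hδ 2)
  obtain ⟨A, hA, hold⟩ := exists_heatGamma_le (T := 2 * T) hδ hτ (by positivity)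
  refine ⟨4 * C * Real.sqrt T + 2 / Real.sqrt τ * A, fun x y t hx hy htT hcase => ?_⟩
  rcases le_or_gt t 0 with ht | ht
  · rw [heatGammaDx_of_nonpos _ _ ht, abs_zero]
    positivity
  refine (abs_heatGammaDx_le x y ht).trans ?_
  rcases hcase with ht' | hτt | hδxy
  · exact absurd ht ht'.not_gt
  · refine le_trans ?_ (le_add_of_nonneg_left (by positivity))
    have hnonneg := heatGamma_nonneg x y (2 * t)
    gcongr
    exact hold x y (2 * t) hx hy (by linarith) (Or.inr (Or.inl (by linarith)))
  · refine le_trans ?_ (le_add_of_nonneg_right (by positivity))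
    have hsq : δ ^ 2 ≤ (x - y) ^ 2 := by
      rw [← sq_abs (x - y)]
      gcongr
    have hlinear := hfar x y (2 * t) (by simpa using hx) hy (by linarith) (by linarith)
      (by simpa using hsq)
    rw [← heatGamma_eq_norm_complexHeatGamma] at hlinear
    have hsqrt : Real.sqrt t ^ 2 = t := Real.sq_sqrt ht.le
    calc 2 / Real.sqrt t * heatGamma x y (2 * t) ≤ 2 / Real.sqrt t * (C * (2 * t)) := by gcongr
      _ = 4 * C * Real.sqrt t := by
        nth_rewrite 2 [← hsqrt]
        field_simp
        ring
      _ ≤ 4 * C * Real.sqrt T := by gcongr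

lemma heatGammaDx_one (y t : ℝ) : heatGammaDx 1 y t = 0 := by
  have hodd : heatGammaDx 1 y t = -heatGammaDx 1 y t := by
    conv_lhs => rw [heatGammaDx, ← (Equiv.subLeft (1 : ℤ)).tsum_eq]
    rw [heatGammaDx, ← tsum_neg]
    refine tsum_congr fun k => ?_
    rw [Equiv.subLeft_apply, neumannImage_one_sub, ← heatKDx_neg]
    ring_nf
  linarith

/-! ### Heat content of an interval -/

/-- The primitive `∫_0^x K(u, t) du` of the heat kernel, as an integral of the profile at time `1`
over the self-similar variable `x / √t`. -/
noncomputable def heatKPrimitive (x t : ℝ) : ℝ := ∫ v in (0 : ℝ)..(x / Real.sqrt t), heatK v 1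

/-- The heat in `[c, 1]` at time `t` due to a unit source released at `y` at time `0`. -/
noncomputable def heatGammaMass (c y t : ℝ) : ℝ := ∫ x in c..1, heatGamma x y t

lemma continuous_heatK (t : ℝ) : Continuous (fun x => heatK x t) :=
  continuous_iff_continuousAt.2 fun x => (hasDerivAt_heatK x t).continuousAt

lemma heatK_div_sqrt_one (x : ℝ) {t : ℝ} (ht : 0 < t) :
    heatK (x / Real.sqrt t) 1 = Real.sqrt t * heatK x t := by
  have hsqrt : Real.sqrt t ≠ 0 := (Real.sqrt_pos.2 ht).ne'
  rw [heatK, heatK, div_pow, Real.sq_sqrt ht.le, Real.sqrt_mul (by positivity) t, mul_one, mul_one,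
    mul_inv]
  field_simp

lemma intervalIntegral_heatK (a b : ℝ) {t : ℝ} (ht : 0 < t) :
    ∫ x in a..b, heatK x t = heatKPrimitive b t - heatKPrimitive a t := by
  have hsqrt : Real.sqrt t ≠ 0 := (Real.sqrt_pos.2 ht).ne'
  have hint : ∀ u v : ℝ, IntervalIntegrable (fun v => heatK v 1) volume u v := fun u v =>
    (continuous_heatK 1).intervalIntegrable u v
  have hscale : ∀ x, heatK x t = (Real.sqrt t)⁻¹ * heatK (x / Real.sqrt t) 1 := fun x => by
    rw [heatK_div_sqrt_one x ht, inv_mul_cancel_left₀ hsqrt]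
  simp only [hscale]
  rw [heatKPrimitive, heatKPrimitive, intervalIntegral.integral_interval_sub_left (hint _ _)
    (hint _ _), intervalIntegral.integral_const_mul,
    intervalIntegral.integral_comp_div (fun v => heatK v 1) hsqrt, smul_eq_mul,
    inv_mul_cancel_left₀ hsqrt]

lemma hasDerivAt_heatKPrimitive (x : ℝ) {t : ℝ} (ht : 0 < t) :
    HasDerivAt (heatKPrimitive x) (heatKDx x t) t := by
  have hsqrtpos : 0 < Real.sqrt t := Real.sqrt_pos.2 ht
  have hinner : HasDerivAt (fun t => x / Real.sqrt t) (-x / (2 * t * Real.sqrt t)) t := by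
    refine ((Real.hasDerivAt_sqrt ht.ne').inv hsqrtpos.ne' |>.const_mul x).congr_deriv ?_
    rw [Real.sq_sqrt ht.le]
    field_simp
  have houter := (continuous_heatK 1).integral_hasStrictDerivAt 0 (x / Real.sqrt t)
  refine (houter.hasDerivAt.comp t hinner).congr_deriv ?_
  rw [heatK_div_sqrt_one x ht, heatKDx]
  field_simp

lemma hasSum_intervalIntegral_of_norm_le {ι E : Type*} [Countable ι] [NormedAddCommGroup E]
    [NormedSpace ℝ E] {F : ι → ℝ → E} {B : ι → ℝ} {a b : ℝ}
    (hF : ∀ k, AEStronglyMeasurable (F k) (volume.restrict (uIoc a b)))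
    (hB : Summable B) (hle : ∀ k, ∀ x ∈ uIoc a b, ‖F k x‖ ≤ B k)
    (hsum : ∀ x ∈ uIoc a b, Summable fun k => F k x) :
    HasSum (fun k => ∫ x in a..b, F k x) (∫ x in a..b, ∑' k, F k x) :=
  intervalIntegral.hasSum_integral_of_dominated_convergence (fun k _ => B k) hF
    (fun k => ae_of_all _ fun x hx => hle k x hx) (ae_of_all _ fun _ _ => hB)
    (by simp) (ae_of_all _ fun x hx => (hsum x hx).hasSum)

lemma hasSum_heatKPrimitive_sub {c y t : ℝ} (hc : c ∈ Ioo (-1 : ℝ) 1) (hy : y ∈ Icc (-1 : ℝ) 1)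
    (ht : 0 < t) :
    HasSum (fun k : ℤ => heatKPrimitive (1 - neumannImage k y) t
      - heatKPrimitive (c - neumannImage k y) t) (heatGammaMass c y t) := by
  have hmem : ∀ x ∈ uIoc c 1, x ∈ Icc (-1 : ℝ) 1 := fun x hx => by
    rw [uIoc_of_le hc.2.le] at hx
    exact ⟨hc.1.le.trans hx.1.le, hx.2⟩
  have hsum := hasSum_intervalIntegral_of_norm_le (a := c) (b := 1)
    (F := fun (k : ℤ) x => heatK (x - neumannImage k y) t)
    (fun k => ((continuous_heatK t).comp (continuous_sub_right _)).aestronglyMeasurable)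
    ((summable_exp_neg_natAbs_sub_two_div ht).mul_left _)
    (fun k x hx => by
      rw [Real.norm_of_nonneg (heatK_nonneg _ _)]
      exact heatK_sub_neumannImage_le k ht ⟨le_rfl, le_rfl⟩ (hmem x hx) hy)
    (fun x _ => summable_heatK_sub_neumannImage x y t)
  simpa only [intervalIntegral.integral_comp_sub_right (fun x => heatK x t),
    intervalIntegral_heatK _ _ ht, ← heatGamma_eq_tsum, heatGammaMass] using hsum

lemma heatGammaMass_of_nonpos (c y : ℝ) {t : ℝ} (ht : t ≤ 0) : heatGammaMass c y t = 0 := by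
  simp only [heatGammaMass, heatGamma_of_nonpos _ _ ht, intervalIntegral.integral_zero]

lemma hasDerivAt_heatGammaMass {c y t : ℝ} (hc : c ∈ Ioo (-1 : ℝ) 1) (hy : y ∈ Icc (-1 : ℝ) 1)
    (ht : 0 < t) : HasDerivAt (heatGammaMass c y) (-heatGammaDx c y t) t := by
  have hcIcc := Ioo_subset_Icc_self hc
  have htmem : t ∈ Ioo (t / 2) (2 * t) := ⟨by linarith, by linarith⟩
  have hbound := (summable_exp_neg_natAbs_sub_two_div (T := 2 * (2 * t)) (by positivity)).mul_left
    ((Real.sqrt (4 * Real.pi * (2 * (t / 2))))⁻¹) |>.mul_left (2 / Real.sqrt (t / 2))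
  have hderiv := hasDerivAt_tsum_of_isPreconnected (hbound.add hbound)
    (isOpen_Ioo (a := t / 2) (b := 2 * t)) isPreconnected_Ioo
    (g := fun (k : ℤ) t => heatKPrimitive (1 - neumannImage k y) t
      - heatKPrimitive (c - neumannImage k y) t)
    (g' := fun k t => heatKDx (1 - neumannImage k y) t - heatKDx (c - neumannImage k y) t)
    (fun k s hs => (hasDerivAt_heatKPrimitive _ (by linarith [hs.1])).sub
      (hasDerivAt_heatKPrimitive _ (by linarith [hs.1])))
    (fun k s hs => (norm_sub_le _ _).trans (add_le_add
      (abs_heatKDx_sub_neumannImage_le k (by positivity) (Ioo_subset_Icc_self hs) (by simp) hy)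
      (abs_heatKDx_sub_neumannImage_le k (by positivity) (Ioo_subset_Icc_self hs) hcIcc hy)))
    htmem (hasSum_heatKPrimitive_sub hc hy ht).summable htmem
  rw [(summable_heatKDx_sub_neumannImage 1 y t).tsum_sub (summable_heatKDx_sub_neumannImage c y t),
    ← heatGammaDx, ← heatGammaDx, heatGammaDx_one, zero_sub] at hderiv
  refine hderiv.congr_of_eventuallyEq ?_
  filter_upwards [lt_mem_nhds ht] with s hs
  exact (hasSum_heatKPrimitive_sub hc hy hs).tsum_eq.symm

lemma intervalIntegrable_heatGamma_left (a b y t : ℝ) (ha : a ∈ Icc (-1 : ℝ) 1)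
    (hb : b ∈ Icc (-1 : ℝ) 1) : IntervalIntegrable (fun x => heatGamma x y t) volume a b := by
  rw [intervalIntegrable_iff]
  exact (integrableOn_heatGamma_left y t).mono_set
    (Ioc_subset_Ioc (le_min ha.1 hb.1) (max_le ha.2 hb.2))

lemma exists_abs_intervalIntegral_heatGamma_le {δ T : ℝ} (hδ : 0 < δ) : ∃ C : ℝ,
    ∀ a b y t : ℝ, -1 ≤ a → a ≤ b → b ≤ 1 → y ∈ Icc (-1 : ℝ) 1 → 0 < t → t ≤ T →
      (∀ x ∈ Icc a b, δ ≤ |x - y|) → |∫ x in a..b, heatGamma x y t| ≤ C * t := by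
  obtain ⟨C, hC, hfar⟩ := exists_norm_complexHeatGamma_le_mul (T := T) (pow_pos hδ 2)
  refine ⟨C * 2, fun a b y t ha hab hb hy ht htT hsep => ?_⟩
  have hle : ∀ x ∈ uIoc a b, ‖heatGamma x y t‖ ≤ C * t := fun x hx => by
    rw [uIoc_of_le hab] at hx
    have hsq : δ ^ 2 ≤ (x - y) ^ 2 := by
      rw [← sq_abs (x - y)]
      exact pow_le_pow_left₀ hδ.le (hsep x (Ioc_subset_Icc_self hx)) 2
    rw [Real.norm_of_nonneg (heatGamma_nonneg _ _ _), heatGamma_eq_norm_complexHeatGamma]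
    exact hfar x y t (by simpa using ⟨ha.trans hx.1.le, hx.2.trans hb⟩) hy ht htT
      (by simpa using hsq)
  refine (intervalIntegral.norm_integral_le_of_norm_le_const hle).trans ?_
  have habs : |b - a| ≤ 2 := by
    rw [abs_of_nonneg (sub_nonneg.2 hab)]
    linarith
  nlinarith [mul_nonneg hC ht.le]

lemma tendsto_heatGammaMass {c y : ℝ} (hc : c ∈ Ioo (-1 : ℝ) 1) (hy : y ∈ Icc (-1 : ℝ) 1)
    (hyc : y ≠ c) :
    Tendsto (heatGammaMass c y) (𝓝[>] 0) (𝓝 (if c < y then 1 else 0)) := by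
  obtain ⟨C, hC⟩ := exists_abs_intervalIntegral_heatGamma_le (T := 1)
    (abs_pos.2 (sub_ne_zero.2 hyc))
  have hlin : Tendsto (fun t : ℝ => C * t) (𝓝[>] 0) (𝓝 0) := by
    simpa using (tendsto_id.const_mul C : Tendsto _ (𝓝 (0 : ℝ)) _).mono_left nhdsWithin_le_nhds
  refine tendsto_iff_norm_sub_tendsto_zero.2 (squeeze_zero' (.of_forall fun _ => norm_nonneg _)
    ?_ hlin)
  filter_upwards [Ioo_mem_nhdsGT (zero_lt_one (α := ℝ))] with t ht
  rw [Real.norm_eq_abs]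
  rcases hyc.lt_or_gt with hlt | hgt
  · rw [if_neg hlt.not_gt, sub_zero]
    refine hC c 1 y t hc.1.le hc.2.le le_rfl hy ht.1 ht.2.le fun x hx => ?_
    rw [abs_of_neg (sub_neg.2 hlt), abs_of_pos] <;> linarith [hx.1]
  · have htotal : ∫ x in (-1 : ℝ)..1, heatGamma x y t = 1 := by
      rw [intervalIntegral.integral_of_le (by norm_num)]
      simpa only [heatGamma_symm _ y] using setIntegral_heatGamma y ht.1
    have hsplit := intervalIntegral.integral_add_adjacent_intervals
      (intervalIntegrable_heatGamma_left (-1) c y t (by simp) (Ioo_subset_Icc_self hc))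
      (intervalIntegrable_heatGamma_left c 1 y t (Ioo_subset_Icc_self hc) (by simp))
    have hcompl : heatGammaMass c y t - 1 = -∫ x in (-1 : ℝ)..c, heatGamma x y t := by
      rw [heatGammaMass]
      linarith
    rw [if_pos hgt, hcompl, abs_neg]
    refine hC (-1) c y t le_rfl hc.1.le hc.2.le hy ht.1 ht.2.le fun x hx => ?_
    rw [abs_of_pos (sub_pos.2 hgt), abs_of_neg] <;> linarith [hx.2]

lemma intervalIntegrable_heatGammaDx {c y τ T : ℝ} (hc : c ∈ Icc (-1 : ℝ) 1)
    (hy : y ∈ Icc (-1 : ℝ) 1) (hτT : τ ≤ T) (h : 0 < τ ∨ y ≠ c) :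
    IntervalIntegrable (heatGammaDx c y) volume τ T := by
  obtain ⟨M, hM⟩ : ∃ M : ℝ, ∀ t ∈ Icc τ T, |heatGammaDx c y t| ≤ M := by
    rcases h with hτ | hyc
    · obtain ⟨M, hM⟩ := exists_abs_heatGammaDx_le one_pos hτ (hτ.le.trans hτT)
      exact ⟨M, fun t ht => hM c y t hc hy ht.2 (Or.inr (Or.inl ht.1))⟩
    · obtain ⟨M, hM⟩ := exists_abs_heatGammaDx_le (T := max T 0)
        (abs_pos.2 (sub_ne_zero.2 hyc.symm)) one_pos (le_max_right _ _)
      exact ⟨M, fun t ht => hM c y t hc hy (ht.2.trans (le_max_left _ _)) (Or.inr (Or.inr le_rfl))⟩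
  rw [intervalIntegrable_iff, uIoc_of_le hτT]
  exact Measure.integrableOn_of_bounded (M := M) measure_Ioc_lt_top.ne
    (measurable_heatGammaDx.comp (f := fun t : ℝ => (c, y, t)) (by fun_prop)).aestronglyMeasurable
    ((ae_restrict_mem measurableSet_Ioc).mono fun t ht => hM t (Ioc_subset_Icc_self ht))

lemma heatGammaMass_sub_of_pos {c y τ₁ τ₂ : ℝ} (hc : c ∈ Ioo (-1 : ℝ) 1) (hy : y ∈ Icc (-1 : ℝ) 1)
    (hτ₁ : 0 < τ₁) (hτ : τ₁ ≤ τ₂) :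
    heatGammaMass c y τ₂ - heatGammaMass c y τ₁ = -∫ σ in τ₁..τ₂, heatGammaDx c y σ := by
  rw [← intervalIntegral.integral_neg, intervalIntegral.integral_eq_sub_of_hasDerivAt]
  · intro σ hσ
    rw [uIcc_of_le hτ] at hσ
    exact hasDerivAt_heatGammaMass hc hy (hτ₁.trans_le hσ.1)
  · exact (intervalIntegrable_heatGammaDx (Ioo_subset_Icc_self hc) hy hτ (Or.inl hτ₁)).neg

lemma heatGammaMass_eq {c y : ℝ} (hc : c ∈ Ioo (-1 : ℝ) 1) (hy : y ∈ Icc (-1 : ℝ) 1)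
    (hyc : y ≠ c) {τ : ℝ} (hτ : 0 < τ) :
    heatGammaMass c y τ = (if c < y then 1 else 0) - ∫ σ in (0 : ℝ)..τ, heatGammaDx c y σ := by
  have hftc := intervalIntegral.integral_eq_sub_of_hasDerivAt_of_tendsto hτ
    (fun σ hσ => hasDerivAt_heatGammaMass hc hy hσ.1)
    (intervalIntegrable_heatGammaDx (Ioo_subset_Icc_self hc) hy hτ.le (Or.inr hyc)).neg
    (tendsto_heatGammaMass hc hy hyc)
    ((hasDerivAt_heatGammaMass hc hy hτ).continuousAt.mono_left nhdsWithin_le_nhds)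
  rw [intervalIntegral.integral_neg] at hftc
  linarith

lemma heatGammaMass_sub {c y s t₁ t₂ : ℝ} (hc : c ∈ Ioo (-1 : ℝ) 1) (hy : y ∈ Icc (-1 : ℝ) 1)
    (ht : t₁ ≤ t₂) (hyc : t₁ ≤ s → s < t₂ → y ≠ c) :
    heatGammaMass c y (t₂ - s) - heatGammaMass c y (t₁ - s)
      = (if t₁ ≤ s ∧ s < t₂ ∧ c < y then 1 else 0)
        - ∫ σ in t₁..t₂, heatGammaDx c y (σ - s) := by
  rw [intervalIntegral.integral_comp_sub_right (heatGammaDx c y)]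
  rcases lt_or_ge s t₁ with hs₁ | hs₁
  · rw [heatGammaMass_sub_of_pos hc hy (sub_pos.2 hs₁) (sub_le_sub_right ht s),
      if_neg fun h => hs₁.not_ge h.1, zero_sub]
  rw [heatGammaMass_of_nonpos c y (sub_nonpos.2 hs₁), sub_zero]
  have hvanish : ∀ b ≤ (0 : ℝ), ∫ σ in (t₁ - s)..b, heatGammaDx c y σ = 0 := fun b hb =>
    intervalIntegral.integral_zero_ae (ae_of_all _ fun σ hσ =>
      heatGammaDx_of_nonpos c y (hσ.2.trans (max_le (sub_nonpos.2 hs₁) hb)))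
  rcases lt_or_ge s t₂ with hs₂ | hs₂
  · have hyc := hyc hs₁ hs₂
    have hint : ∀ {τ T : ℝ}, τ ≤ T → IntervalIntegrable (heatGammaDx c y) volume τ T := fun hτT =>
      intervalIntegrable_heatGammaDx (Ioo_subset_Icc_self hc) hy hτT (Or.inr hyc)
    rw [heatGammaMass_eq hc hy hyc (sub_pos.2 hs₂),
      ← intervalIntegral.integral_add_adjacent_intervals (hint (sub_nonpos.2 hs₁))
        (hint (sub_nonneg.2 hs₂.le)), hvanish 0 le_rfl, zero_add]
    simp only [hs₁, hs₂, true_and]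
  · rw [heatGammaMass_of_nonpos c y (sub_nonpos.2 hs₂), hvanish _ (sub_nonpos.2 hs₂),
      if_neg fun h => hs₂.not_gt h.2.1, sub_zero]

/-! ### Potentials of heat sources -/

/-- A distribution of heat sources on `[-1, 1]`: a measure on triples
`(position, release time, charge)`, the charge being a coordinate, so that it may have either sign,
while the measure itself is nonnegative. -/
structure IsHeatSource (ρ : Measure (ℝ × ℝ × ℝ)) : Prop where
  integrable_charge : Integrable (fun ω => ω.2.2) ρ
  position_mem : ∀ᵐ ω ∂ρ, ω.1 ∈ Icc (-1 : ℝ) 1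
  time_nonneg : ∀ᵐ ω ∂ρ, 0 ≤ ω.2.1

/-- The temperature at `(x, t)` due to the source `ω = (position, release time, charge)`. -/
noncomputable def heatSourceKernel (x t : ℝ) (ω : ℝ × ℝ × ℝ) : ℝ :=
  ω.2.2 * heatGamma x ω.1 (t - ω.2.1)

/-- The temperature at `(x, t)` due to the source distribution `ρ`. -/
noncomputable def heatPotential (ρ : Measure (ℝ × ℝ × ℝ)) (x t : ℝ) : ℝ :=
  ∫ ω, heatSourceKernel x t ω ∂ρ

/-- `u` is the temperature profile at time `t` of the source distribution `ρ`, tested only at the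
points where the potential converges absolutely: elsewhere the Bochner integral is the junk
value `0`. -/
def IsPotentialAt (ρ : Measure (ℝ × ℝ × ℝ)) (t : ℝ) (u : ℝ → ℝ) : Prop :=
  ∀ x ∈ Icc (-1 : ℝ) 1, Integrable (heatSourceKernel x t) ρ → u x = heatPotential ρ x t

/-- The sources releasing the temperature profile `g` on `[-1, 1]` at time `s`. -/
noncomputable def releaseAt (s : ℝ) (g : ℝ → ℝ) : Measure (ℝ × ℝ × ℝ) :=
  (volume.restrict (Ioc (-1 : ℝ) 1)).map fun y => (y, s, g y)

/-- The source moving along the curve `γ` during `(0, T)` with emission rate `q`. -/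
noncomputable def releaseAlong (γ q : ℝ → ℝ) (T : ℝ) : Measure (ℝ × ℝ × ℝ) :=
  (volume.restrict (Ioo (0 : ℝ) T)).map fun s => (γ s, s, q s)

lemma measurable_heatSourceKernel_uncurry (t : ℝ) :
    Measurable (fun z : ℝ × ℝ × ℝ × ℝ => heatSourceKernel z.1 t z.2) := by
  have hmap : Measurable fun z : ℝ × ℝ × ℝ × ℝ => (z.1, z.2.1, t - z.2.2.1) := by fun_prop
  exact measurable_snd.snd.snd.mul (measurable_heatGamma.comp hmap)

lemma measurable_heatSourceKernel (x t : ℝ) : Measurable (heatSourceKernel x t) :=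
  (measurable_heatSourceKernel_uncurry t).comp measurable_prodMk_left

lemma abs_heatSourceKernel (x t : ℝ) (ω : ℝ × ℝ × ℝ) :
    |heatSourceKernel x t ω| = |ω.2.2| * heatGamma x ω.1 (t - ω.2.1) := by
  rw [heatSourceKernel, abs_mul, abs_of_nonneg (heatGamma_nonneg _ _ _)]

lemma integral_norm_heatSourceKernel_le (t : ℝ) (ω : ℝ × ℝ × ℝ) :
    ∫ x in Ioc (-1 : ℝ) 1, ‖heatSourceKernel x t ω‖ ≤ |ω.2.2| := by
  simp only [Real.norm_eq_abs, abs_heatSourceKernel, integral_const_mul]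
  exact mul_le_of_le_one_right (abs_nonneg _) (setIntegral_heatGamma_left_le _ _)

lemma integral_heatSourceKernel_Ioc (t : ℝ) {c : ℝ} (hc : c ≤ 1) (ω : ℝ × ℝ × ℝ) :
    ∫ x in Ioc c 1, heatSourceKernel x t ω = ω.2.2 * heatGammaMass c ω.1 (t - ω.2.1) := by
  simp only [heatSourceKernel, integral_const_mul, heatGammaMass,
    intervalIntegral.integral_of_le hc]

instance (s : ℝ) (g : ℝ → ℝ) : SFinite (releaseAt s g) := by
  unfold releaseAt; infer_instance

instance (γ q : ℝ → ℝ) (T : ℝ) : SFinite (releaseAlong γ q T) := by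
  unfold releaseAlong; infer_instance

section Map

variable {α : Type*} [MeasurableSpace α] {μ : Measure α} {φ : α → ℝ × ℝ × ℝ}

lemma isHeatSource_map (hφ : AEMeasurable φ μ) (hcharge : Integrable (fun a => (φ a).2.2) μ)
    (hpos : ∀ᵐ a ∂μ, (φ a).1 ∈ Icc (-1 : ℝ) 1) (htime : ∀ᵐ a ∂μ, 0 ≤ (φ a).2.1) :
    IsHeatSource (μ.map φ) where
  integrable_charge :=
    (integrable_map_measure measurable_snd.snd.aestronglyMeasurable hφ).2 hcharge
  position_mem := (ae_map_iff hφ (measurable_fst measurableSet_Icc)).2 hpos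
  time_nonneg := (ae_map_iff hφ (measurable_snd.fst measurableSet_Ici)).2 htime

lemma integrable_heatSourceKernel_map (hφ : AEMeasurable φ μ) (x t : ℝ) :
    Integrable (heatSourceKernel x t) (μ.map φ)
      ↔ Integrable (fun a => heatSourceKernel x t (φ a)) μ :=
  integrable_map_measure (measurable_heatSourceKernel x t).aestronglyMeasurable hφ

lemma heatPotential_map (hφ : AEMeasurable φ μ) (x t : ℝ) :
    heatPotential (μ.map φ) x t = ∫ a, heatSourceKernel x t (φ a) ∂μ :=
  integral_map hφ (measurable_heatSourceKernel x t).aestronglyMeasurable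

end Map

namespace IsHeatSource

variable {ρ ν : Measure (ℝ × ℝ × ℝ)} {t : ℝ}

lemma add (hρ : IsHeatSource ρ) (hν : IsHeatSource ν) : IsHeatSource (ρ + ν) where
  integrable_charge := hρ.integrable_charge.add_measure hν.integrable_charge
  position_mem := ae_add_measure_iff.2 ⟨hρ.position_mem, hν.position_mem⟩
  time_nonneg := ae_add_measure_iff.2 ⟨hρ.time_nonneg, hν.time_nonneg⟩

lemma restrict (hρ : IsHeatSource ρ) (A : Set (ℝ × ℝ × ℝ)) : IsHeatSource (ρ.restrict A) where
  integrable_charge := hρ.integrable_charge.restrict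
  position_mem := ae_restrict_of_ae hρ.position_mem
  time_nonneg := ae_restrict_of_ae hρ.time_nonneg

lemma integrable_heatSourceKernel_of_le (hρ : IsHeatSource ρ) {x M : ℝ}
    (hM : ∀ᵐ ω ∂ρ, heatGamma x ω.1 (t - ω.2.1) ≤ M) : Integrable (heatSourceKernel x t) ρ := by
  refine (hρ.integrable_charge.abs.mul_const M).mono'
    (measurable_heatSourceKernel x t).aestronglyMeasurable ?_
  filter_upwards [hM] with ω hω
  rw [Real.norm_eq_abs, abs_heatSourceKernel]
  gcongr

variable [SFinite ρ]

lemma integrable_heatSourceKernel_prod (hρ : IsHeatSource ρ) (t : ℝ) :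
    Integrable (fun z : ℝ × ℝ × ℝ × ℝ => heatSourceKernel z.1 t z.2)
      ((volume.restrict (Ioc (-1 : ℝ) 1)).prod ρ) := by
  refine (integrable_prod_iff'
    (measurable_heatSourceKernel_uncurry t).aestronglyMeasurable).2 ⟨?_, ?_⟩
  · exact .of_forall fun ω => (integrableOn_heatGamma_left ω.1 (t - ω.2.1)).const_mul ω.2.2
  · have hmeas : AEStronglyMeasurable
        (fun ω => ∫ x in Ioc (-1 : ℝ) 1, ‖heatSourceKernel x t ω‖) ρ :=
      (measurable_heatSourceKernel_uncurry t).norm.stronglyMeasurable.integral_prod_left'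
        |>.aestronglyMeasurable
    refine hρ.integrable_charge.abs.mono' hmeas (.of_forall fun ω => ?_)
    rw [Real.norm_of_nonneg (integral_nonneg fun _ => norm_nonneg _)]
    exact integral_norm_heatSourceKernel_le t ω

lemma ae_integrable_heatSourceKernel (hρ : IsHeatSource ρ) (t : ℝ) :
    ∀ᵐ x ∂volume.restrict (Ioc (-1 : ℝ) 1), Integrable (heatSourceKernel x t) ρ :=
  (hρ.integrable_heatSourceKernel_prod t).prod_right_ae

lemma integrable_heatSourceKernel_prod_Ioc (hρ : IsHeatSource ρ) (t : ℝ) {c : ℝ}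
    (hc : -1 ≤ c) : Integrable (fun z : ℝ × ℝ × ℝ × ℝ => heatSourceKernel z.1 t z.2)
      ((volume.restrict (Ioc c 1)).prod ρ) :=
  (hρ.integrable_heatSourceKernel_prod t).mono_measure
    (Measure.prod_mono (Measure.restrict_mono (Ioc_subset_Ioc_left hc) le_rfl) le_rfl)

lemma integrable_charge_mul_heatGammaMass (hρ : IsHeatSource ρ) (t : ℝ) {c : ℝ}
    (hc : c ∈ Icc (-1 : ℝ) 1) :
    Integrable (fun ω => ω.2.2 * heatGammaMass c ω.1 (t - ω.2.1)) ρ := by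
  simpa only [integral_heatSourceKernel_Ioc t hc.2] using
    (hρ.integrable_heatSourceKernel_prod_Ioc t hc.1).integral_prod_right

end IsHeatSource

namespace IsPotentialAt

variable {ρ : Measure (ℝ × ℝ × ℝ)} [SFinite ρ] {t : ℝ} {u : ℝ → ℝ}

lemma ae_eq (hu : IsPotentialAt ρ t u) (hρ : IsHeatSource ρ) :
    u =ᵐ[volume.restrict (Ioc (-1 : ℝ) 1)] fun x => heatPotential ρ x t := by
  filter_upwards [hρ.ae_integrable_heatSourceKernel t, ae_restrict_mem measurableSet_Ioc]
    with x hint hx using hu x (Ioc_subset_Icc_self hx) hint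

lemma integrableOn (hu : IsPotentialAt ρ t u) (hρ : IsHeatSource ρ) :
    IntegrableOn u (Ioc (-1 : ℝ) 1) :=
  (hρ.integrable_heatSourceKernel_prod t).integral_prod_left.congr (hu.ae_eq hρ).symm

lemma integral_abs_le (hu : IsPotentialAt ρ t u) (hρ : IsHeatSource ρ) :
    ∫ x in Ioc (-1 : ℝ) 1, |u x| ≤ ∫ ω, |ω.2.2| ∂ρ := by
  have hprod := (hρ.integrable_heatSourceKernel_prod t).norm
  calc ∫ x in Ioc (-1 : ℝ) 1, |u x|
    _ ≤ ∫ x in Ioc (-1 : ℝ) 1, (∫ ω, ‖heatSourceKernel x t ω‖ ∂ρ) := by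
      refine integral_mono_ae (hu.integrableOn hρ).abs hprod.integral_prod_left ?_
      filter_upwards [hu.ae_eq hρ] with x hx
      exact (congrArg abs hx).le.trans (norm_integral_le_integral_norm (heatSourceKernel x t))
    _ = ∫ ω, (∫ x in Ioc (-1 : ℝ) 1, ‖heatSourceKernel x t ω‖) ∂ρ :=
      integral_integral_swap hprod
    _ ≤ ∫ ω, |ω.2.2| ∂ρ :=
      integral_mono hprod.integral_prod_right hρ.integrable_charge.abs
        fun ω => integral_norm_heatSourceKernel_le t ω

lemma intervalIntegral_eq (hu : IsPotentialAt ρ t u) (hρ : IsHeatSource ρ) {c : ℝ}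
    (hc : c ∈ Icc (-1 : ℝ) 1) :
    ∫ x in c..1, u x = ∫ ω, ω.2.2 * heatGammaMass c ω.1 (t - ω.2.1) ∂ρ := by
  have hsub : Ioc c 1 ⊆ Ioc (-1 : ℝ) 1 := Ioc_subset_Ioc_left hc.1
  rw [intervalIntegral.integral_of_le hc.2,
    integral_congr_ae (ae_restrict_of_ae_restrict_of_subset hsub (hu.ae_eq hρ))]
  simp only [heatPotential]
  rw [integral_integral_swap (hρ.integrable_heatSourceKernel_prod_Ioc t hc.1)]
  simp only [integral_heatSourceKernel_Ioc t hc.2]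

end IsPotentialAt

section Release

variable {s : ℝ} {g : ℝ → ℝ}

lemma aemeasurable_releaseAt (hg : IntegrableOn g (Ioc (-1 : ℝ) 1)) (s : ℝ) :
    AEMeasurable (fun y => (y, s, g y)) (volume.restrict (Ioc (-1 : ℝ) 1)) :=
  aemeasurable_id.prodMk (aemeasurable_const.prodMk hg.aemeasurable)

lemma isHeatSource_releaseAt (hs : 0 ≤ s) (hg : IntegrableOn g (Ioc (-1 : ℝ) 1)) :
    IsHeatSource (releaseAt s g) :=
  isHeatSource_map (aemeasurable_releaseAt hg s) hg
    ((ae_restrict_mem measurableSet_Ioc).mono fun _ hy => Ioc_subset_Icc_self hy)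
    (.of_forall fun _ => hs)

lemma heatPotential_releaseAt (hg : IntegrableOn g (Ioc (-1 : ℝ) 1)) (s x t : ℝ) :
    heatPotential (releaseAt s g) x t = ∫ y in Ioc (-1 : ℝ) 1, g y * heatGamma x y (t - s) :=
  heatPotential_map (aemeasurable_releaseAt hg s) x t

end Release

section Restart

variable {ρ : Measure (ℝ × ℝ × ℝ)} {s t : ℝ} {x : ℝ}

lemma measurableSet_setOf_time_lt (s : ℝ) : MeasurableSet {ω : ℝ × ℝ × ℝ | ω.2.1 < s} :=
  measurable_snd.fst measurableSet_Iio

lemma exists_heatGamma_le_of_sub_pos (hx : x ∈ Icc (-1 : ℝ) 1) {τ T : ℝ} (hτ : 0 < τ)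
    (hT : 0 ≤ T) : ∃ M, ∀ y ∈ Icc (-1 : ℝ) 1, ∀ r ∈ Icc τ T, heatGamma x y r ≤ M := by
  obtain ⟨M, -, hM⟩ := exists_heatGamma_le one_pos hτ hT
  exact ⟨M, fun y hy r hr => hM x y r hx hy hr.2 (.inr (.inl hr.1))⟩

lemma integrable_heatSourceKernel_of_time_lt (hρ : IsHeatSource ρ) (hst : s < t) (ht : 0 ≤ t)
    (hx : x ∈ Icc (-1 : ℝ) 1) (hpast : ∀ᵐ ω ∂ρ, ω.2.1 < s) :
    Integrable (heatSourceKernel x t) ρ := by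
  obtain ⟨M, hM⟩ := exists_heatGamma_le_of_sub_pos hx (sub_pos.2 hst) ht
  refine hρ.integrable_heatSourceKernel_of_le (M := M) ?_
  filter_upwards [hρ.position_mem, hρ.time_nonneg, hpast] with ω hpos htime hpast
  exact hM _ hpos _ ⟨by linarith, by linarith⟩

lemma integral_heatPotential_mul_heatGamma [SFinite ρ] (hρ : IsHeatSource ρ) (hst : s < t)
    (hx : x ∈ Icc (-1 : ℝ) 1) (hpast : ∀ᵐ ω ∂ρ, ω.2.1 < s) :
    ∫ y in Ioc (-1 : ℝ) 1, heatPotential ρ y s * heatGamma x y (t - s) = heatPotential ρ x t := by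
  obtain ⟨M, hM⟩ := exists_heatGamma_le_of_sub_pos hx (sub_pos.2 hst) (sub_pos.2 hst).le
  have hbound : ∀ᵐ z ∂(volume.restrict (Ioc (-1 : ℝ) 1)).prod ρ,
      ‖heatGamma x z.1 (t - s)‖ ≤ M := by
    refine Measure.quasiMeasurePreserving_fst.ae (p := fun y => ‖heatGamma x y (t - s)‖ ≤ M) ?_
    filter_upwards [ae_restrict_mem measurableSet_Ioc] with y hy
    rw [Real.norm_of_nonneg (heatGamma_nonneg _ _ _)]
    exact hM y (Ioc_subset_Icc_self hy) _ ⟨le_rfl, le_rfl⟩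
  have hmeas : Measurable fun z : ℝ × ℝ × ℝ × ℝ => heatGamma x z.1 (t - s) :=
    (measurable_heatGamma_right x (t - s)).comp measurable_fst
  have hprod := (hρ.integrable_heatSourceKernel_prod s).mul_bdd hmeas.aestronglyMeasurable hbound
  simp only [heatPotential, ← integral_mul_const]
  rw [integral_integral_swap hprod]
  refine integral_congr_ae (hpast.mono fun ω hω => ?_)
  have hkernel := setIntegral_heatGamma_mul_heatGamma x ω.1 (sub_pos.2 hst) (sub_pos.2 hω)
  rw [show t - s + (s - ω.2.1) = t - ω.2.1 by ring] at hkernel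
  simp only [heatSourceKernel]
  rw [← hkernel, ← integral_const_mul]
  congr 1 with y
  ring

lemma heatPotential_restrict_time_lt (ρ : Measure (ℝ × ℝ × ℝ)) (x s : ℝ) :
    heatPotential (ρ.restrict {ω | ω.2.1 < s}) x s = heatPotential ρ x s := by
  refine setIntegral_eq_integral_of_forall_compl_eq_zero fun ω hω => ?_
  rw [heatSourceKernel, heatGamma_of_nonpos _ _ (sub_nonpos.2 (not_lt.1 hω)), mul_zero]

lemma IsPotentialAt.restart [SFinite ρ] (hρ : IsHeatSource ρ) (hs : 0 ≤ s) (hst : s < t)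
    {u v : ℝ → ℝ} (hu : IsPotentialAt ρ s u) (hv : IsPotentialAt ρ t v) :
    IsPotentialAt (releaseAt s u + ρ.restrict {ω | s ≤ ω.2.1}) t v := by
  intro x hx hint
  set past := ρ.restrict {ω | ω.2.1 < s}
  have hsplit : past + ρ.restrict {ω | s ≤ ω.2.1} = ρ := by
    simpa only [compl_ofPred, not_lt] using
      Measure.restrict_add_restrict_compl (μ := ρ) (measurableSet_setOf_time_lt s)
  have hpast : ∀ᵐ ω ∂past, ω.2.1 < s := ae_restrict_mem (measurableSet_setOf_time_lt s)
  have hint_past : Integrable (heatSourceKernel x t) past :=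
    integrable_heatSourceKernel_of_time_lt (hρ.restrict _) hst (hs.trans hst.le) hx hpast
  have hint_new := (integrable_add_measure.1 hint).2
  calc v x = heatPotential (past + ρ.restrict {ω | s ≤ ω.2.1}) x t := by
        rw [hsplit]
        exact hv x hx (hsplit ▸ hint_past.add_measure hint_new)
    _ = heatPotential past x t + heatPotential (ρ.restrict {ω | s ≤ ω.2.1}) x t :=
        integral_add_measure hint_past hint_new
    _ = heatPotential (releaseAt s u) x t
          + heatPotential (ρ.restrict {ω | s ≤ ω.2.1}) x t := by
        rw [heatPotential_releaseAt (hu.integrableOn hρ),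
          ← integral_heatPotential_mul_heatGamma (hρ.restrict _) hst hx hpast]
        congr 1
        refine integral_congr_ae ((hu.ae_eq hρ).mono fun y hy => ?_)
        simp only [heatPotential_restrict_time_lt, hy]
    _ = heatPotential (releaseAt s u + ρ.restrict {ω | s ≤ ω.2.1}) x t :=
        (integral_add_measure (integrable_add_measure.1 hint).1 hint_new).symm

end Restart

section Regularity

variable {ρ : Measure (ℝ × ℝ × ℝ)} {t : ℝ} {u : ℝ → ℝ} {U : Set ℂ}

/-- The holomorphic extension of `heatPotential ρ · t`. -/
noncomputable def complexHeatPotential (ρ : Measure (ℝ × ℝ × ℝ)) (z : ℂ) (t : ℝ) : ℂ :=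
  ∫ ω, (ω.2.2 : ℂ) * complexHeatGamma z ω.1 (t - ω.2.1) ∂ρ

/-- A complex domain on which the heat kernels of the sources `ρ` are uniformly bounded at
time `t`, so that the potential of `ρ` extends holomorphically to it. -/
structure IsHolomorphyDomain (ρ : Measure (ℝ × ℝ × ℝ)) (t : ℝ) (U : Set ℂ) : Prop where
  isOpen : IsOpen U
  subset : U ⊆ Ioo (-1 : ℝ) 1 ×ℂ Ioo (-1 : ℝ) 1
  exists_bound : ∃ M, ∀ᵐ ω ∂ρ, ∀ z ∈ U, ‖complexHeatGamma z ω.1 (t - ω.2.1)‖ ≤ M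

lemma measurable_complexHeatGamma_sub (z : ℂ) (t : ℝ) :
    Measurable fun ω : ℝ × ℝ × ℝ => complexHeatGamma z ω.1 (t - ω.2.1) := by
  have hmap : Measurable fun ω : ℝ × ℝ × ℝ => (ω.1, t - ω.2.1) := by fun_prop
  exact (measurable_complexHeatGamma z).comp hmap

namespace IsHolomorphyDomain

lemma differentiableOn_complexHeatPotential (hU : IsHolomorphyDomain ρ t U)
    (hρ : IsHeatSource ρ) : DifferentiableOn ℂ (fun z => complexHeatPotential ρ z t) U := by
  obtain ⟨M, hM⟩ := hU.exists_bound
  refine differentiableOn_integral_of_norm_le hU.isOpen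
    (hρ.integrable_charge.abs.mul_const M) (fun z _ => ?_) ?_ ?_
  · exact ((Complex.measurable_ofReal.comp measurable_snd.snd).mul
      (measurable_complexHeatGamma_sub z t)).aestronglyMeasurable
  · filter_upwards [hρ.position_mem] with ω hω
    exact ((differentiableOn_complexHeatGamma hω _).mono hU.subset).const_mul _
  · filter_upwards [hM] with ω hω z hz
    rw [norm_mul, Complex.norm_real, Real.norm_eq_abs]
    exact mul_le_mul_of_nonneg_left (hω z hz) (abs_nonneg _)

lemma integrable_heatSourceKernel (hU : IsHolomorphyDomain ρ t U) (hρ : IsHeatSource ρ) {x : ℝ}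
    (hx : (x : ℂ) ∈ U) : Integrable (heatSourceKernel x t) ρ := by
  obtain ⟨M, hM⟩ := hU.exists_bound
  refine hρ.integrable_heatSourceKernel_of_le (M := M) (hM.mono fun ω hω => ?_)
  rw [heatGamma_eq_norm_complexHeatGamma]
  exact hω x hx

lemma eq_re_complexHeatPotential (hU : IsHolomorphyDomain ρ t U) (hρ : IsHeatSource ρ)
    (hu : IsPotentialAt ρ t u) {x : ℝ} (hx : (x : ℂ) ∈ U) :
    u x = (complexHeatPotential ρ x t).re := by
  have hxIoo : x ∈ Ioo (-1 : ℝ) 1 := (hU.subset hx).1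
  rw [hu x (Ioo_subset_Icc_self hxIoo) (hU.integrable_heatSourceKernel hρ hx),
    complexHeatPotential]
  simp only [complexHeatGamma_ofReal, ← Complex.ofReal_mul]
  exact (congrArg Complex.re (integral_ofReal (f := heatSourceKernel x t))).symm

lemma hasDerivAt_iteratedDeriv (hU : IsHolomorphyDomain ρ t U) (hρ : IsHeatSource ρ)
    (hu : IsPotentialAt ρ t u) (m : ℕ) {x : ℝ} (hx : (x : ℂ) ∈ U) :
    HasDerivAt (iteratedDeriv m u) (iteratedDeriv (m + 1) u x) x :=
  hasDerivAt_iteratedDeriv_of_eq_re hU.isOpen (hU.differentiableOn_complexHeatPotential hρ)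
    (fun _ => hU.eq_re_complexHeatPotential hρ hu) m hx

lemma abs_iteratedDeriv_le (hU : IsHolomorphyDomain ρ t U) (hρ : IsHeatSource ρ)
    (hu : IsPotentialAt ρ t u) {x r B : ℝ} (hr : 0 < r)
    (hx : Metric.closedBall (x : ℂ) r ⊆ U)
    (hB : ∀ z ∈ U, ∫ ω, |ω.2.2| * ‖complexHeatGamma z ω.1 (t - ω.2.1)‖ ∂ρ ≤ B) (m : ℕ) :
    |iteratedDeriv m u x| ≤ m.factorial * B / r ^ m := by
  refine abs_iteratedDeriv_le_of_eq_re hU.isOpen (hU.differentiableOn_complexHeatPotential hρ)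
    (fun _ => hU.eq_re_complexHeatPotential hρ hu) hr hx (fun z hz => ?_) m
  refine (norm_integral_le_integral_norm _).trans (le_of_eq_of_le ?_ (hB z hz))
  simp only [norm_mul, Complex.norm_real, Real.norm_eq_abs]

end IsHolomorphyDomain

end Regularity

/-! ### Mass balance at quiet points -/

/-- No source of `ρ` is released within distance `δ` of the interior point `c` during
`(t₀ - δ, t₀ + δ)`. -/
structure IsQuietNear (ρ : Measure (ℝ × ℝ × ℝ)) (c t₀ δ : ℝ) : Prop where
  pos : 0 < δ
  le_left : -1 + δ ≤ c
  le_right : c + δ ≤ 1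
  far : ∀ᵐ ω ∂ρ, |ω.2.1 - t₀| < δ → δ ≤ |c - ω.1|

lemma abs_re_sub_lt_and_abs_im_lt {c r : ℝ} {z : ℂ} (hz : z ∈ Metric.ball (c : ℂ) r) :
    |z.re - c| < r ∧ |z.im| < r := by
  rw [Metric.mem_ball, Complex.dist_eq] at hz
  exact ⟨by simpa using (Complex.abs_re_le_norm (z - c)).trans_lt hz,
    by simpa using (Complex.abs_im_le_norm (z - c)).trans_lt hz⟩

lemma closedBall_ofReal_subset_ball {c x r R : ℝ} (h : |x - c| + r < R) :
    Metric.closedBall (x : ℂ) r ⊆ Metric.ball (c : ℂ) R := by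
  refine Metric.closedBall_subset_ball' ?_
  rw [Complex.dist_eq, ← Complex.ofReal_sub, Complex.norm_real, Real.norm_eq_abs]
  linarith

lemma measurable_charge_mul_heatGammaDx (x t : ℝ) :
    Measurable fun ω : ℝ × ℝ × ℝ => ω.2.2 * heatGammaDx x ω.1 (t - ω.2.1) := by
  have hmap : Measurable fun ω : ℝ × ℝ × ℝ => (x, ω.1, t - ω.2.1) := by fun_prop
  exact measurable_snd.snd.mul (measurable_heatGammaDx.comp hmap)

namespace IsQuietNear

variable {ρ : Measure (ℝ × ℝ × ℝ)} {c t₀ δ : ℝ}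

lemma old_or_far {t : ℝ} (ht : |t - t₀| ≤ δ / 2) {ω : ℝ × ℝ × ℝ}
    (hω : |ω.2.1 - t₀| < δ → δ ≤ |c - ω.1|) :
    t - ω.2.1 ≤ 0 ∨ δ / 2 ≤ t - ω.2.1 ∨ δ ≤ |c - ω.1| := by
  rcases le_or_gt (t - ω.2.1) 0 with hnew | hpos
  · exact .inl hnew
  rcases le_or_gt (δ / 2) (t - ω.2.1) with hold | hrecent
  · exact .inr (.inl hold)
  · rw [abs_le] at ht
    exact .inr (.inr (hω (abs_lt.2 ⟨by linarith, by linarith⟩)))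

lemma mem_Icc (hQ : IsQuietNear ρ c t₀ δ) {x : ℝ} (hx : |x - c| ≤ δ) : x ∈ Icc (-1 : ℝ) 1 := by
  have := abs_le.1 hx
  exact ⟨by linarith [hQ.le_left], by linarith [hQ.le_right]⟩

lemma mem_Ioo (hQ : IsQuietNear ρ c t₀ δ) {x : ℝ} (hx : |x - c| < δ) : x ∈ Ioo (-1 : ℝ) 1 := by
  have := abs_lt.1 hx
  exact ⟨by linarith [hQ.le_left], by linarith [hQ.le_right]⟩

lemma exists_abs_heatGammaDx_le (hQ : IsQuietNear ρ c t₀ δ) (hρ : IsHeatSource ρ) :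
    ∃ M, ∀ᵐ ω ∂ρ, ∀ x t, |x - c| ≤ δ / 2 → |t - t₀| ≤ δ / 2 →
      |heatGammaDx x ω.1 (t - ω.2.1)| ≤ M := by
  have hδ := hQ.pos
  obtain ⟨M, hM⟩ := _root_.exists_abs_heatGammaDx_le (T := |t₀| + δ) (half_pos hδ) (half_pos hδ)
    (by positivity)
  refine ⟨M, ?_⟩
  filter_upwards [hρ.position_mem, hρ.time_nonneg, hQ.far] with ω hpos htime hfar x t hx ht
  refine hM x ω.1 _ (hQ.mem_Icc (by linarith)) hpos
    (by linarith [(abs_le.1 ht).2, le_abs_self t₀]) ?_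
  refine (old_or_far ht hfar).imp_right (Or.imp_right fun hcω => ?_)
  linarith [abs_sub_le c x ω.1, abs_sub_comm c x]

lemma exists_norm_complexHeatGamma_le (hQ : IsQuietNear ρ c t₀ δ) (hρ : IsHeatSource ρ) :
    ∃ M, ∀ᵐ ω ∂ρ, ∀ t, |t - t₀| ≤ δ / 2 → ∀ z ∈ Metric.ball (c : ℂ) (δ / 4),
      ‖complexHeatGamma z ω.1 (t - ω.2.1)‖ ≤ M := by
  have hδ := hQ.pos
  obtain ⟨M, -, hM⟩ := _root_.exists_norm_complexHeatGamma_le (δ := δ ^ 2 / 2) (T := |t₀| + δ)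
    (by positivity) (half_pos hδ) (by positivity)
  refine ⟨M, ?_⟩
  filter_upwards [hρ.position_mem, hρ.time_nonneg, hQ.far] with ω hpos htime hfar t ht z hz
  obtain ⟨hre, him⟩ := abs_re_sub_lt_and_abs_im_lt hz
  refine hM z ω.1 _ (hQ.mem_Icc (by linarith)) (by linarith [hQ.le_left, hQ.le_right]) hpos
    (by linarith [(abs_le.1 ht).2, le_abs_self t₀]) ?_
  refine (old_or_far ht hfar).imp_right (Or.imp_right fun hcω => ?_)
  have hdist : 3 / 4 * δ ≤ |z.re - ω.1| := by
    linarith [abs_sub_le c z.re ω.1, abs_sub_comm c z.re]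
  have him_sq : z.im ^ 2 ≤ (δ / 4) ^ 2 := sq_le_sq' (by linarith [abs_lt.1 him])
    (abs_lt.1 him).2.le
  have hre_sq : (3 / 4 * δ) ^ 2 ≤ (z.re - ω.1) ^ 2 := by
    rw [← sq_abs (z.re - ω.1)]
    exact pow_le_pow_left₀ (by positivity) hdist 2
  nlinarith

lemma isHolomorphyDomain (hQ : IsQuietNear ρ c t₀ δ) (hρ : IsHeatSource ρ) {t : ℝ}
    (ht : |t - t₀| ≤ δ / 2) : IsHolomorphyDomain ρ t (Metric.ball (c : ℂ) (δ / 4)) where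
  isOpen := Metric.isOpen_ball
  subset z hz := by
    have hδ := hQ.pos
    obtain ⟨hre, him⟩ := abs_re_sub_lt_and_abs_im_lt hz
    refine ⟨hQ.mem_Ioo (by linarith), abs_lt.1 (him.trans ?_)⟩
    linarith [hQ.le_left, hQ.le_right]
  exists_bound := by
    obtain ⟨M, hM⟩ := hQ.exists_norm_complexHeatGamma_le hρ
    exact ⟨M, hM.mono fun ω hω => hω t ht⟩

lemma exists_abs_iteratedDeriv_le (hQ : IsQuietNear ρ c t₀ δ) (hρ : IsHeatSource ρ) (m : ℕ) :
    ∃ K, ∀ (t : ℝ) (u : ℝ → ℝ), |t - t₀| ≤ δ / 2 → IsPotentialAt ρ t u →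
      ∀ x, |x - c| ≤ δ / 8 → |iteratedDeriv m u x| ≤ K := by
  have hδ := hQ.pos
  obtain ⟨M, hM⟩ := hQ.exists_norm_complexHeatGamma_le hρ
  refine ⟨m.factorial * (∫ ω, |ω.2.2| * M ∂ρ) / (δ / 16) ^ m, fun t u ht hu x hx => ?_⟩
  refine (hQ.isHolomorphyDomain hρ ht).abs_iteratedDeriv_le hρ hu (by positivity)
    (closedBall_ofReal_subset_ball (by linarith)) (fun z hz => ?_) m
  refine integral_mono_of_nonneg (.of_forall fun ω => by positivity)
    (hρ.integrable_charge.abs.mul_const M) ?_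
  filter_upwards [hM] with ω hω
  exact mul_le_mul_of_nonneg_left (hω t ht z hz) (abs_nonneg _)

lemma exists_abs_deriv_sub_le (hQ : IsQuietNear ρ c t₀ δ) (hρ : IsHeatSource ρ) :
    ∃ K, ∀ (t : ℝ) (u : ℝ → ℝ), |t - t₀| ≤ δ / 2 → IsPotentialAt ρ t u →
      ∀ x y, |x - c| ≤ δ / 8 → |y - c| ≤ δ / 8 → |deriv u x - deriv u y| ≤ K * |x - y| := by
  obtain ⟨K, hK⟩ := hQ.exists_abs_iteratedDeriv_le hρ 2
  refine ⟨K, fun t u ht hu x y hx hy => ?_⟩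
  refine (convex_closedBall c (δ / 8)).norm_image_sub_le_of_norm_hasDerivWithin_le
    (f' := iteratedDeriv 2 u) (fun z hz => ?_) (fun z hz => hK t u ht hu z hz) hy hx
  rw [← iteratedDeriv_one]
  refine ((hQ.isHolomorphyDomain hρ ht).hasDerivAt_iteratedDeriv hρ hu 1 ?_).hasDerivWithinAt
  have hz : |z - c| ≤ δ / 8 := hz
  rw [Metric.mem_ball, Complex.dist_eq, ← Complex.ofReal_sub, Complex.norm_real]
  exact hz.trans_lt (by linarith [hQ.pos])

lemma hasDerivAt (hQ : IsQuietNear ρ c t₀ δ) (hρ : IsHeatSource ρ) {t : ℝ}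
    (ht : |t - t₀| ≤ δ / 2) {u : ℝ → ℝ} (hu : IsPotentialAt ρ t u) {x : ℝ}
    (hx : |x - c| < δ / 4) :
    HasDerivAt u (∫ ω, ω.2.2 * heatGammaDx x ω.1 (t - ω.2.1) ∂ρ) x := by
  have hδ := hQ.pos
  have hnear : ∀ᶠ y in 𝓝 x, |y - c| < δ / 4 :=
    (isOpen_lt (by fun_prop) continuous_const).mem_nhds hx
  have hball {y : ℝ} (hy : |y - c| < δ / 4) : (y : ℂ) ∈ Metric.ball (c : ℂ) (δ / 4) := by
    rwa [Metric.mem_ball, Complex.dist_eq, ← Complex.ofReal_sub, Complex.norm_real]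
  have hint {y : ℝ} (hy : |y - c| < δ / 4) : Integrable (heatSourceKernel y t) ρ :=
    (hQ.isHolomorphyDomain hρ ht).integrable_heatSourceKernel hρ (hball hy)
  obtain ⟨M, hM⟩ := hQ.exists_abs_heatGammaDx_le hρ
  have hderiv := (hasDerivAt_integral_of_dominated_loc_of_deriv_le
    (F' := fun y ω => ω.2.2 * heatGammaDx y ω.1 (t - ω.2.1))
    hnear (.of_forall fun y => (measurable_heatSourceKernel y t).aestronglyMeasurable) (hint hx)
    (measurable_charge_mul_heatGammaDx x t).aestronglyMeasurable
    (hM.mono fun ω hω y hy => ?_) (hρ.integrable_charge.abs.mul_const M)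
    (hρ.position_mem.mono fun ω hω y hy => ?_)).2
  · refine hderiv.congr_of_eventuallyEq ?_
    filter_upwards [hnear] with y hy
    exact hu y (hQ.mem_Icc (by linarith)) (hint hy)
  · rw [norm_mul, Real.norm_eq_abs, Real.norm_eq_abs]
    exact mul_le_mul_of_nonneg_left (hω y t (by linarith [hy.out]) ht) (abs_nonneg _)
  · exact (hasDerivAt_heatGamma (hQ.mem_Ioo (by linarith [hy.out])) hω _).const_mul _

lemma integrable_charge_mul_heatGammaDx_prod [SFinite ρ] (hQ : IsQuietNear ρ c t₀ δ)
    (hρ : IsHeatSource ρ) {t₁ t₂ x : ℝ} (hnear : ∀ σ ∈ Icc t₁ t₂, |σ - t₀| ≤ δ / 2)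
    (hx : |x - c| ≤ δ / 2) :
    Integrable (fun q : ℝ × ℝ × ℝ × ℝ => q.2.2.2 * heatGammaDx x q.2.1 (q.1 - q.2.2.1))
      ((volume.restrict (Ioc t₁ t₂)).prod ρ) := by
  have hmap : Measurable fun q : ℝ × ℝ × ℝ × ℝ => (x, q.2.1, q.1 - q.2.2.1) := by fun_prop
  obtain ⟨M, hM⟩ := hQ.exists_abs_heatGammaDx_le hρ
  refine (hρ.integrable_charge.comp_snd _).mul_bdd (c := M)
    (measurable_heatGammaDx.comp hmap).aestronglyMeasurable ?_
  filter_upwards [Measure.quasiMeasurePreserving_fst.ae (ae_restrict_mem measurableSet_Ioc),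
    Measure.quasiMeasurePreserving_snd.ae hM] with q hq hMq
  exact hMq x q.1 hx (hnear q.1 (Ioc_subset_Icc_self hq))

lemma integrable_charge_mul_intervalIntegral_heatGammaDx [SFinite ρ] (hQ : IsQuietNear ρ c t₀ δ)
    (hρ : IsHeatSource ρ) {t₁ t₂ x : ℝ} (ht : t₁ ≤ t₂)
    (hnear : ∀ σ ∈ Icc t₁ t₂, |σ - t₀| ≤ δ / 2) (hx : |x - c| < δ / 4) :
    Integrable (fun ω => ω.2.2 * ∫ σ in t₁..t₂, heatGammaDx x ω.1 (σ - ω.2.1)) ρ := by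
  simpa only [intervalIntegral.integral_of_le ht, integral_const_mul] using
    (hQ.integrable_charge_mul_heatGammaDx_prod hρ hnear
      (by linarith [hQ.pos])).integral_prod_right

lemma eqOn_deriv (hQ : IsQuietNear ρ c t₀ δ) (hρ : IsHeatSource ρ) {f : ℝ → ℝ → ℝ}
    {t₁ t₂ x : ℝ} (hnear : ∀ σ ∈ Icc t₁ t₂, |σ - t₀| ≤ δ / 2)
    (hf : ∀ σ ∈ Icc t₁ t₂, IsPotentialAt ρ σ fun y => f y σ) (hx : |x - c| < δ / 4) :
    EqOn (fun σ => ∫ ω, ω.2.2 * heatGammaDx x ω.1 (σ - ω.2.1) ∂ρ)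
      (fun σ => deriv (fun y => f y σ) x) (Icc t₁ t₂) := fun σ hσ =>
  (hQ.hasDerivAt hρ (hnear σ hσ) (hf σ hσ) hx).deriv.symm

lemma intervalIntegrable_deriv [SFinite ρ] (hQ : IsQuietNear ρ c t₀ δ) (hρ : IsHeatSource ρ)
    {f : ℝ → ℝ → ℝ} {t₁ t₂ x : ℝ} (ht : t₁ ≤ t₂) (hnear : ∀ σ ∈ Icc t₁ t₂, |σ - t₀| ≤ δ / 2)
    (hf : ∀ σ ∈ Icc t₁ t₂, IsPotentialAt ρ σ fun y => f y σ) (hx : |x - c| < δ / 4) :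
    IntervalIntegrable (fun σ => deriv (fun y => f y σ) x) volume t₁ t₂ := by
  rw [intervalIntegrable_iff_integrableOn_Ioc_of_le ht]
  refine IntegrableOn.congr_fun ?_
    ((hQ.eqOn_deriv hρ hnear hf hx).mono Ioc_subset_Icc_self) measurableSet_Ioc
  exact (hQ.integrable_charge_mul_heatGammaDx_prod hρ hnear
    (by linarith [hQ.pos])).integral_prod_left

lemma intervalIntegral_deriv [SFinite ρ] (hQ : IsQuietNear ρ c t₀ δ) (hρ : IsHeatSource ρ)
    {f : ℝ → ℝ → ℝ} {t₁ t₂ x : ℝ} (ht : t₁ ≤ t₂) (hnear : ∀ σ ∈ Icc t₁ t₂, |σ - t₀| ≤ δ / 2)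
    (hf : ∀ σ ∈ Icc t₁ t₂, IsPotentialAt ρ σ fun y => f y σ) (hx : |x - c| < δ / 4) :
    ∫ σ in t₁..t₂, deriv (fun y => f y σ) x
      = ∫ ω, ω.2.2 * (∫ σ in t₁..t₂, heatGammaDx x ω.1 (σ - ω.2.1)) ∂ρ := by
  simp only [intervalIntegral.integral_of_le ht, ← integral_const_mul]
  rw [← integral_integral_swap
    (f := fun (σ : ℝ) (ω : ℝ × ℝ × ℝ) => ω.2.2 * heatGammaDx x ω.1 (σ - ω.2.1))
    (hQ.integrable_charge_mul_heatGammaDx_prod hρ hnear (by linarith [hQ.pos]))]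
  exact (setIntegral_congr_fun measurableSet_Ioc
    ((hQ.eqOn_deriv hρ hnear hf hx).mono Ioc_subset_Icc_self)).symm

lemma intervalIntegral_sub [SFinite ρ] (hQ : IsQuietNear ρ c t₀ δ) (hρ : IsHeatSource ρ)
    {f : ℝ → ℝ → ℝ} {t₁ t₂ x : ℝ} (ht : t₁ ≤ t₂) (hnear : ∀ σ ∈ Icc t₁ t₂, |σ - t₀| ≤ δ / 2)
    (hf : ∀ σ ∈ Icc t₁ t₂, IsPotentialAt ρ σ fun y => f y σ) (hx : |x - c| < δ / 4) :
    (∫ y in x..1, f y t₂) - ∫ y in x..1, f y t₁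
      = (∫ ω in {ω | t₁ ≤ ω.2.1 ∧ ω.2.1 < t₂ ∧ x < ω.1}, ω.2.2 ∂ρ)
        - ∫ σ in t₁..t₂, deriv (fun y => f y σ) x := by
  have hδ := hQ.pos
  have hxIoo : x ∈ Ioo (-1 : ℝ) 1 := hQ.mem_Ioo (by linarith)
  have hxIcc := Ioo_subset_Icc_self hxIoo
  have ht₁ : t₁ ∈ Icc t₁ t₂ := left_mem_Icc.2 ht
  have ht₂ : t₂ ∈ Icc t₁ t₂ := right_mem_Icc.2 ht
  have hA : MeasurableSet {ω : ℝ × ℝ × ℝ | t₁ ≤ ω.2.1 ∧ ω.2.1 < t₂ ∧ x < ω.1} := by measurability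
  have hmass : ∀ᵐ ω ∂ρ, ω.2.2 * heatGammaMass x ω.1 (t₂ - ω.2.1)
        - ω.2.2 * heatGammaMass x ω.1 (t₁ - ω.2.1)
      = {ω | t₁ ≤ ω.2.1 ∧ ω.2.1 < t₂ ∧ x < ω.1}.indicator (fun ω => ω.2.2) ω
        - ω.2.2 * ∫ σ in t₁..t₂, heatGammaDx x ω.1 (σ - ω.2.1) := by
    filter_upwards [hρ.position_mem, hQ.far] with ω hpos hfar
    rw [← mul_sub, heatGammaMass_sub hxIoo hpos ht, mul_sub, mul_ite, mul_one, mul_zero,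
      indicator_apply]
    · rfl
    · rintro h₁ h₂ rfl
      have := hfar (abs_lt.2 ⟨by linarith [abs_le.1 (hnear t₁ ht₁)],
        by linarith [abs_le.1 (hnear t₂ ht₂)]⟩)
      linarith [abs_sub_comm c ω.1]
  rw [(hf t₂ ht₂).intervalIntegral_eq hρ hxIcc, (hf t₁ ht₁).intervalIntegral_eq hρ hxIcc,
    ← integral_sub (hρ.integrable_charge_mul_heatGammaMass t₂ hxIcc)
      (hρ.integrable_charge_mul_heatGammaMass t₁ hxIcc), integral_congr_ae hmass,
    integral_sub (hρ.integrable_charge.indicator hA)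
      (hQ.integrable_charge_mul_intervalIntegral_heatGammaDx hρ ht hnear hx),
    integral_indicator hA, hQ.intervalIntegral_deriv hρ ht hnear hf hx]

end IsQuietNear

/-! ### The heat sources of problem (P) -/

section ReleaseAlong

variable {γ q : ℝ → ℝ} {T : ℝ}

lemma aemeasurable_releaseAlong (hγ : AEMeasurable γ (volume.restrict (Ioo 0 T)))
    (hq : IntegrableOn q (Ioo 0 T)) :
    AEMeasurable (fun s => (γ s, s, q s)) (volume.restrict (Ioo 0 T)) :=
  hγ.prodMk (aemeasurable_id.prodMk hq.aemeasurable)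

lemma isHeatSource_releaseAlong (hγ : AEMeasurable γ (volume.restrict (Ioo 0 T)))
    (hq : IntegrableOn q (Ioo 0 T)) (hmem : ∀ s ∈ Ioo 0 T, γ s ∈ Icc (-1 : ℝ) 1) :
    IsHeatSource (releaseAlong γ q T) :=
  isHeatSource_map (aemeasurable_releaseAlong hγ hq) hq
    ((ae_restrict_mem measurableSet_Ioo).mono hmem)
    ((ae_restrict_mem measurableSet_Ioo).mono fun _ hs => hs.1.le)

lemma heatPotential_releaseAlong (hγ : AEMeasurable γ (volume.restrict (Ioo 0 T)))
    (hq : IntegrableOn q (Ioo 0 T)) (x : ℝ) {t : ℝ} (ht : t ∈ Ioo 0 T) :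
    heatPotential (releaseAlong γ q T) x t
      = ∫ s in (0 : ℝ)..t, heatSourceKernel x t (γ s, s, q s) := by
  rw [intervalIntegral.integral_of_le ht.1.le]
  refine (heatPotential_map (aemeasurable_releaseAlong hγ hq) x t).trans
    (setIntegral_eq_of_subset_of_forall_sdiff_eq_zero measurableSet_Ioo
      (fun s hs => ⟨hs.1, hs.2.trans_lt ht.2⟩) fun s hs => ?_)
  have hts : t ≤ s := not_lt.1 fun h => hs.2 ⟨hs.1.1, h.le⟩
  rw [heatSourceKernel, heatGamma_of_nonpos _ _ (sub_nonpos.2 hts), mul_zero]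

lemma intervalIntegrable_heatSourceKernel_releaseAlong
    (hγ : AEMeasurable γ (volume.restrict (Ioo 0 T))) (hq : IntegrableOn q (Ioo 0 T)) {x t : ℝ}
    (ht : t ∈ Ioo 0 T) (hint : Integrable (heatSourceKernel x t) (releaseAlong γ q T)) :
    IntervalIntegrable (fun s => heatSourceKernel x t (γ s, s, q s)) volume 0 t := by
  rw [intervalIntegrable_iff_integrableOn_Ioc_of_le ht.1.le]
  exact IntegrableOn.mono_set
    ((integrable_heatSourceKernel_map (aemeasurable_releaseAlong hγ hq) x t).1 hint)
    fun s hs => ⟨hs.1, hs.2.trans_lt ht.2⟩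

lemma setIntegral_charge_releaseAlong (hγ : AEMeasurable γ (volume.restrict (Ioo 0 T)))
    (hq : IntegrableOn q (Ioo 0 T)) {A : Set (ℝ × ℝ × ℝ)} (hA : MeasurableSet A) :
    ∫ ω in A, ω.2.2 ∂releaseAlong γ q T
      = ∫ s in (fun s => (γ s, s, q s)) ⁻¹' A ∩ Ioo 0 T, q s := by
  rw [releaseAlong, setIntegral_map hA measurable_snd.snd.aestronglyMeasurable
    (aemeasurable_releaseAlong hγ hq), Measure.restrict_restrict' measurableSet_Ioo]

lemma setIntegral_charge_releaseAlong_of_lt (hγ : AEMeasurable γ (volume.restrict (Ioo 0 T)))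
    (hq : IntegrableOn q (Ioo 0 T)) {x t₁ t₂ : ℝ} (ht : Ico t₁ t₂ ⊆ Ioo 0 T)
    (hx : ∀ s ∈ Ico t₁ t₂, x < γ s) :
    ∫ ω in {ω | t₁ ≤ ω.2.1 ∧ ω.2.1 < t₂ ∧ x < ω.1}, ω.2.2 ∂releaseAlong γ q T
      = ∫ s in Ico t₁ t₂, q s := by
  rw [setIntegral_charge_releaseAlong hγ hq (by measurability)]
  congr 2
  ext s
  exact ⟨fun hs => ⟨hs.1.1, hs.1.2.1⟩, fun hs => ⟨⟨hs.1, hs.2, hx s hs⟩, ht hs⟩⟩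

lemma setIntegral_charge_releaseAlong_of_le (hγ : AEMeasurable γ (volume.restrict (Ioo 0 T)))
    (hq : IntegrableOn q (Ioo 0 T)) {x t₁ t₂ : ℝ} (hx : ∀ s ∈ Ico t₁ t₂, γ s ≤ x) :
    ∫ ω in {ω | t₁ ≤ ω.2.1 ∧ ω.2.1 < t₂ ∧ x < ω.1}, ω.2.2 ∂releaseAlong γ q T = 0 := by
  rw [setIntegral_charge_releaseAlong hγ hq (by measurability)]
  convert setIntegral_empty
  exact eq_empty_of_forall_notMem fun s hs => (hx s ⟨hs.1.1, hs.1.2.1⟩).not_gt hs.1.2.2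

lemma setIntegral_charge_releaseAt (g : ℝ → ℝ) {s x t₁ t₂ : ℝ} (hs : s < t₁)
    (hg : IntegrableOn g (Ioc (-1 : ℝ) 1)) :
    ∫ ω in {ω | t₁ ≤ ω.2.1 ∧ ω.2.1 < t₂ ∧ x < ω.1}, ω.2.2 ∂releaseAt s g = 0 := by
  rw [releaseAt, setIntegral_map (by measurability) measurable_snd.snd.aestronglyMeasurable
    (aemeasurable_releaseAt hg s)]
  convert setIntegral_empty
  exact eq_empty_of_forall_notMem fun y hy => hs.not_ge hy.1

end ReleaseAlong

/-- The sources of problem (P): the initial datum, released at time `0`, and the free boundary,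
which emits heat at rate `λ` at `p - ā` and absorbs it at the same rate at `p + ā`. -/
noncomputable def solutionSource (a : ℝ) (fI : ℝ → ℝ) (T : ℝ) (f : ℝ → ℝ → ℝ) (p : ℝ → ℝ) :
    Measure (ℝ × ℝ × ℝ) :=
  releaseAt 0 fI + (releaseAlong (fun s => p s - abar a p s) (flux f p) T
    + releaseAlong (fun s => p s + abar a p s) (-flux f p) T)

instance (a : ℝ) (fI : ℝ → ℝ) (T : ℝ) (f : ℝ → ℝ → ℝ) (p : ℝ → ℝ) :
    SFinite (solutionSource a fI T f p) := by
  unfold solutionSource; infer_instance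

lemma abar_le_one_sub (a : ℝ) (p : ℝ → ℝ) (s : ℝ) : abar a p s ≤ 1 - p s :=
  (min_le_right _ _).trans (min_le_left _ _)

lemma abar_le_one_add (a : ℝ) (p : ℝ → ℝ) (s : ℝ) : abar a p s ≤ 1 + p s :=
  (min_le_right _ _).trans (min_le_right _ _)

lemma abar_pos {a : ℝ} (ha : 0 < a) {p : ℝ → ℝ} {s : ℝ} (hp : p s ∈ Ioo (-1 : ℝ) 1) :
    0 < abar a p s :=
  lt_min ha (lt_min (by linarith [hp.2]) (by linarith [hp.1]))

lemma continuousOn_abar (a : ℝ) {p : ℝ → ℝ} {J : Set ℝ} (hp : ContinuousOn p J) :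
    ContinuousOn (abar a p) J := by
  unfold abar
  fun_prop

namespace IsSolutionP

variable {a T : ℝ} {fI p : ℝ → ℝ} {f : ℝ → ℝ → ℝ}

lemma continuousOn_sub_abar (hsol : IsSolutionP a fI (Ioo 0 T) f p) :
    ContinuousOn (fun s => p s - abar a p s) (Ioo 0 T) :=
  hsol.p_cont.sub (continuousOn_abar a hsol.p_cont)

lemma continuousOn_add_abar (hsol : IsSolutionP a fI (Ioo 0 T) f p) :
    ContinuousOn (fun s => p s + abar a p s) (Ioo 0 T) :=
  hsol.p_cont.add (continuousOn_abar a hsol.p_cont)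

lemma aemeasurable_sub_abar (hsol : IsSolutionP a fI (Ioo 0 T) f p) :
    AEMeasurable (fun s => p s - abar a p s) (volume.restrict (Ioo 0 T)) :=
  hsol.continuousOn_sub_abar.aemeasurable measurableSet_Ioo

lemma aemeasurable_add_abar (hsol : IsSolutionP a fI (Ioo 0 T) f p) :
    AEMeasurable (fun s => p s + abar a p s) (volume.restrict (Ioo 0 T)) :=
  hsol.continuousOn_add_abar.aemeasurable measurableSet_Ioo

lemma sub_abar_mem (ha : 0 < a) (hsol : IsSolutionP a fI (Ioo 0 T) f p) {s : ℝ}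
    (hs : s ∈ Ioo 0 T) : p s - abar a p s ∈ Icc (-1 : ℝ) 1 := by
  have hp := hsol.p_mem s hs
  exact ⟨by linarith [abar_le_one_add a p s], by linarith [abar_pos ha hp, hp.2]⟩

lemma add_abar_mem (ha : 0 < a) (hsol : IsSolutionP a fI (Ioo 0 T) f p) {s : ℝ}
    (hs : s ∈ Ioo 0 T) : p s + abar a p s ∈ Icc (-1 : ℝ) 1 := by
  have hp := hsol.p_mem s hs
  exact ⟨by linarith [abar_pos ha hp, hp.1], by linarith [abar_le_one_sub a p s]⟩

end IsSolutionP

/-- A solution of problem (P) on `(0, T)` with integrable initial datum and `λ ∈ L¹(0, T)`. -/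
structure IsL1SolutionP (a T : ℝ) (fI : ℝ → ℝ) (f : ℝ → ℝ → ℝ) (p : ℝ → ℝ) : Prop
    extends IsSolutionP a fI (Ioo 0 T) f p where
  a_pos : 0 < a
  integrable_init : IntegrableOn fI (Ioc (-1 : ℝ) 1)
  integrable_flux : IntegrableOn (flux f p) (Ioo 0 T)

namespace IsL1SolutionP

variable {a T : ℝ} {fI p : ℝ → ℝ} {f : ℝ → ℝ → ℝ}

lemma isHeatSource_emission (hS : IsL1SolutionP a T fI f p) :
    IsHeatSource (releaseAlong (fun s => p s - abar a p s) (flux f p) T) :=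
  isHeatSource_releaseAlong hS.aemeasurable_sub_abar hS.integrable_flux
    fun _ hs => hS.sub_abar_mem hS.a_pos hs

lemma isHeatSource_absorption (hS : IsL1SolutionP a T fI f p) :
    IsHeatSource (releaseAlong (fun s => p s + abar a p s) (-flux f p) T) :=
  isHeatSource_releaseAlong hS.aemeasurable_add_abar hS.integrable_flux.neg
    fun _ hs => hS.add_abar_mem hS.a_pos hs

lemma isHeatSource (hS : IsL1SolutionP a T fI f p) : IsHeatSource (solutionSource a fI T f p) :=
  (isHeatSource_releaseAt le_rfl hS.integrable_init).add
    (hS.isHeatSource_emission.add hS.isHeatSource_absorption)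

lemma isPotentialAt (hS : IsL1SolutionP a T fI f p) {t : ℝ} (ht : t ∈ Ioo 0 T) :
    IsPotentialAt (solutionSource a fI T f p) t fun x => f x t := by
  intro x hx hkernel
  obtain ⟨hinit, hboundary⟩ := integrable_add_measure.1 hkernel
  obtain ⟨hemit, habsorb⟩ := integrable_add_measure.1 hboundary
  have hflux := hS.integrable_flux
  calc f x t = (∫ y in Ioc (-1 : ℝ) 1, fI y * heatGamma x y (t - 0))
        + ((∫ s in (0 : ℝ)..t, heatSourceKernel x t (p s - abar a p s, s, flux f p s))
          + ∫ s in (0 : ℝ)..t, heatSourceKernel x t (p s + abar a p s, s, (-flux f p) s)) := by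
        rw [hS.duhamel t ht x hx, intervalIntegral.integral_of_le (by norm_num),
          ← intervalIntegral.integral_add
            (intervalIntegrable_heatSourceKernel_releaseAlong hS.aemeasurable_sub_abar hflux ht
              hemit)
            (intervalIntegrable_heatSourceKernel_releaseAlong hS.aemeasurable_add_abar hflux.neg ht
              habsorb)]
        congr 1
        · simp only [mul_comm, sub_zero]
        · refine intervalIntegral.integral_congr fun s _ => ?_
          simp only [heatSourceKernel, Pi.neg_apply]
          ring
    _ = heatPotential (solutionSource a fI T f p) x t := by
        rw [← heatPotential_releaseAt hS.integrable_init,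
          ← heatPotential_releaseAlong hS.aemeasurable_sub_abar hflux x ht,
          ← heatPotential_releaseAlong hS.aemeasurable_add_abar hflux.neg x ht]
        exact (congrArg _ (integral_add_measure hemit habsorb).symm).trans
          (integral_add_measure hinit hboundary).symm

end IsL1SolutionP

/-! ### Conservation of the mass beyond the free boundary -/

/-- The mass of `f(·, t)` to the right of the free boundary. -/
noncomputable def massBeyond (f : ℝ → ℝ → ℝ) (p : ℝ → ℝ) (t : ℝ) : ℝ := ∫ x in (p t)..1, f x t

/-- During `(t₀ - δ, t₀ + δ)` the emission point `p - ā` and the absorption point `p + ā` lie at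
distance at least `δ` from `p t₀`, on either side of it. -/
structure IsSourceGap (a T : ℝ) (p : ℝ → ℝ) (t₀ δ : ℝ) : Prop where
  pos : 0 < δ
  gap : ∀ s, |s - t₀| < δ →
    s ∈ Ioo 0 T ∧ p s - abar a p s ≤ p t₀ - δ ∧ p t₀ + δ ≤ p s + abar a p s

namespace IsL1SolutionP

variable {a T : ℝ} {fI p : ℝ → ℝ} {f : ℝ → ℝ → ℝ}

lemma ae_solutionSource (hS : IsL1SolutionP a T fI f p) {P : ℝ × ℝ × ℝ → Prop}
    (hP : MeasurableSet {ω | P ω}) (hinit : ∀ y q, P (y, 0, q))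
    (hboundary : ∀ s ∈ Ioo 0 T, ∀ q,
      P (p s - abar a p s, s, q) ∧ P (p s + abar a p s, s, q)) :
    ∀ᵐ ω ∂solutionSource a fI T f p, P ω := by
  refine ae_add_measure_iff.2 ⟨(ae_map_iff (aemeasurable_releaseAt hS.integrable_init 0) hP).2
    (.of_forall fun y => hinit y (fI y)), ae_add_measure_iff.2 ⟨?_, ?_⟩⟩
  · exact (ae_map_iff (aemeasurable_releaseAlong
      hS.aemeasurable_sub_abar hS.integrable_flux) hP).2
      ((ae_restrict_mem measurableSet_Ioo).mono fun s hs => (hboundary s hs _).1)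
  · exact (ae_map_iff (aemeasurable_releaseAlong
      hS.aemeasurable_add_abar hS.integrable_flux.neg) hP).2
      ((ae_restrict_mem measurableSet_Ioo).mono fun s hs => (hboundary s hs _).2)

lemma exists_isSourceGap (hS : IsL1SolutionP a T fI f p) {t₀ : ℝ} (ht₀ : t₀ ∈ Ioo 0 T) :
    ∃ δ, IsSourceGap a T p t₀ δ := by
  have hmem := isOpen_Ioo.mem_nhds ht₀
  have habar := abar_pos hS.a_pos (hS.p_mem t₀ ht₀)
  have hsub := ((hS.continuousOn_sub_abar.continuousAt hmem).eventually_lt_const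
    (show p t₀ - abar a p t₀ < p t₀ - abar a p t₀ / 2 by linarith))
  have hadd := ((hS.continuousOn_add_abar.continuousAt hmem).eventually_const_lt
    (show p t₀ + abar a p t₀ / 2 < p t₀ + abar a p t₀ by linarith))
  obtain ⟨ε, hε, hball⟩ :=
    Metric.eventually_nhds_iff.1 ((isOpen_Ioo.eventually_mem ht₀).and (hsub.and hadd))
  refine ⟨min ε (abar a p t₀ / 2), lt_min hε (half_pos habar), fun s hs => ?_⟩
  obtain ⟨hs, hsub, hadd⟩ := hball ((Real.dist_eq s t₀).trans_lt (hs.trans_le (min_le_left _ _)))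
  exact ⟨hs, by linarith [min_le_right ε (abar a p t₀ / 2)],
    by linarith [min_le_right ε (abar a p t₀ / 2)]⟩

lemma isQuietNear (hS : IsL1SolutionP a T fI f p) {t₀ δ : ℝ}
    (hgap : IsSourceGap a T p t₀ δ) :
    IsQuietNear (solutionSource a fI T f p) (p t₀) t₀ δ where
  pos := hgap.pos
  le_left := by
    obtain ⟨ht₀, hleft, -⟩ := hgap.gap t₀ (by simpa using hgap.pos)
    linarith [(hS.sub_abar_mem hS.a_pos ht₀).1]
  le_right := by
    obtain ⟨ht₀, -, hright⟩ := hgap.gap t₀ (by simpa using hgap.pos)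
    linarith [(hS.add_abar_mem hS.a_pos ht₀).2]
  far := by
    refine hS.ae_solutionSource (by measurability) (fun y q h0 => ?_)
      fun s _ q => ⟨fun hs => ?_, fun hs => ?_⟩
    · exact absurd (hgap.gap 0 h0).1.1 (lt_irrefl 0)
    · exact le_abs.2 (.inl (by linarith [(hgap.gap s hs).2.1]))
    · exact le_abs.2 (.inr (by linarith [(hgap.gap s hs).2.2]))

lemma setIntegral_charge_solutionSource (hS : IsL1SolutionP a T fI f p) {x t₁ t₂ : ℝ}
    (ht₁ : 0 < t₁) (ht : t₁ ≤ t₂) (hmem : Ico t₁ t₂ ⊆ Ioo 0 T)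
    (hx : ∀ s ∈ Ico t₁ t₂, p s - abar a p s ≤ x ∧ x < p s + abar a p s) :
    ∫ ω in {ω | t₁ ≤ ω.2.1 ∧ ω.2.1 < t₂ ∧ x < ω.1}, ω.2.2 ∂solutionSource a fI T f p
      = -∫ s in t₁..t₂, flux f p s := by
  have hemit := hS.isHeatSource_emission
  have habsorb := hS.isHeatSource_absorption
  have hinit := isHeatSource_releaseAt le_rfl hS.integrable_init
  rw [solutionSource, Measure.restrict_add, Measure.restrict_add,
    integral_add_measure (hinit.restrict _).integrable_charge
      ((hemit.restrict _).add (habsorb.restrict _)).integrable_charge,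
    integral_add_measure (hemit.restrict _).integrable_charge
      (habsorb.restrict _).integrable_charge,
    setIntegral_charge_releaseAt fI ht₁ hS.integrable_init,
    setIntegral_charge_releaseAlong_of_le hS.aemeasurable_sub_abar hS.integrable_flux
      fun s hs => (hx s hs).1,
    setIntegral_charge_releaseAlong_of_lt hS.aemeasurable_add_abar hS.integrable_flux.neg hmem
      fun s hs => (hx s hs).2,
    zero_add, zero_add, intervalIntegral.integral_of_le ht, integral_Ico_eq_integral_Ioc]
  exact integral_neg _

lemma intervalIntegral_sub (hS : IsL1SolutionP a T fI f p) {t₀ δ : ℝ}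
    (hgap : IsSourceGap a T p t₀ δ)
    {t₁ t₂ x : ℝ} (ht : t₁ ≤ t₂) (hnear : ∀ σ ∈ Icc t₁ t₂, |σ - t₀| ≤ δ / 2)
    (hx : |x - p t₀| < δ / 4) :
    (∫ y in x..1, f y t₂) - ∫ y in x..1, f y t₁
      = -∫ σ in t₁..t₂, (flux f p σ + deriv (fun y => f y σ) x) := by
  have hQ := hS.isQuietNear hgap
  have hρ := hS.isHeatSource
  have hgap' : ∀ σ ∈ Icc t₁ t₂, _ :=
    fun σ hσ => hgap.gap σ ((hnear σ hσ).trans_lt (half_lt_self hgap.pos))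
  have hpot : ∀ σ ∈ Icc t₁ t₂, IsPotentialAt (solutionSource a fI T f p) σ fun y => f y σ :=
    fun σ hσ => hS.isPotentialAt (hgap' σ hσ).1
  have hflux : IntervalIntegrable (flux f p) volume t₁ t₂ :=
    (intervalIntegrable_iff_integrableOn_Ioc_of_le ht).2
      (hS.integrable_flux.mono_set fun σ hσ => (hgap' σ (Ioc_subset_Icc_self hσ)).1)
  rw [hQ.intervalIntegral_sub hρ ht hnear hpot hx,
    intervalIntegral.integral_add hflux (hQ.intervalIntegrable_deriv hρ ht hnear hpot hx),
    hS.setIntegral_charge_solutionSource (hgap' t₁ (left_mem_Icc.2 ht)).1.1 ht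
      (fun σ hσ => (hgap' σ (Ico_subset_Icc_self hσ)).1) fun σ hσ => ?_]
  · ring
  · obtain ⟨-, hleft, hright⟩ := hgap' σ (Ico_subset_Icc_self hσ)
    have := abs_lt.1 hx
    exact ⟨by linarith, by linarith⟩

lemma intervalIntegrable (hS : IsL1SolutionP a T fI f p) {t : ℝ}
    (ht : t ∈ Ioo 0 T) {x y : ℝ} (hx : x ∈ Icc (-1 : ℝ) 1) (hy : y ∈ Icc (-1 : ℝ) 1) :
    IntervalIntegrable (fun z => f z t) volume x y := by
  have hprofile : IntegrableOn (fun z => f z t) (Ioc (-1 : ℝ) 1) :=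
    (hS.isPotentialAt ht).integrableOn (hS.isHeatSource)
  exact intervalIntegrable_iff.2
    (hprofile.mono_set (Ioc_subset_Ioc (le_min hx.1 hy.1) (max_le hx.2 hy.2)))

lemma massBeyond_le (hS : IsL1SolutionP a T fI f p) {t : ℝ}
    (ht : t ∈ Ioo 0 T) {x : ℝ} (hx : x ∈ Icc (-1 : ℝ) 1) :
    massBeyond f p t ≤ ∫ y in x..1, f y t := by
  have hp := hS.p_mem t ht
  have hpIcc := Ioo_subset_Icc_self hp
  have hsplit := intervalIntegral.integral_add_adjacent_intervals
    (hS.intervalIntegrable ht hx hpIcc)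
    (hS.intervalIntegrable ht hpIcc (right_mem_Icc.2 (by norm_num)))
  suffices hnonneg : 0 ≤ ∫ y in x..p t, f y t by rw [massBeyond]; linarith
  rcases le_total x (p t) with hxp | hpx
  · rw [intervalIntegral.integral_of_le hxp, integral_Ioc_eq_integral_Ioo]
    exact setIntegral_nonneg measurableSet_Ioo
      fun y hy => (hS.pos_left t ht y ⟨hx.1.trans hy.1.le, hy.2⟩).le
  · rw [intervalIntegral.integral_of_ge hpx, Left.nonneg_neg_iff]
    exact setIntegral_nonpos measurableSet_Ioc
      fun y hy => (hS.neg_right t ht y ⟨hy.1, hy.2.trans hx.2⟩).le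

lemma abs_intervalIntegral_sub_le (hS : IsL1SolutionP a T fI f p) {t₀ δ : ℝ}
    (hgap : IsSourceGap a T p t₀ δ) :
    ∃ K, 0 ≤ K ∧ ∀ η t₁ t₂ x, t₁ ≤ t₂ → |x - p t₀| ≤ δ / 8 →
      (∀ σ ∈ Icc t₁ t₂, |σ - t₀| ≤ δ / 2 ∧ |p σ - p t₀| ≤ δ / 8 ∧ |p σ - x| ≤ η) →
      |(∫ y in x..1, f y t₂) - ∫ y in x..1, f y t₁| ≤ K * η * (t₂ - t₁) := by
  have hQ := hS.isQuietNear hgap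
  have hρ := hS.isHeatSource
  obtain ⟨K, hK⟩ := hQ.exists_abs_deriv_sub_le hρ
  refine ⟨|K|, abs_nonneg K, fun η t₁ t₂ x ht hx hσ => ?_⟩
  rw [hS.intervalIntegral_sub hgap ht (fun σ h => (hσ σ h).1)
    (hx.trans_lt (by linarith [hgap.pos])), abs_neg, ← Real.norm_eq_abs,
    ← abs_of_nonneg (sub_nonneg.2 ht)]
  refine intervalIntegral.norm_integral_le_of_norm_le_const fun σ hmem => ?_
  rw [uIoc_of_le ht] at hmem
  obtain ⟨hnear, hpσ, hη⟩ := hσ σ (Ioc_subset_Icc_self hmem)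
  have hpot := hS.isPotentialAt (hgap.gap σ (hnear.trans_lt (half_lt_self hgap.pos))).1
  calc ‖flux f p σ + deriv (fun y => f y σ) x‖
      = |deriv (fun y => f y σ) x - deriv (fun y => f y σ) (p σ)| := by
        rw [Real.norm_eq_abs, flux, neg_add_eq_sub]
    _ ≤ K * |x - p σ| := hK σ _ hnear hpot x (p σ) hx hpσ
    _ ≤ |K| * η := by
        rw [abs_sub_comm]
        exact mul_le_mul (le_abs_self K) hη (abs_nonneg _) (abs_nonneg K)

lemma abs_massBeyond_sub_le (hS : IsL1SolutionP a T fI f p) {t₀ δ : ℝ}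
    (hgap : IsSourceGap a T p t₀ δ) :
    ∃ K, 0 ≤ K ∧ ∀ η t₁ t₂, t₁ ≤ t₂ → η ≤ δ / 8 →
      (∀ σ ∈ Icc t₁ t₂, |σ - t₀| ≤ δ / 2 ∧ |p σ - p t₀| ≤ η) →
      |massBeyond f p t₂ - massBeyond f p t₁| ≤ K * η * (t₂ - t₁) := by
  obtain ⟨K, hK₀, hK⟩ := hS.abs_intervalIntegral_sub_le hgap
  refine ⟨K * 2, by positivity, fun η t₁ t₂ ht hη hσ => ?_⟩
  have hmem : ∀ σ ∈ Icc t₁ t₂, σ ∈ Ioo 0 T := fun σ h =>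
    (hgap.gap σ ((hσ σ h).1.trans_lt (half_lt_self hgap.pos))).1
  have hbound : ∀ τ ∈ Icc t₁ t₂,
      |(∫ y in p τ..1, f y t₂) - ∫ y in p τ..1, f y t₁| ≤ K * 2 * η * (t₂ - t₁) := fun τ hτ => by
    rw [mul_assoc K]
    refine hK (2 * η) t₁ t₂ (p τ) ht ((hσ τ hτ).2.trans hη)
      fun σ h => ⟨(hσ σ h).1, (hσ σ h).2.trans hη, ?_⟩
    linarith [abs_sub_le (p σ) (p t₀) (p τ), abs_sub_comm (p τ) (p t₀), (hσ σ h).2, (hσ τ hτ).2]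
  have h₁ : t₁ ∈ Icc t₁ t₂ := left_mem_Icc.2 ht
  have h₂ : t₂ ∈ Icc t₁ t₂ := right_mem_Icc.2 ht
  have hle₂ := hS.massBeyond_le (hmem t₂ h₂) (Ioo_subset_Icc_self (hS.p_mem t₁ (hmem t₁ h₁)))
  have hle₁ := hS.massBeyond_le (hmem t₁ h₁) (Ioo_subset_Icc_self (hS.p_mem t₂ (hmem t₂ h₂)))
  have hupper := (abs_le.1 (hbound t₁ h₁)).2
  have hlower := (abs_le.1 (hbound t₂ h₂)).1
  simp only [massBeyond] at hle₁ hle₂ ⊢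
  exact abs_le.2 ⟨by linarith, by linarith⟩

lemma hasDerivAt_massBeyond (hS : IsL1SolutionP a T fI f p) {t₀ : ℝ} (ht₀ : t₀ ∈ Ioo 0 T) :
    HasDerivAt (massBeyond f p) 0 t₀ := by
  obtain ⟨δ, hgap⟩ := hS.exists_isSourceGap ht₀
  have hδ := hgap.pos
  obtain ⟨K, hK₀, hK⟩ := hS.abs_massBeyond_sub_le hgap
  rw [hasDerivAt_iff_isLittleO, Asymptotics.isLittleO_iff]
  intro ε hε
  obtain ⟨η, hη, hηε⟩ : ∃ η > 0, η ≤ δ / 8 ∧ K * η ≤ ε := by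
    refine ⟨min (δ / 8) (ε / (K + 1)), by positivity, min_le_left _ _, ?_⟩
    calc K * min (δ / 8) (ε / (K + 1)) ≤ (K + 1) * (ε / (K + 1)) :=
          mul_le_mul (by linarith) (min_le_right _ _) (by positivity) (by positivity)
      _ = ε := by field_simp
  obtain ⟨r, hr, hball⟩ := Metric.continuousAt_iff.1
    (hS.p_cont.continuousAt (isOpen_Ioo.mem_nhds ht₀)) η hη
  filter_upwards [Metric.ball_mem_nhds t₀ (lt_min hr (half_pos hδ))] with t ht
  have hnear : ∀ σ ∈ uIcc t₀ t, |σ - t₀| ≤ δ / 2 ∧ |p σ - p t₀| ≤ η := fun σ hσ => by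
    have hσt : |σ - t₀| < min r (δ / 2) := (abs_sub_left_of_mem_uIcc hσ).trans_lt ht
    exact ⟨hσt.le.trans (min_le_right _ _), (hball (hσt.trans_le (min_le_left _ _))).le⟩
  rw [smul_zero, sub_zero, Real.norm_eq_abs, Real.norm_eq_abs]
  rcases le_total t₀ t with hle | hle
  · rw [uIcc_of_le hle] at hnear
    rw [abs_of_nonneg (sub_nonneg.2 hle)]
    exact (hK η t₀ t hle hηε.1 hnear).trans
      (mul_le_mul_of_nonneg_right hηε.2 (sub_nonneg.2 hle))
  · rw [uIcc_of_ge hle] at hnear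
    rw [abs_sub_comm, abs_sub_comm t, abs_of_nonneg (sub_nonneg.2 hle)]
    exact (hK η t t₀ hle hηε.1 hnear).trans
      (mul_le_mul_of_nonneg_right hηε.2 (sub_nonneg.2 hle))

lemma massBeyond_eq (hS : IsL1SolutionP a T fI f p) {s t : ℝ} (hs : s ∈ Ioo 0 T)
    (ht : t ∈ Ioo 0 T) : massBeyond f p s = massBeyond f p t :=
  isOpen_Ioo.is_const_of_deriv_eq_zero isPreconnected_Ioo
    (fun _ hτ => (hS.hasDerivAt_massBeyond hτ).differentiableAt.differentiableWithinAt)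
    (fun _ hτ => (hS.hasDerivAt_massBeyond hτ).deriv) hs ht

lemma massBeyond_neg (hS : IsL1SolutionP a T fI f p) {t : ℝ} (ht : t ∈ Ioo 0 T) :
    massBeyond f p t < 0 := by
  have hp := hS.p_mem t ht
  have hpos := intervalIntegral.intervalIntegral_pos_of_pos_on
    (hS.intervalIntegrable ht (Ioo_subset_Icc_self hp) (right_mem_Icc.2 (by norm_num))).neg
    (fun x hx => neg_pos.2 (hS.neg_right t ht x (Ioo_subset_Ioc_self hx))) hp.2
  rw [massBeyond]
  simpa using hpos

end IsL1SolutionP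

/-! ### The free boundary stays away from the walls -/

lemma heatGammaMass_le_one (y t : ℝ) {c : ℝ} (hc : c ∈ Icc (-1 : ℝ) 1) :
    heatGammaMass c y t ≤ 1 := by
  rw [heatGammaMass, intervalIntegral.integral_of_le hc.2]
  exact (setIntegral_mono_set (integrableOn_heatGamma_left y t)
    (.of_forall fun x => heatGamma_nonneg x y t)
    (Ioc_subset_Ioc_left hc.1).eventuallyLE).trans (setIntegral_heatGamma_left_le y t)

lemma heatGammaMass_nonneg (y t : ℝ) {c : ℝ} (hc : c ≤ 1) : 0 ≤ heatGammaMass c y t :=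
  intervalIntegral.integral_nonneg hc fun x _ => heatGamma_nonneg x y t

lemma heatGammaMass_le_mul {c y t M : ℝ} (hc : c ∈ Icc (-1 : ℝ) 1)
    (hM : ∀ x ∈ Icc c 1, heatGamma x y t ≤ M) : heatGammaMass c y t ≤ M * (1 - c) := by
  have hint := intervalIntegrable_heatGamma_left c 1 y t hc (right_mem_Icc.2 (by norm_num))
  calc heatGammaMass c y t ≤ ∫ _ in c..1, M :=
        intervalIntegral.integral_mono_on hc.2 hint intervalIntegrable_const hM
    _ = M * (1 - c) := by rw [intervalIntegral.integral_const, smul_eq_mul, mul_comm]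

namespace IsHeatSource

variable {ρ : Measure (ℝ × ℝ × ℝ)} {T : ℝ}

lemma tendsto_integral_abs_charge (hρ : IsHeatSource ρ) (htime : ∀ᵐ ω ∂ρ, ω.2.1 < T) :
    Tendsto (fun s => ∫ ω in {ω | s ≤ ω.2.1}, |ω.2.2| ∂ρ) (𝓝[<] T) (𝓝 0) := by
  have hset : ∀ s : ℝ, MeasurableSet {ω : ℝ × ℝ × ℝ | s ≤ ω.2.1} := fun s =>
    measurable_snd.fst measurableSet_Ici
  simp only [← integral_indicator (hset _)]
  rw [← integral_zero (ℝ × ℝ × ℝ) ℝ (μ := ρ)]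
  refine tendsto_integral_filter_of_dominated_convergence (fun ω => |ω.2.2|)
    (.of_forall fun s => (hρ.integrable_charge.abs.indicator (hset s)).aestronglyMeasurable)
    (.of_forall fun s => .of_forall fun ω => ?_) hρ.integrable_charge.abs
    (htime.mono fun ω hω => tendsto_nhds_of_eventually_eq ?_)
  · exact (norm_indicator_le_norm_self _ ω).trans_eq (by simp)
  · filter_upwards [Ioo_mem_nhdsLT hω] with s hs
    exact indicator_of_notMem (s := {ω : ℝ × ℝ × ℝ | s ≤ ω.2.1}) (not_le.2 hs.1) _

lemma exists_charge_mul_heatGammaMass_le (hρ : IsHeatSource ρ) {s : ℝ} (hT : 0 ≤ T)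
    (hs : s < T) : ∃ M, 0 ≤ M ∧ ∀ t ∈ Ioo ((s + T) / 2) T, ∀ c ∈ Icc (-1 : ℝ) 1, ∀ᵐ ω ∂ρ,
      |ω.2.2 * heatGammaMass c ω.1 (t - ω.2.1)|
        ≤ M * (1 - c) * |ω.2.2| + {ω : ℝ × ℝ × ℝ | s ≤ ω.2.1}.indicator (fun ω => |ω.2.2|) ω := by
  obtain ⟨M, hM₀, hM⟩ := exists_heatGamma_le one_pos (show 0 < (T - s) / 2 by linarith) hT
  refine ⟨M, hM₀, fun t ht c hc => ?_⟩
  filter_upwards [hρ.position_mem, hρ.time_nonneg] with ω hpos htime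
  rw [abs_mul, abs_of_nonneg (heatGammaMass_nonneg _ _ hc.2), mul_comm |ω.2.2|]
  have hdecay : 0 ≤ M * (1 - c) * |ω.2.2| :=
    mul_nonneg (mul_nonneg hM₀ (sub_nonneg.2 hc.2)) (abs_nonneg _)
  by_cases hω : s ≤ ω.2.1
  · rw [indicator_of_mem (s := {ω : ℝ × ℝ × ℝ | s ≤ ω.2.1}) hω]
    have := mul_le_mul_of_nonneg_right (heatGammaMass_le_one ω.1 (t - ω.2.1) hc) (abs_nonneg ω.2.2)
    linarith
  · rw [indicator_of_notMem (s := {ω : ℝ × ℝ × ℝ | s ≤ ω.2.1}) hω, add_zero]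
    refine mul_le_mul_of_nonneg_right (heatGammaMass_le_mul hc fun x hx => ?_) (abs_nonneg _)
    exact hM x ω.1 _ ⟨hc.1.trans hx.1, hx.2⟩ hpos (by linarith [ht.2])
      (.inr (.inl (by linarith [ht.1, not_le.1 hω])))

/-- No heat concentrates at the wall `x = 1` as `t → T`: sources released before a time `s < T`
have bounded kernels, and the total charge released after `s` is small. -/
lemma exists_abs_intervalIntegral_le [SFinite ρ] (hρ : IsHeatSource ρ) (hT : 0 ≤ T)
    (htime : ∀ᵐ ω ∂ρ, ω.2.1 < T) {ε : ℝ} (hε : 0 < ε) :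
    ∃ η > 0, ∀ᶠ t in 𝓝[<] T, ∀ u, IsPotentialAt ρ t u →
      ∀ c ∈ Icc (1 - η) 1, -1 ≤ c → |∫ x in c..1, u x| ≤ ε := by
  obtain ⟨s, htail, hs⟩ := (((hρ.tendsto_integral_abs_charge htime).eventually_lt_const
    (half_pos hε)).and self_mem_nhdsWithin).exists
  obtain ⟨M, hM₀, hM⟩ := hρ.exists_charge_mul_heatGammaMass_le hT hs
  set Q := ∫ ω, |ω.2.2| ∂ρ
  have hQ : 0 ≤ Q := integral_nonneg fun ω => abs_nonneg _
  have hset : MeasurableSet {ω : ℝ × ℝ × ℝ | s ≤ ω.2.1} := measurable_snd.fst measurableSet_Ici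
  refine ⟨ε / (2 * (M * Q + 1)), by positivity, ?_⟩
  filter_upwards [Ioo_mem_nhdsLT (show (s + T) / 2 < T by linarith [show s < T from hs])]
    with t ht u hu c hc hc'
  have hcIcc : c ∈ Icc (-1 : ℝ) 1 := ⟨hc', hc.2⟩
  rw [hu.intervalIntegral_eq hρ hcIcc]
  calc |∫ ω, ω.2.2 * heatGammaMass c ω.1 (t - ω.2.1) ∂ρ|
      ≤ ∫ ω, |ω.2.2 * heatGammaMass c ω.1 (t - ω.2.1)| ∂ρ := abs_integral_le_integral_abs
    _ ≤ ∫ ω, (M * (1 - c) * |ω.2.2|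
          + {ω : ℝ × ℝ × ℝ | s ≤ ω.2.1}.indicator (fun ω => |ω.2.2|) ω) ∂ρ :=
        integral_mono_ae (hρ.integrable_charge_mul_heatGammaMass t hcIcc).abs
          ((hρ.integrable_charge.abs.const_mul _).add (hρ.integrable_charge.abs.indicator hset))
          (hM t ht c hcIcc)
    _ = M * (1 - c) * Q + ∫ ω in {ω | s ≤ ω.2.1}, |ω.2.2| ∂ρ := by
        rw [integral_add (hρ.integrable_charge.abs.const_mul _)
          (hρ.integrable_charge.abs.indicator hset), integral_const_mul, integral_indicator hset]
    _ ≤ (M * Q + 1) * (ε / (2 * (M * Q + 1))) + ε / 2 := by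
        refine add_le_add ?_ htail.le
        rw [mul_right_comm]
        exact mul_le_mul (by linarith) (by linarith [hc.1]) (sub_nonneg.2 hc.2) (by positivity)
    _ = ε := by field_simp; ring

end IsHeatSource

namespace IsL1SolutionP

variable {a T : ℝ} {fI p : ℝ → ℝ} {f : ℝ → ℝ → ℝ}

lemma ae_time_lt (hS : IsL1SolutionP a T fI f p) (hT : 0 < T) :
    ∀ᵐ ω ∂solutionSource a fI T f p, ω.2.1 < T :=
  hS.ae_solutionSource (measurable_snd.fst measurableSet_Iio) (fun _ _ => hT)
    fun _ hs _ => ⟨hs.2, hs.2⟩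

lemma exists_eventually_lt_one_sub (hS : IsL1SolutionP a T fI f p) (hT : 0 < T) :
    ∃ η > 0, ∀ᶠ t in 𝓝[<] T, p t < 1 - η := by
  have hmid : T / 2 ∈ Ioo 0 T := ⟨half_pos hT, half_lt_self hT⟩
  have hneg := hS.massBeyond_neg hmid
  obtain ⟨η, hη, hsmall⟩ := hS.isHeatSource.exists_abs_intervalIntegral_le hT.le (hS.ae_time_lt hT)
    (ε := -massBeyond f p (T / 2) / 2) (by linarith)
  refine ⟨η, hη, ?_⟩
  filter_upwards [hsmall, Ioo_mem_nhdsLT hT] with t hsmall ht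
  by_contra! hp
  have hpIoo := hS.p_mem t ht
  have hle : |massBeyond f p t| ≤ _ :=
    hsmall _ (hS.isPotentialAt ht) (p t) ⟨hp, hpIoo.2.le⟩ hpIoo.1.le
  rw [hS.massBeyond_eq ht hmid, abs_of_neg hneg] at hle
  linarith

end IsL1SolutionP

/-! ### Excursions to the right of the zero -/

/-- A bound for the kernels at times up to `T` off the diagonal, where the squared real distance
exceeds the squared imaginary part by the margin `δ`. An additional margin `κ` has to compensate
the factor `exp (κ / (4 * τ))`, which blows up as `τ → 0`. -/
structure IsOffDiagonalBound (δ T A : ℝ) : Prop where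
  nonneg : 0 ≤ A
  exp_mul_norm_le : ∀ ⦃κ τ θ y : ℝ⦄ ⦃z : ℂ⦄, 0 ≤ κ → θ ≤ τ → τ ≤ T →
    z.re ∈ Icc (-1 : ℝ) 1 → y ∈ Icc (-1 : ℝ) 1 → κ + δ ≤ (z.re - y) ^ 2 - z.im ^ 2 →
      Real.exp (κ / (4 * τ)) * ‖complexHeatGamma z y θ‖ ≤ A

lemma exists_isOffDiagonalBound {δ T : ℝ} (hδ : 0 < δ) (hT : 0 ≤ T) :
    ∃ A, IsOffDiagonalBound δ T A := by
  obtain ⟨C, hC, hCt⟩ := exists_exp_mul_norm_complexHeatGamma_le_mul (T := T) hδ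
  refine ⟨C * T, by positivity, fun κ τ θ y z hκ hθτ hτT hz hy hfar => ?_⟩
  rcases le_or_gt θ 0 with hθ | hθ
  · rw [complexHeatGamma_of_nonpos _ _ hθ, norm_zero, mul_zero]
    positivity
  · calc Real.exp (κ / (4 * τ)) * ‖complexHeatGamma z y θ‖
      _ ≤ Real.exp (κ / (4 * θ)) * ‖complexHeatGamma z y θ‖ := by gcongr
      _ ≤ C * θ := hCt κ z y θ hz hy hθ (hθτ.trans hτT) hfar
      _ ≤ C * T := by gcongr; exact hθτ.trans hτT

namespace IsOffDiagonalBound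

variable {δ T A : ℝ}

lemma norm_le (hA : IsOffDiagonalBound δ T A) {θ y : ℝ} {z : ℂ} (hθ : θ ≤ T)
    (hz : z.re ∈ Icc (-1 : ℝ) 1) (hy : y ∈ Icc (-1 : ℝ) 1)
    (hfar : δ ≤ (z.re - y) ^ 2 - z.im ^ 2) : ‖complexHeatGamma z y θ‖ ≤ A := by
  simpa using hA.exp_mul_norm_le le_rfl le_rfl hθ hz hy (by rwa [zero_add])

lemma exp_mul_heatGamma_le (hA : IsOffDiagonalBound δ T A) {κ τ θ x y : ℝ} (hκ : 0 ≤ κ)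
    (hθτ : θ ≤ τ) (hτT : τ ≤ T) (hx : x ∈ Icc (-1 : ℝ) 1) (hy : y ∈ Icc (-1 : ℝ) 1)
    (hfar : κ + δ ≤ (x - y) ^ 2) : Real.exp (κ / (4 * τ)) * heatGamma x y θ ≤ A := by
  rw [heatGamma_eq_norm_complexHeatGamma]
  exact hA.exp_mul_norm_le hκ hθτ hτT (by simpa using hx) hy (by simpa using hfar)

end IsOffDiagonalBound

lemma norm_complexHeatGamma_le_exp_mul_heatGamma {z : ℂ} {κ x y τ T : ℝ} (hτ : 0 < τ)
    (hτT : τ ≤ T) (hz : z.re ∈ Icc (-1 : ℝ) 1) (hy : y ∈ Icc (-1 : ℝ) 1)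
    (h : z.im ^ 2 - (z.re - y) ^ 2 ≤ κ - (x - y) ^ 2) : ‖complexHeatGamma z y τ‖
      ≤ imageSum T * (Real.exp (κ / (4 * τ)) * heatGamma x y τ) := by
  have hS := imageSum_nonneg T
  calc ‖complexHeatGamma z y τ‖
    _ ≤ (Real.sqrt (4 * Real.pi * τ))⁻¹
        * Real.exp ((z.im ^ 2 - (z.re - y) ^ 2) / (4 * τ)) * imageSum T :=
      norm_complexHeatGamma_le hτ hτT hz hy
    _ ≤ (Real.sqrt (4 * Real.pi * τ))⁻¹ * Real.exp ((κ - (x - y) ^ 2) / (4 * τ))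
        * imageSum T := by gcongr
    _ = imageSum T * (Real.exp (κ / (4 * τ)) * heatK (x - y) τ) := by
      rw [sub_eq_add_neg, add_div, Real.exp_add, heatK]
      ring
    _ ≤ imageSum T * (Real.exp (κ / (4 * τ)) * heatGamma x y τ) := by
      gcongr
      exact heatK_le_heatGamma x y τ

lemma integral_mul_abs_le_neg_integral_mul {α : Type*} [MeasurableSpace α] {μ : Measure α}
    {w u : α → ℝ} {A : ℝ} (hu : Integrable u μ) (hwu : Integrable (fun y => w y * u y) μ)
    (hA : 0 ≤ A) (hw : ∀ᵐ y ∂μ, 0 ≤ w y) (h : ∀ᵐ y ∂μ, u y ≤ 0 ∨ w y ≤ A) :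
    ∫ y, w y * |u y| ∂μ ≤ -(∫ y, w y * u y ∂μ) + 2 * A * ∫ y, |u y| ∂μ := by
  have hneg : Integrable (fun y => -(w y * u y)) μ := hwu.neg
  have habs := hu.abs.const_mul (2 * A)
  rw [← integral_neg, ← integral_const_mul, ← integral_add hneg habs]
  refine integral_mono_of_nonneg (hw.mono fun y hwy => mul_nonneg hwy (abs_nonneg _))
    (hneg.add habs) ?_
  filter_upwards [h] with y hy
  rcases le_or_gt (u y) 0 with huy | huy
  · rw [abs_of_nonpos huy]
    nlinarith
  · rw [abs_of_pos huy]
    nlinarith [hy.resolve_left huy.not_ge]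

/-- From time `s` to time `t` the profile `u` evolves into `v` under the sources `ρ`, which stay
at distance `2 * d` from the interior point `R`. The profile `u` is nonpositive to the right of
`R - d`, and `v` vanishes at the point `x₀` near `R`. -/
structure IsExcursion (ρ : Measure (ℝ × ℝ × ℝ)) (R d s t : ℝ) (u v : ℝ → ℝ) (x₀ : ℝ) : Prop where
  pos : 0 < d
  le_left : -1 + d ≤ R
  le_right : R + d ≤ 1
  time_nonneg : 0 ≤ s
  time_lt : s < t
  isHeatSource : IsHeatSource ρ
  ae_time_le : ∀ᵐ ω ∂ρ, s ≤ ω.2.1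
  ae_far : ∀ᵐ ω ∂ρ, ω.2.1 < t → 2 * d ≤ |ω.1 - R|
  integrableOn : IntegrableOn u (Ioc (-1 : ℝ) 1)
  nonpos : ∀ y ∈ Ioc (R - d) 1, u y ≤ 0
  isPotentialAt : IsPotentialAt (releaseAt s u + ρ) t v
  abs_sub_lt : |x₀ - R| < d / 16
  zero_at : v x₀ = 0

lemma sq_sub_add_le_of_mem_ball {R d x y : ℝ} {z : ℂ} (hz : z ∈ Metric.ball (R : ℂ) (d / 16))
    (hx : |x - R| < d / 16) (hy : |y - R| ≤ d / 2) :
    z.im ^ 2 - (z.re - y) ^ 2 ≤ d ^ 2 / 4 - (x - y) ^ 2 := by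
  obtain ⟨hre, him⟩ := abs_re_sub_lt_and_abs_im_lt hz
  rw [abs_lt] at hre him hx
  rw [abs_le] at hy
  have him_sq : z.im ^ 2 ≤ (d / 16) ^ 2 := sq_le_sq' (by linarith) him.2.le
  have hprod : |x - z.re| * |x + z.re - 2 * y| ≤ (d / 8) * (9 / 8 * d) :=
    mul_le_mul (abs_le.2 ⟨by linarith, by linarith⟩) (abs_le.2 ⟨by linarith, by linarith⟩)
      (abs_nonneg _) (by linarith)
  rw [← abs_mul] at hprod
  nlinarith [(abs_le.1 hprod).2]

lemma sq_le_sq_sub_of_mem_ball {R d y : ℝ} {z : ℂ} (hz : z ∈ Metric.ball (R : ℂ) (d / 16))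
    (hy : d / 2 ≤ |y - R|) : d ^ 2 / 8 ≤ (z.re - y) ^ 2 - z.im ^ 2 := by
  obtain ⟨hre, him⟩ := abs_re_sub_lt_and_abs_im_lt hz
  have him_sq : z.im ^ 2 ≤ (d / 16) ^ 2 :=
    sq_le_sq' (by linarith [abs_lt.1 him]) (abs_lt.1 him).2.le
  have hdist : 7 / 16 * d ≤ |z.re - y| := by
    linarith [abs_sub_le y z.re R, abs_sub_comm y z.re]
  have hre_sq : (7 / 16 * d) ^ 2 ≤ |z.re - y| ^ 2 :=
    pow_le_pow_left₀ (by linarith [abs_nonneg z.im]) hdist 2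
  rw [sq_abs] at hre_sq
  nlinarith

lemma sq_le_sq_sub_of_abs_sub_lt {R d x y : ℝ} (hx : |x - R| < d / 16) (hy : d ≤ |y - R|) :
    d ^ 2 / 4 + d ^ 2 / 8 ≤ (x - y) ^ 2 := by
  have hdist : 15 / 16 * d ≤ |x - y| := by linarith [abs_sub_le y x R, abs_sub_comm y x]
  have hsq : (15 / 16 * d) ^ 2 ≤ |x - y| ^ 2 :=
    pow_le_pow_left₀ (by linarith [abs_nonneg (x - R)]) hdist 2
  rw [sq_abs] at hsq
  nlinarith

namespace IsHolomorphyDomain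

lemma integrable_abs_charge_mul {ρ : Measure (ℝ × ℝ × ℝ)} {t : ℝ} {U : Set ℂ}
    (hU : IsHolomorphyDomain ρ t U) (hρ : IsHeatSource ρ) {z : ℂ} (hz : z ∈ U) :
    Integrable (fun ω => |ω.2.2| * ‖complexHeatGamma z ω.1 (t - ω.2.1)‖) ρ := by
  obtain ⟨M, hM⟩ := hU.exists_bound
  refine hρ.integrable_charge.abs.mul_bdd (c := M)
    (measurable_complexHeatGamma_sub z t).norm.aestronglyMeasurable (hM.mono fun ω hω => ?_)
  rw [norm_norm]
  exact hω z hz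

end IsHolomorphyDomain

namespace IsExcursion

variable {ρ : Measure (ℝ × ℝ × ℝ)} {R d s t T A x₀ : ℝ} {u v : ℝ → ℝ}

lemma mem_Ioo (hE : IsExcursion ρ R d s t u v x₀) {x : ℝ} (hx : |x - R| < d / 16) :
    x ∈ Ioo (-1 : ℝ) 1 := by
  have := abs_lt.1 hx
  exact ⟨by linarith [hE.le_left, hE.pos], by linarith [hE.le_right, hE.pos]⟩

lemma isHeatSource_add (hE : IsExcursion ρ R d s t u v x₀) : IsHeatSource (releaseAt s u + ρ) :=
  (isHeatSource_releaseAt hE.time_nonneg hE.integrableOn).add hE.isHeatSource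

lemma isHolomorphyDomain (hE : IsExcursion ρ R d s t u v x₀) :
    IsHolomorphyDomain (releaseAt s u + ρ) t (Metric.ball (R : ℂ) (d / 16)) where
  isOpen := Metric.isOpen_ball
  subset z hz := by
    obtain ⟨hre, him⟩ := abs_re_sub_lt_and_abs_im_lt hz
    refine ⟨hE.mem_Ioo hre, abs_lt.1 (him.trans ?_)⟩
    linarith [hE.le_left, hE.le_right]
  exists_bound := by
    have hd := hE.pos
    obtain ⟨M, -, hM⟩ := exists_norm_complexHeatGamma_le (δ := d ^ 2 / 8) (T := t) (by positivity)
      (sub_pos.2 hE.time_lt) (hE.time_nonneg.trans hE.time_lt.le)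
    have hold_or_far : ∀ᵐ ω ∂releaseAt s u + ρ,
        t - ω.2.1 ≤ 0 ∨ t - s ≤ t - ω.2.1 ∨ d / 2 ≤ |ω.1 - R| := by
      refine ae_add_measure_iff.2 ⟨?_, ?_⟩
      · exact (ae_map_iff (aemeasurable_releaseAt hE.integrableOn s) (by measurability)).2
          (.of_forall fun y => .inr (.inl le_rfl))
      · filter_upwards [hE.ae_far] with ω hω
        rcases le_or_gt t ω.2.1 with hnew | hold
        · exact .inl (sub_nonpos.2 hnew)
        · exact .inr (.inr (by linarith [hω hold]))
    refine ⟨M, ?_⟩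
    filter_upwards [hE.isHeatSource_add.position_mem, hE.isHeatSource_add.time_nonneg,
      hold_or_far] with ω hpos htime hω z hz
    obtain ⟨hre, him⟩ := abs_re_sub_lt_and_abs_im_lt hz
    exact hM z ω.1 _ (Ioo_subset_Icc_self (hE.mem_Ioo hre))
      (by linarith [hE.le_left, hE.le_right]) hpos (by linarith)
      (hω.imp_right (Or.imp_right (sq_le_sq_sub_of_mem_ball hz)))

lemma integrable_heatSourceKernel_zero (hE : IsExcursion ρ R d s t u v x₀) :
    Integrable (heatSourceKernel x₀ t) (releaseAt s u + ρ) := by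
  refine hE.isHolomorphyDomain.integrable_heatSourceKernel hE.isHeatSource_add ?_
  rw [Metric.mem_ball, Complex.dist_eq, ← Complex.ofReal_sub, Complex.norm_real]
  exact hE.abs_sub_lt

lemma integral_mul_heatGamma_eq (hE : IsExcursion ρ R d s t u v x₀) :
    ∫ y in Ioc (-1 : ℝ) 1, u y * heatGamma x₀ y (t - s) = -heatPotential ρ x₀ t := by
  have hint := integrable_add_measure.1 hE.integrable_heatSourceKernel_zero
  have hzero : 0 = heatPotential (releaseAt s u) x₀ t + heatPotential ρ x₀ t := by
    rw [← hE.zero_at, hE.isPotentialAt x₀ (Ioo_subset_Icc_self (hE.mem_Ioo hE.abs_sub_lt))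
      hE.integrable_heatSourceKernel_zero]
    exact integral_add_measure hint.1 hint.2
  rw [heatPotential_releaseAt hE.integrableOn] at hzero
  linarith

lemma exp_mul_heatPotential_le (hE : IsExcursion ρ R d s t u v x₀) (ht : t ≤ T)
    (hA : IsOffDiagonalBound (d ^ 2 / 8) T A) :
    Real.exp (d ^ 2 / 4 / (4 * (t - s))) * heatPotential ρ x₀ t ≤ A * ∫ ω, |ω.2.2| ∂ρ := by
  rw [heatPotential, ← integral_const_mul, ← integral_const_mul]
  have hint := (integrable_add_measure.1 hE.integrable_heatSourceKernel_zero).2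
  refine integral_mono_ae (hint.const_mul _) (hE.isHeatSource.integrable_charge.abs.const_mul A) ?_
  filter_upwards [hE.isHeatSource.position_mem, hE.ae_time_le, hE.ae_far] with ω hpos htime hfar
  have hkernel : Real.exp (d ^ 2 / 4 / (4 * (t - s))) * heatGamma x₀ ω.1 (t - ω.2.1) ≤ A := by
    rcases le_or_gt t ω.2.1 with hnew | hold
    · rw [heatGamma_of_nonpos _ _ (sub_nonpos.2 hnew), mul_zero]
      exact hA.nonneg
    · exact hA.exp_mul_heatGamma_le (by positivity) (by linarith)
        (by linarith [hE.time_nonneg]) (Ioo_subset_Icc_self (hE.mem_Ioo hE.abs_sub_lt)) hpos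
        (sq_le_sq_sub_of_abs_sub_lt hE.abs_sub_lt (by linarith [hfar hold, hE.pos]))
  calc Real.exp (d ^ 2 / 4 / (4 * (t - s))) * heatSourceKernel x₀ t ω
    _ ≤ Real.exp (d ^ 2 / 4 / (4 * (t - s))) * |heatSourceKernel x₀ t ω| := by
      gcongr
      exact le_abs_self _
    _ = Real.exp (d ^ 2 / 4 / (4 * (t - s))) * heatGamma x₀ ω.1 (t - ω.2.1) * |ω.2.2| := by
      rw [abs_heatSourceKernel]
      ring
    _ ≤ A * |ω.2.2| := by gcongr

lemma integrableOn_heatGamma_mul (hE : IsExcursion ρ R d s t u v x₀) :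
    IntegrableOn (fun y => heatGamma x₀ y (t - s) * u y) (Ioc (-1 : ℝ) 1) := by
  simpa only [heatSourceKernel, mul_comm, IntegrableOn] using
    (integrable_heatSourceKernel_map (aemeasurable_releaseAt hE.integrableOn s) x₀ t).1
      (integrable_add_measure.1 hE.integrable_heatSourceKernel_zero).1

/-- At the zero `x₀` the heat of `u` cancels the heat of the remote sources, so its negative part
is controlled even after amplification by `exp (d ^ 2 / (16 * (t - s)))`. -/
lemma integral_exp_mul_heatGamma_mul_abs_le (hE : IsExcursion ρ R d s t u v x₀) (ht : t ≤ T)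
    (hA : IsOffDiagonalBound (d ^ 2 / 8) T A) :
    ∫ y in Ioc (-1 : ℝ) 1, Real.exp (d ^ 2 / 4 / (4 * (t - s))) * heatGamma x₀ y (t - s) * |u y|
      ≤ A * ∫ ω, |ω.2.2| ∂ρ + 2 * A * ∫ y in Ioc (-1 : ℝ) 1, |u y| := by
  have hcancel : -∫ y in Ioc (-1 : ℝ) 1,
      Real.exp (d ^ 2 / 4 / (4 * (t - s))) * heatGamma x₀ y (t - s) * u y
      = Real.exp (d ^ 2 / 4 / (4 * (t - s))) * heatPotential ρ x₀ t := by
    simp only [mul_assoc, mul_comm (heatGamma _ _ _), integral_const_mul]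
    rw [hE.integral_mul_heatGamma_eq]
    ring
  refine (integral_mul_abs_le_neg_integral_mul (A := A) hE.integrableOn ?_ hA.nonneg ?_ ?_).trans ?_
  · simpa only [mul_assoc] using hE.integrableOn_heatGamma_mul.const_mul _
  · exact .of_forall fun y => mul_nonneg (Real.exp_pos _).le (heatGamma_nonneg _ _ _)
  · filter_upwards [ae_restrict_mem measurableSet_Ioc] with y hy
    rcases le_or_gt y (R - d) with hleft | hright
    · exact .inr (hA.exp_mul_heatGamma_le (by positivity) le_rfl (by linarith [hE.time_nonneg])
        (Ioo_subset_Icc_self (hE.mem_Ioo hE.abs_sub_lt)) (Ioc_subset_Icc_self hy)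
        (sq_le_sq_sub_of_abs_sub_lt hE.abs_sub_lt (by linarith [neg_abs_le (y - R)])))
    · exact .inl (hE.nonpos y ⟨hright, hy.2⟩)
  · rw [hcancel]
    exact add_le_add_left (hE.exp_mul_heatPotential_le ht hA) _

lemma integral_abs_mul_norm_profile_le (hE : IsExcursion ρ R d s t u v x₀) (ht : t ≤ T)
    (hA : IsOffDiagonalBound (d ^ 2 / 8) T A) {z : ℂ} (hz : z ∈ Metric.ball (R : ℂ) (d / 16)) :
    ∫ y in Ioc (-1 : ℝ) 1, |u y| * ‖complexHeatGamma z y (t - s)‖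
      ≤ imageSum T * (A * ∫ ω, |ω.2.2| ∂ρ + 2 * A * ∫ y in Ioc (-1 : ℝ) 1, |u y|)
        + A * ∫ y in Ioc (-1 : ℝ) 1, |u y| := by
  set E := Real.exp (d ^ 2 / 4 / (4 * (t - s)))
  have hS := imageSum_nonneg T
  have hre := Ioo_subset_Icc_self (hE.mem_Ioo (abs_re_sub_lt_and_abs_im_lt hz).1)
  have hτT : t - s ≤ T := by linarith [hE.time_nonneg]
  have hint : IntegrableOn (fun y => E * heatGamma x₀ y (t - s) * |u y|) (Ioc (-1 : ℝ) 1) := by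
    refine (hE.integrableOn_heatGamma_mul.abs.const_mul E).congr (.of_forall fun y => ?_)
    simp only [abs_mul, abs_of_nonneg (heatGamma_nonneg _ _ _), mul_assoc]
  have hint_near := hint.const_mul (imageSum T)
  have hint_far := hE.integrableOn.abs.const_mul A
  have hpointwise : ∀ y ∈ Ioc (-1 : ℝ) 1, |u y| * ‖complexHeatGamma z y (t - s)‖
      ≤ imageSum T * (E * heatGamma x₀ y (t - s) * |u y|) + A * |u y| := by
    intro y hy
    have hΓ := heatGamma_nonneg x₀ y (t - s)
    have hA₀ := hA.nonneg
    have hkernel : ‖complexHeatGamma z y (t - s)‖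
        ≤ imageSum T * (E * heatGamma x₀ y (t - s)) + A := by
      rcases le_total |y - R| (d / 2) with hnear | hfar
      · exact (norm_complexHeatGamma_le_exp_mul_heatGamma (sub_pos.2 hE.time_lt) hτT hre
          (Ioc_subset_Icc_self hy) (sq_sub_add_le_of_mem_ball hz hE.abs_sub_lt hnear)).trans
          (le_add_of_nonneg_right hA₀)
      · exact (hA.norm_le hτT hre (Ioc_subset_Icc_self hy)
          (sq_le_sq_sub_of_mem_ball hz hfar)).trans (le_add_of_nonneg_left (by positivity))
    linarith [mul_le_mul_of_nonneg_left hkernel (abs_nonneg (u y))]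
  calc ∫ y in Ioc (-1 : ℝ) 1, |u y| * ‖complexHeatGamma z y (t - s)‖
    _ ≤ ∫ y in Ioc (-1 : ℝ) 1,
        (imageSum T * (E * heatGamma x₀ y (t - s) * |u y|) + A * |u y|) :=
      integral_mono_of_nonneg (.of_forall fun y => by positivity) (hint_near.add hint_far)
        ((ae_restrict_mem measurableSet_Ioc).mono hpointwise)
    _ = imageSum T * (∫ y in Ioc (-1 : ℝ) 1, E * heatGamma x₀ y (t - s) * |u y|)
        + A * ∫ y in Ioc (-1 : ℝ) 1, |u y| := by
      rw [integral_add hint_near hint_far, integral_const_mul, integral_const_mul]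
    _ ≤ _ := by
      gcongr
      exact hE.integral_exp_mul_heatGamma_mul_abs_le ht hA

lemma integral_abs_mul_norm_source_le (hE : IsExcursion ρ R d s t u v x₀) (ht : t ≤ T)
    (hA : IsOffDiagonalBound (d ^ 2 / 8) T A) {z : ℂ} (hz : z ∈ Metric.ball (R : ℂ) (d / 16)) :
    ∫ ω, |ω.2.2| * ‖complexHeatGamma z ω.1 (t - ω.2.1)‖ ∂ρ ≤ A * ∫ ω, |ω.2.2| ∂ρ := by
  rw [← integral_const_mul]
  refine integral_mono_of_nonneg (.of_forall fun ω => by positivity)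
    (hE.isHeatSource.integrable_charge.abs.const_mul A) ?_
  filter_upwards [hE.isHeatSource.position_mem, hE.ae_time_le, hE.ae_far] with ω hpos htime hfar
  rw [mul_comm A]
  refine mul_le_mul_of_nonneg_left ?_ (abs_nonneg _)
  rcases le_or_gt t ω.2.1 with hnew | hold
  · rw [complexHeatGamma_of_nonpos _ _ (sub_nonpos.2 hnew), norm_zero]
    exact hA.nonneg
  · exact hA.norm_le (by linarith [hE.time_nonneg])
      (Ioo_subset_Icc_self (hE.mem_Ioo (abs_re_sub_lt_and_abs_im_lt hz).1)) hpos
      (sq_le_sq_sub_of_mem_ball hz (by linarith [hfar hold, hE.pos]))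

lemma integral_abs_mul_norm_le (hE : IsExcursion ρ R d s t u v x₀) (ht : t ≤ T)
    (hA : IsOffDiagonalBound (d ^ 2 / 8) T A) {z : ℂ} (hz : z ∈ Metric.ball (R : ℂ) (d / 16)) :
    ∫ ω, |ω.2.2| * ‖complexHeatGamma z ω.1 (t - ω.2.1)‖ ∂(releaseAt s u + ρ)
      ≤ imageSum T * (A * ∫ ω, |ω.2.2| ∂ρ + 2 * A * ∫ y in Ioc (-1 : ℝ) 1, |u y|)
        + A * (∫ y in Ioc (-1 : ℝ) 1, |u y|) + A * ∫ ω, |ω.2.2| ∂ρ := by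
  have hint := integrable_add_measure.1
    (hE.isHolomorphyDomain.integrable_abs_charge_mul hE.isHeatSource_add hz)
  rw [integral_add_measure hint.1 hint.2, releaseAt,
    integral_map (aemeasurable_releaseAt hE.integrableOn s) hint.1.aestronglyMeasurable]
  exact add_le_add (hE.integral_abs_mul_norm_profile_le ht hA hz)
    (hE.integral_abs_mul_norm_source_le ht hA hz)

end IsExcursion

lemma exists_abs_iteratedDeriv_le_of_isExcursion {d T Q : ℝ} (hd : 0 < d) (hT : 0 ≤ T) (R : ℝ)
    (m : ℕ) : ∃ C, ∀ {ρ : Measure (ℝ × ℝ × ℝ)} {s t : ℝ} {u v : ℝ → ℝ} {x₀ : ℝ},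
      IsExcursion ρ R d s t u v x₀ → t ≤ T → ∫ y in Ioc (-1 : ℝ) 1, |u y| ≤ Q →
      ∫ ω, |ω.2.2| ∂ρ ≤ Q → ∀ x, |x - R| ≤ d / 64 → |iteratedDeriv m v x| ≤ C := by
  obtain ⟨A, hA⟩ := exists_isOffDiagonalBound (δ := d ^ 2 / 8) (by positivity) hT
  refine ⟨m.factorial * (imageSum T * (A * Q + 2 * A * Q) + A * Q + A * Q) / (d / 64) ^ m,
    fun hE ht hu hρ x hx => ?_⟩
  refine hE.isHolomorphyDomain.abs_iteratedDeriv_le hE.isHeatSource_add hE.isPotentialAt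
    (by positivity) (closedBall_ofReal_subset_ball (by linarith)) (fun z hz => ?_) m
  have hS := imageSum_nonneg T
  have hA₀ := hA.nonneg
  refine (hE.integral_abs_mul_norm_le ht hA hz).trans ?_
  gcongr

/-! ### Derivative bounds after an oscillation -/

lemma exists_last_eq_of_lt {p : ℝ → ℝ} {s₀ t c : ℝ} (hst : s₀ ≤ t) (hp : ContinuousOn p (Icc s₀ t))
    (hs₀ : p s₀ ≤ c) (ht : c < p t) :
    ∃ s ∈ Ico s₀ t, p s = c ∧ ∀ σ ∈ Icc s t, c ≤ p σ := by
  have hcompact : IsCompact (Icc s₀ t ∩ p ⁻¹' Iic c) :=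
    isCompact_Icc.of_isClosed_subset (hp.preimage_isClosed_of_isClosed isClosed_Icc isClosed_Iic)
      inter_subset_left
  obtain ⟨s, ⟨hs, hsc⟩, hlast⟩ := hcompact.exists_isGreatest ⟨s₀, left_mem_Icc.2 hst, hs₀⟩
  have hafter : ∀ σ ∈ Ioc s t, c < p σ := fun σ hσ => by
    by_contra! h
    exact hσ.1.not_ge (hlast ⟨⟨hs.1.trans hσ.1.le, hσ.2⟩, h⟩)
  have hlt : s < t := hs.2.lt_of_ne fun h => ht.not_ge (h ▸ hsc)
  obtain ⟨σ, hσ, hσc⟩ := intermediate_value_Icc hlt.le (hp.mono (Icc_subset_Icc_left hs.1))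
    ⟨hsc, ht.le⟩
  have hsσ : s = σ := hσ.1.eq_of_not_lt fun h => (hafter σ ⟨h, hσ.2⟩).ne' hσc
  have hpsc : p s = c := hsσ ▸ hσc
  refine ⟨s, ⟨hs.1, hlt⟩, hpsc, fun σ hσ => ?_⟩
  rcases hσ.1.eq_or_lt with rfl | h
  exacts [hpsc.ge, (hafter σ ⟨h, hσ.2⟩).le]

namespace IsL1SolutionP

variable {a T R d s t : ℝ} {fI p : ℝ → ℝ} {f : ℝ → ℝ → ℝ}

lemma integral_abs_le (hS : IsL1SolutionP a T fI f p) (ht : t ∈ Ioo 0 T) :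
    ∫ y in Ioc (-1 : ℝ) 1, |f y t| ≤ ∫ ω, |ω.2.2| ∂solutionSource a fI T f p :=
  (hS.isPotentialAt ht).integral_abs_le hS.isHeatSource

lemma ae_far (hS : IsL1SolutionP a T fI f p) (hs : 0 < s) (hda : 3 * d ≤ a)
    (hleft : -1 + 4 * d ≤ R) (hright : R + 4 * d ≤ 1) (hp : ∀ σ ∈ Icc s t, |p σ - R| ≤ d) :
    ∀ᵐ ω ∂solutionSource a fI T f p, s ≤ ω.2.1 → ω.2.1 < t → 2 * d ≤ |ω.1 - R| := by
  refine hS.ae_solutionSource (by measurability) (fun _ _ h => absurd h hs.not_ge)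
    fun σ _ _ => ⟨fun hsσ hσt => ?_, fun hsσ hσt => ?_⟩
  all_goals
    have hpσ := abs_le.1 (hp σ ⟨hsσ, hσt.le⟩)
    have habar : 3 * d ≤ abar a p σ := le_min hda (le_min (by linarith) (by linarith))
  · exact le_abs'.2 (.inl (by linarith))
  · exact le_abs'.2 (.inr (by linarith))

lemma isExcursion (hS : IsL1SolutionP a T fI f p) (hd : 0 < d) (hs : 0 < s) (hst : s < t)
    (ht : t < T) (hda : 3 * d ≤ a) (hleft : -1 + 4 * d ≤ R) (hright : R + 4 * d ≤ 1)
    (hps : p s = R - d) (hp : ∀ σ ∈ Icc s t, |p σ - R| ≤ d) (hpt : |p t - R| < d / 16) :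
    IsExcursion ((solutionSource a fI T f p).restrict {ω | s ≤ ω.2.1}) R d s t
      (fun x => f x s) (fun x => f x t) (p t) where
  pos := hd
  le_left := by linarith
  le_right := by linarith
  time_nonneg := hs.le
  time_lt := hst
  isHeatSource := hS.isHeatSource.restrict _
  ae_time_le := ae_restrict_mem (measurable_snd.fst measurableSet_Ici)
  ae_far := (ae_restrict_iff' (measurable_snd.fst measurableSet_Ici)).2
    (hS.ae_far hs hda hleft hright hp)
  integrableOn := (hS.isPotentialAt ⟨hs, hst.trans ht⟩).integrableOn hS.isHeatSource
  nonpos y hy := (hS.neg_right s ⟨hs, hst.trans ht⟩ y (hps ▸ hy)).le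
  isPotentialAt := (hS.isPotentialAt ⟨hs, hst.trans ht⟩).restart hS.isHeatSource hs.le hst
    (hS.isPotentialAt ⟨hs.trans hst, ht⟩)
  abs_sub_lt := hpt
  zero_at := hS.zero_at t ⟨hs.trans hst, ht⟩

lemma exists_isExcursion (hS : IsL1SolutionP a T fI f p) (hd : 0 < d) {s₀ : ℝ} (hs₀ : 0 < s₀)
    (hs₀t : s₀ ≤ t) (ht : t < T) (hda : 3 * d ≤ a) (hleft : -1 + 4 * d ≤ R)
    (hright : R + 4 * d ≤ 1) (hps₀ : p s₀ ≤ R - d) (hp : ∀ σ ∈ Icc s₀ t, p σ ≤ R + d)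
    (hpt : |p t - R| < d / 16) :
    ∃ s ∈ Ioo 0 T, IsExcursion ((solutionSource a fI T f p).restrict {ω | s ≤ ω.2.1}) R d s t
      (fun x => f x s) (fun x => f x t) (p t) := by
  have hsub : Icc s₀ t ⊆ Ioo 0 T := fun σ hσ => ⟨hs₀.trans_le hσ.1, hσ.2.trans_lt ht⟩
  obtain ⟨s, hs, hps, hafter⟩ := exists_last_eq_of_lt hs₀t (hS.p_cont.mono hsub) hps₀
    (by linarith [(abs_lt.1 hpt).1])
  refine ⟨s, hsub (Ico_subset_Icc_self hs), hS.isExcursion hd (hs₀.trans_le hs.1) hs.2 ht hda hleft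
    hright hps (fun σ hσ => ?_) hpt⟩
  exact abs_le.2 ⟨by linarith [hafter σ hσ], by linarith [hp σ ⟨hs.1.trans hσ.1, hσ.2⟩]⟩

lemma exists_abs_iteratedDeriv_le (hS : IsL1SolutionP a T fI f p) (hT : 0 ≤ T) (hd : 0 < d)
    (hda : 3 * d ≤ a) (hleft : -1 + 4 * d ≤ R) (hright : R + 4 * d ≤ 1) (m : ℕ) :
    ∃ C, ∀ s₀ > 0, p s₀ ≤ R - d → ∀ t ∈ Ico s₀ T, (∀ σ ∈ Icc s₀ t, p σ ≤ R + d) →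
      |p t - R| ≤ d / 64 → ∀ x, |x - R| ≤ d / 64 →
      |iteratedDeriv m (fun z => f z t) x| ≤ C := by
  obtain ⟨C, hC⟩ := exists_abs_iteratedDeriv_le_of_isExcursion hd hT R m
    (Q := ∫ ω, |ω.2.2| ∂solutionSource a fI T f p)
  refine ⟨C, fun s₀ hs₀ hps₀ t ht hp hpt x hx => ?_⟩
  obtain ⟨s, hs, hE⟩ := hS.exists_isExcursion hd hs₀ ht.1 ht.2 hda hleft hright hps₀ hp
    (by linarith)
  exact hC hE ht.2.le (hS.integral_abs_le hs)
    (setIntegral_le_integral hS.isHeatSource.integrable_charge.abs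
      (.of_forall fun ω => abs_nonneg _)) x hx

lemma eventually_p_mem (hS : IsL1SolutionP a T fI f p) (hT : 0 < T) :
    ∀ᶠ t in 𝓝[<] T, p t ∈ Ioo (-1 : ℝ) 1 :=
  Filter.mem_of_superset (Ioo_mem_nhdsLT hT) hS.p_mem

lemma isBoundedUnder_le (hS : IsL1SolutionP a T fI f p) (hT : 0 < T) :
    IsBoundedUnder (· ≤ ·) (𝓝[<] T) p :=
  ⟨1, (hS.eventually_p_mem hT).mono fun _ h => h.2.le⟩

lemma isBoundedUnder_ge (hS : IsL1SolutionP a T fI f p) (hT : 0 < T) :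
    IsBoundedUnder (· ≥ ·) (𝓝[<] T) p :=
  ⟨-1, (hS.eventually_p_mem hT).mono fun _ h => h.1.le⟩

lemma limsup_lt_one (hS : IsL1SolutionP a T fI f p) (hT : 0 < T) : limsup p (𝓝[<] T) < 1 := by
  obtain ⟨η, hη, hp⟩ := hS.exists_eventually_lt_one_sub hT
  exact (limsup_le_of_le (hS.isBoundedUnder_ge hT).isCoboundedUnder_le
    (hp.mono fun _ => le_of_lt)).trans_lt (by linarith)

lemma neg_one_le_liminf (hS : IsL1SolutionP a T fI f p) (hT : 0 < T) :
    -1 ≤ liminf p (𝓝[<] T) :=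
  le_liminf_of_le (hS.isBoundedUnder_le hT).isCoboundedUnder_ge
    ((hS.eventually_p_mem hT).mono fun _ h => h.1.le)

/-- Each time at which `p` is close to its limit superior `R` ends an excursion, which started when
`p` last crossed `R - d`. -/
lemma exists_eventually_abs_iteratedDeriv_le (hS : IsL1SolutionP a T fI f p) (hT : 0 < T)
    (hR : R = limsup p (𝓝[<] T)) (hosc : liminf p (𝓝[<] T) < R) :
    ∃ r > 0, ∀ m, ∃ C, ∀ᶠ t in 𝓝[<] T, |p t - R| ≤ r →
      ∀ x, |x - R| ≤ r → |iteratedDeriv m (fun z => f z t) x| ≤ C := by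
  have hR₁ : R < 1 := hR ▸ hS.limsup_lt_one hT
  have hR₂ : -1 < R := (hS.neg_one_le_liminf hT).trans_lt hosc
  obtain ⟨d, hd, hdmin⟩ := exists_between (show 0 < min (min (a / 3) (R - liminf p (𝓝[<] T)))
      (min ((1 + R) / 4) ((1 - R) / 4)) from lt_min
    (lt_min (by linarith [hS.a_pos]) (by linarith)) (lt_min (by linarith) (by linarith)))
  obtain ⟨⟨hda, hlow⟩, hleft, hright⟩ := by simpa only [lt_min_iff] using hdmin
  refine ⟨d / 64, by positivity, fun m => ?_⟩
  obtain ⟨C, hC⟩ := hS.exists_abs_iteratedDeriv_le hT.le hd (R := R) (by linarith) (by linarith)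
    (by linarith) m
  have hbelow_R : ∀ᶠ t in 𝓝[<] T, p t < R + d :=
    eventually_lt_of_limsup_lt (by linarith) (hS.isBoundedUnder_le hT)
  obtain ⟨τ, hτ, hbelow⟩ := (mem_nhdsLT_iff_exists_Ioo_subset' hT).1 hbelow_R
  have hlow_often : ∃ᶠ t in 𝓝[<] T, p t < R - d :=
    frequently_lt_of_liminf_lt (hS.isBoundedUnder_le hT).isCoboundedUnder_ge (by linarith)
  obtain ⟨s₀, ⟨hps₀, hs₀τ⟩, hs₀⟩ := ((hlow_often.and_eventually (Ioo_mem_nhdsLT hτ)).and_eventually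
    (Ioo_mem_nhdsLT hT)).exists
  refine ⟨C, ?_⟩
  filter_upwards [Ioo_mem_nhdsLT hs₀.2] with t ht
  refine hC s₀ hs₀.1 hps₀.le t ⟨ht.1.le, ht.2⟩ fun σ hσ => (hbelow ?_).le
  exact ⟨hs₀τ.1.trans_le hσ.1, hσ.2.trans_lt ht.2⟩

end IsL1SolutionP

/-! ### Reflection -/

section Reflection

variable {a T : ℝ} {J : Set ℝ} {fI p : ℝ → ℝ} {f : ℝ → ℝ → ℝ}

lemma abar_neg (a : ℝ) (p : ℝ → ℝ) (s : ℝ) : abar a (-p) s = abar a p s := by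
  simp only [abar, Pi.neg_apply, sub_neg_eq_add, ← sub_eq_add_neg, min_comm (1 + p s)]

lemma flux_neg (f : ℝ → ℝ → ℝ) (p : ℝ → ℝ) : flux (fun x t => -f (-x) t) (-p) = flux f p := by
  funext s
  simp only [flux, deriv.fun_neg, deriv_comp_neg (fun x => f x s), Pi.neg_apply, neg_neg]

lemma duhamel_neg (a : ℝ) (fI p lam : ℝ → ℝ) (x t : ℝ) :
    ((∫ y in (-1 : ℝ)..1, heatGamma x y t * -fI (-y))
      + ∫ s in (0 : ℝ)..t, (heatGamma x ((-p) s - abar a (-p) s) (t - s)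
          - heatGamma x ((-p) s + abar a (-p) s) (t - s)) * lam s)
    = -((∫ y in (-1 : ℝ)..1, heatGamma (-x) y t * fI y)
      + ∫ s in (0 : ℝ)..t, (heatGamma (-x) (p s - abar a p s) (t - s)
          - heatGamma (-x) (p s + abar a p s) (t - s)) * lam s) := by
  have hreflect := intervalIntegral.integral_comp_neg (a := -1) (b := 1)
    fun y => heatGamma (-x) y t * fI y
  rw [neg_neg] at hreflect
  rw [neg_add, ← hreflect, ← intervalIntegral.integral_neg, ← intervalIntegral.integral_neg]
  simp only [heatGamma_neg, mul_neg]
  congr 2 with s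
  rw [← heatGamma_neg (-x), ← heatGamma_neg (-x), abar_neg, Pi.neg_apply, neg_neg]
  ring_nf

lemma IsSolutionP.neg (hsol : IsSolutionP a fI J f p) :
    IsSolutionP a (fun x => -fI (-x)) J (fun x t => -f (-x) t) (-p) where
  p_cont := hsol.p_cont.neg
  p_mem t ht := ⟨neg_lt_neg (hsol.p_mem t ht).2, neg_lt.2 (hsol.p_mem t ht).1⟩
  zero_at t ht := by simp only [Pi.neg_apply, neg_neg, hsol.zero_at t ht, neg_zero]
  pos_left t ht x hx :=
    neg_pos.2 (hsol.neg_right t ht (-x) ⟨lt_neg.2 hx.2, neg_le.2 hx.1⟩)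
  neg_right t ht x hx :=
    neg_lt_zero.2 (hsol.pos_left t ht (-x) ⟨neg_le_neg hx.2, neg_lt.2 hx.1⟩)
  diff_at t ht := by
    refine (DifferentiableAt.fun_comp' (g := fun x => f x t) _ ?_ (by fun_prop)).fun_neg
    simpa only [Pi.neg_apply, neg_neg] using hsol.diff_at t ht
  flux_loc_int := flux_neg f p ▸ hsol.flux_loc_int
  duhamel t ht x hx := by
    rw [flux_neg, duhamel_neg, hsol.duhamel t ht (-x) ⟨neg_le_neg hx.2, neg_le.2 hx.1⟩]

lemma IsL1SolutionP.neg (hS : IsL1SolutionP a T fI f p) :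
    IsL1SolutionP a T (fun x => -fI (-x)) (fun x t => -f (-x) t) (-p) where
  toIsSolutionP := hS.toIsSolutionP.neg
  a_pos := hS.a_pos
  integrable_init := by
    have hint : IntervalIntegrable fI volume (-1) 1 :=
      (intervalIntegrable_iff_integrableOn_Ioc_of_le (by norm_num)).2 hS.integrable_init
    simpa only [neg_neg, Pi.neg_def] using
      ((IntervalIntegrable.iff_comp_neg (f := fI)).1 hint).symm.neg.1
  integrable_flux := flux_neg f p ▸ hS.integrable_flux

lemma abs_iteratedDeriv_neg_comp_neg (m : ℕ) (u : ℝ → ℝ) (x : ℝ) :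
    |iteratedDeriv m (fun z => -u (-z)) x| = |iteratedDeriv m u (-x)| := by
  rw [iteratedDeriv_fun_neg, iteratedDeriv_comp_neg]
  simp only [abs_neg, smul_eq_mul, abs_mul, abs_pow, abs_one, one_pow, one_mul]

namespace IsL1SolutionP

lemma limsup_neg (hS : IsL1SolutionP a T fI f p) (hT : 0 < T) :
    limsup (-p) (𝓝[<] T) = -liminf p (𝓝[<] T) :=
  (monotone_id.neg.map_liminf_of_continuousAt p continuous_neg.continuousAt
    (hS.isBoundedUnder_le hT).isCoboundedUnder_ge (hS.isBoundedUnder_ge hT)).symm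

lemma liminf_neg (hS : IsL1SolutionP a T fI f p) (hT : 0 < T) :
    liminf (-p) (𝓝[<] T) = -limsup p (𝓝[<] T) :=
  (monotone_id.neg.map_limsup_of_continuousAt p continuous_neg.continuousAt
    (hS.isBoundedUnder_le hT) (hS.isBoundedUnder_ge hT).isCoboundedUnder_le).symm

lemma exists_eventually_abs_iteratedDeriv_le_liminf (hS : IsL1SolutionP a T fI f p) (hT : 0 < T)
    {L : ℝ} (hL : L = liminf p (𝓝[<] T)) (hosc : L < limsup p (𝓝[<] T)) :
    ∃ r > 0, ∀ m, ∃ C, ∀ᶠ t in 𝓝[<] T, |p t - L| ≤ r →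
      ∀ x, |x - L| ≤ r → |iteratedDeriv m (fun z => f z t) x| ≤ C := by
  obtain ⟨r, hr, hbound⟩ := hS.neg.exists_eventually_abs_iteratedDeriv_le hT
    (hL ▸ (hS.limsup_neg hT).symm) (by rw [hS.liminf_neg hT]; exact neg_lt_neg hosc)
  refine ⟨r, hr, fun m => (hbound m).imp fun C hC => hC.mono fun t hC hpt x hx => ?_⟩
  have hreflect : ∀ y, |-y - -L| = |y - L| := fun y => by rw [neg_sub_neg, abs_sub_comm]
  simpa only [abs_iteratedDeriv_neg_comp_neg m fun z => f z t, neg_neg] using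
    hC ((hreflect (p t)).trans_le hpt) (-x) ((hreflect x).trans_le hx)

end IsL1SolutionP

end Reflection

lemma limsup_abs_le_of_tendsto {T R r C β : ℝ} {p : ℝ → ℝ} {G : ℝ → ℝ → ℝ} (hr : 0 < r)
    (hG : ∀ᶠ t in 𝓝[<] T, |p t - R| ≤ r → ∀ x, |x - R| ≤ r → |G t x| ≤ C) (hβ : β ≤ r)
    {t : ℕ → ℝ} (htT : ∀ n, t n < T) (ht : Tendsto t atTop (𝓝 T))
    (hp : Tendsto (fun n => p (t n)) atTop (𝓝 R)) {x : ℝ} (hx : x ∈ Icc (R - β) (R + β)) :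
    limsup (fun n => |G (t n) x|) atTop ≤ C := by
  refine limsup_le_of_le (.of_frequently_ge (a := 0) (.of_forall fun n => abs_nonneg _)) ?_
  filter_upwards [(tendsto_nhdsWithin_iff.2 ⟨ht, .of_forall htT⟩).eventually hG,
    hp (Metric.closedBall_mem_nhds R hr)] with n hn hpn
  exact hn hpn x (abs_sub_le_iff.2 ⟨by linarith [hx.2], by linarith [hx.1]⟩)

end

theorem statement17_general (a tstar L R : ℝ) (fI : ℝ → ℝ) (f : ℝ → ℝ → ℝ) (p : ℝ → ℝ)
    (ha : 0 < a) (hfI : IntervalIntegrable fI volume (-1) 1)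
    (hsol : IsSolutionP a fI (Set.Ioo 0 tstar) f p)
    (hint : MeasureTheory.IntegrableOn (flux f p) (Set.Ioo 0 tstar))
    (hL : L = Filter.liminf p (nhdsWithin tstar (Set.Ioo 0 tstar)))
    (hR : R = Filter.limsup p (nhdsWithin tstar (Set.Ioo 0 tstar)))
    (hLR : L < R) :
    ∀ m : ℕ, ∃ C : ℝ, ∃ β₀ > (0:ℝ), ∀ β, 0 < β → β ≤ β₀ →
      (∀ tn : ℕ → ℝ, (∀ n, tn n ∈ Set.Ioo (0:ℝ) tstar) →
        Filter.Tendsto tn Filter.atTop (nhds tstar) →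
        Filter.Tendsto (fun n => p (tn n)) Filter.atTop (nhds R) →
        ∀ x ∈ Set.Icc (R - β) (R + β),
          Filter.limsup (fun n => |iteratedDeriv m (fun z => f z (tn n)) x|)
            Filter.atTop ≤ C) ∧
      (∀ tn : ℕ → ℝ, (∀ n, tn n ∈ Set.Ioo (0:ℝ) tstar) →
        Filter.Tendsto tn Filter.atTop (nhds tstar) →
        Filter.Tendsto (fun n => p (tn n)) Filter.atTop (nhds L) →
        ∀ x ∈ Set.Icc (L - β) (L + β),
          Filter.limsup (fun n => |iteratedDeriv m (fun z => f z (tn n)) x|)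
            Filter.atTop ≤ C) := by
  intro m
  rcases le_or_gt tstar 0 with hT | hT
  · exact ⟨0, 1, one_pos, fun β _ _ =>
      ⟨fun tn htn => absurd ((htn 0).1.trans (htn 0).2) hT.not_gt,
        fun tn htn => absurd ((htn 0).1.trans (htn 0).2) hT.not_gt⟩⟩
  rw [nhdsWithin_Ioo_eq_nhdsLT hT] at hL hR
  have hS : IsL1SolutionP a tstar fI f p := ⟨hsol, ha, hfI.1, hint⟩
  obtain ⟨r, hr, hboundR⟩ := hS.exists_eventually_abs_iteratedDeriv_le hT hR (hL ▸ hLR)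
  obtain ⟨r', hr', hboundL⟩ := hS.exists_eventually_abs_iteratedDeriv_le_liminf hT hL (hR ▸ hLR)
  obtain ⟨C, hC⟩ := hboundR m
  obtain ⟨C', hC'⟩ := hboundL m
  exact ⟨max C C', min r r', lt_min hr hr', fun β _ hβ =>
    ⟨fun tn htn hlim hp x hx => le_max_of_le_left <| limsup_abs_le_of_tendsto
        (G := fun t => iteratedDeriv m fun z => f z t) hr hC (hβ.trans (min_le_left _ _))
        (fun n => (htn n).2) hlim hp hx,
      fun tn htn hlim hp x hx => le_max_of_le_right <| limsup_abs_le_of_tendsto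
        (G := fun t => iteratedDeriv m fun z => f z t) hr' hC' (hβ.trans (min_le_right _ _))
        (fun n => (htn n).2) hlim hp hx⟩⟩

/-- Derivative bounds in the puddle case (Proposition 4.3): if
`L = liminf_{t→t*} p(t) < R = limsup_{t→t*} p(t)`, then for every `m` there is
`C(m)` such that for all sufficiently small `β > 0` and every sequence
`t_n → t*` with `p(t_n) → R`, `limsup_n |∂ₓ^m f(x,t_n)| ≤ C(m)` on `[R−β, R+β]`;
and the parallel statement at `L`. -/
theorem statement17 (a a₀ lamI tstar L R : ℝ) (fI : ℝ → ℝ) (pI : ℝ)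
    (f : ℝ → ℝ → ℝ) (p : ℝ → ℝ)
    (ha : a ∈ Set.Ioo (0:ℝ) 1) (ha₀ : 0 < a₀) (ha₀' : a₀ < a / 4)
    (hI : IsInitialDatum fI pI a₀ lamI)
    (hsol : IsSolutionP a fI (Set.Ioo 0 tstar) f p)
    (hint : MeasureTheory.IntegrableOn (flux f p) (Set.Ioo 0 tstar))
    (hL : L = Filter.liminf p (nhdsWithin tstar (Set.Ioo 0 tstar)))
    (hR : R = Filter.limsup p (nhdsWithin tstar (Set.Ioo 0 tstar)))
    (hLR : L < R) :
    ∀ m : ℕ, ∃ C : ℝ, ∃ β₀ > (0:ℝ), ∀ β, 0 < β → β ≤ β₀ →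
      (∀ tn : ℕ → ℝ, (∀ n, tn n ∈ Set.Ioo (0:ℝ) tstar) →
        Filter.Tendsto tn Filter.atTop (nhds tstar) →
        Filter.Tendsto (fun n => p (tn n)) Filter.atTop (nhds R) →
        ∀ x ∈ Set.Icc (R - β) (R + β),
          Filter.limsup (fun n => |iteratedDeriv m (fun z => f z (tn n)) x|)
            Filter.atTop ≤ C) ∧
      (∀ tn : ℕ → ℝ, (∀ n, tn n ∈ Set.Ioo (0:ℝ) tstar) →
        Filter.Tendsto tn Filter.atTop (nhds tstar) →
        Filter.Tendsto (fun n => p (tn n)) Filter.atTop (nhds L) →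
        ∀ x ∈ Set.Icc (L - β) (L + β),
          Filter.limsup (fun n => |iteratedDeriv m (fun z => f z (tn n)) x|)
            Filter.atTop ≤ C) := by
  exact statement17_general a tstar L R fI f p ha.1
    (hI.smooth.continuousOn.intervalIntegrable_of_Icc (by norm_num)) hsol hint hL hR hLR
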